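/- Let n ≥ 2 and let Γ ⊂ ℝⁿ satisfy condition (C) with λ* = (1,−1,…,−1) ∉ ∂Γ. Then every continuous viscosity solution v of λ(A[v]) ∈ ∂Γ in ℝⁿ∖{0} is radially symmetric and non-increasing in the radial direction, i.e. v(x) ≥ v(y) for all x, y ∈ ℝⁿ∖{0} with |x| ≤ |y|. -/

import Mathlib

open Filter Topology MeasureTheory Metric Set
open scoped BigOperators ENNReal NNReal

noncomputable section

/-- `ℝⁿ` with the Euclidean norm. -/
abbrev Euc (n : ℕ) := EuclideanSpace ℝ (Fin n)

/-- The positive cone `Γₙ = {λ : λᵢ > 0 ∀ i}`. -/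
def GammaN (n : ℕ) : Set (Fin n → ℝ) := {lam | ∀ i, 0 < lam i}

/-- Condition (C): `Γ ⊊ ℝⁿ` is a nonempty open symmetric cone with vertex at the origin
satisfying `Γ + Γₙ ⊆ Γ`. -/
def CondC {n : ℕ} (Γ : Set (Fin n → ℝ)) : Prop :=
  Γ.Nonempty ∧ Γ ≠ Set.univ ∧ IsOpen Γ ∧
    (∀ σ : Equiv.Perm (Fin n), ∀ lam ∈ Γ, lam ∘ σ ∈ Γ) ∧
    (∀ lam ∈ Γ, ∀ t : ℝ, 0 < t → t • lam ∈ Γ) ∧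
    (∀ lam ∈ Γ, ∀ mu ∈ GammaN n, lam + mu ∈ Γ)

/-- `λ* = (1, -1, …, -1)`. -/
def lamStar (n : ℕ) : Fin n → ℝ := fun i => if i.val = 0 then 1 else -1

/-- Partial derivative `∂ᵢ v (x)`. -/
def pgrad {n : ℕ} (v : Euc n → ℝ) (x : Euc n) (i : Fin n) : ℝ :=
  fderiv ℝ v x (EuclideanSpace.single i 1)

/-- Second partial derivative `∂ᵢ∂ⱼ v (x)`. -/
def phess {n : ℕ} (v : Euc n → ℝ) (x : Euc n) (i j : Fin n) : ℝ :=
  fderiv ℝ (fun y => fderiv ℝ v y (EuclideanSpace.single j 1)) x (EuclideanSpace.single i 1)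

/-- The Möbius Hessian
`A[v](x) = e^{-2v(x)} (-∇²v + ∇v ⊗ ∇v - ½ |∇v|² I)` as a matrix. -/
def mobius {n : ℕ} (v : Euc n → ℝ) (x : Euc n) : Matrix (Fin n) (Fin n) ℝ :=
  Real.exp (-2 * v x) • Matrix.of fun i j =>
    - phess v x i j + pgrad v x i * pgrad v x j
      - (1 / 2) * (∑ k, (pgrad v x k) ^ 2) * (if i = j then (1 : ℝ) else 0)

/-- The (unordered, permutation-invariant) eigenvalue tuple of the symmetric matrix `M`
belongs to the (permutation-invariant) set `S`. -/
def EigIn {n : ℕ} (M : Matrix (Fin n) (Fin n) ℝ) (S : Set (Fin n → ℝ)) : Prop :=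
  ∃ hM : M.IsHermitian, hM.eigenvalues ∈ S

/-- Viscosity supersolution of `λ(A[v]) ∈ ∂Γ` in `Ω`, i.e. `λ(A[v]) ∈ closure Γ`
in the viscosity sense (for a real-valued `v`). -/
def Supersol {n : ℕ} (Γ : Set (Fin n → ℝ)) (Ω : Set (Euc n)) (v : Euc n → ℝ) : Prop :=
  ∀ x₀ ∈ Ω, ∀ φ : Euc n → ℝ, ContDiff ℝ 2 φ → φ x₀ = v x₀ →
    (∀ᶠ x in 𝓝[Ω] x₀, φ x ≤ v x) → EigIn (mobius φ x₀) (closure Γ)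

/-- Viscosity subsolution of `λ(A[v]) ∈ ∂Γ` in `Ω`, i.e. `λ(A[v]) ∈ ℝⁿ ∖ Γ`
in the viscosity sense (for a real-valued `v`). -/
def Subsol {n : ℕ} (Γ : Set (Fin n → ℝ)) (Ω : Set (Euc n)) (v : Euc n → ℝ) : Prop :=
  ∀ x₀ ∈ Ω, ∀ φ : Euc n → ℝ, ContDiff ℝ 2 φ → φ x₀ = v x₀ →
    (∀ᶠ x in 𝓝[Ω] x₀, v x ≤ φ x) → EigIn (mobius φ x₀) Γᶜ

/-!
The proof is by the method of moving spheres, with inversions centred away from the origin. The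
equation is conformally invariant, so for `0 < l < ‖c‖` the Kelvin transform of `v` about the sphere
of centre `c` and radius `l` is again a solution, and it coincides with `v` on that sphere. Suppose
that it dominates `v` inside each such sphere. If `‖x‖ ≤ ‖y‖`, a sphere of this kind whose centre
runs to infinity along the ray from `x` through `y` exchanges `x` and `y`, with a conformal factor
tending to `1` at `y`; hence `v y ≤ v x`.

The domination is a viscosity comparison principle. In terms of `e^{-v}` the Möbius Hessian is
accessible to sup-convolutions and Jensen's lemma, but the Kelvin transform is singular inside the
sphere, at the centre `c` and at the inverse of the origin. Comparison survives an isolated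
singularity as long as no upward cone touches the larger function from below there. If `λ*` is
outside the closure of `Γ`, logarithmic barriers on small annuli exclude such cones. If `λ* ∈ Γ`,
Hölder barriers give a Harnack inequality on spheres, which makes `v`, and likewise its Kelvin
transform about the unit sphere, tend to its supremum at the origin. If that is finite, then near
either singularity the transform about the given sphere lies below a smooth function with the same
limit, which excludes cones as well; if it is infinite, there is nothing to exclude.
-/

open scoped InnerProductSpace

section DiagonalForms

variable {ι E : Type*} [Fintype ι] [NormedAddCommGroup E] [InnerProductSpace ℝ E]

/-- The quadratic form `h ↦ ∑ⱼ λⱼ ⟪bⱼ, h⟫²` with eigenvalues `lam` and eigenbasis `b`. Quadratic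
forms are encoded throughout as plain functions `E → ℝ`, so that they can be compared pointwise. -/
def diagForm (b : OrthonormalBasis ι ℝ E) (lam : ι → ℝ) (h : E) : ℝ :=
  ∑ j, lam j * ⟪b j, h⟫_ℝ ^ 2

lemma diagForm_zero (b : OrthonormalBasis ι ℝ E) : diagForm b 0 = 0 := by
  ext h
  simp [diagForm]

lemma diagForm_add_const (b : OrthonormalBasis ι ℝ E) (lam : ι → ℝ) (c : ℝ) (h : E) :
    diagForm b (fun i => lam i + c) h = diagForm b lam h + c * ‖h‖ ^ 2 := by
  simp only [diagForm, add_mul, Finset.sum_add_distrib, ← Finset.mul_sum, b.sum_sq_inner_right]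

lemma diagForm_smul (b : OrthonormalBasis ι ℝ E) (lam : ι → ℝ) (t : ℝ) (h : E) :
    diagForm b (t • lam) h = t * diagForm b lam h := by
  simp [diagForm, Finset.mul_sum, mul_assoc]

lemma diagForm_map_symm (b : OrthonormalBasis ι ℝ E) (lam : ι → ℝ) (R : E ≃ₗᵢ[ℝ] E) (h : E) :
    diagForm (b.map R.symm) lam h = diagForm b lam (R h) := by
  simp only [diagForm, OrthonormalBasis.map_apply, ← R.inner_map_map (R.symm _),
    R.apply_symm_apply]

lemma diagForm_reindex_symm (b : OrthonormalBasis ι ℝ E) (lam : ι → ℝ) (σ : Equiv.Perm ι) (h : E) :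
    diagForm (b.reindex σ.symm) (lam ∘ σ) h = diagForm b lam h := by
  simp only [diagForm, OrthonormalBasis.reindex_apply, Equiv.symm_symm, Function.comp]
  exact Equiv.sum_comp σ fun j => lam j * ⟪b j, h⟫_ℝ ^ 2

lemma inner_map_self_eq_diagForm {T : E →ₗ[ℝ] E} (hT : T.IsSymmetric) (b : OrthonormalBasis ι ℝ E)
    {lam : ι → ℝ} (hb : ∀ j, T (b j) = lam j • b j) (h : E) : ⟪h, T h⟫_ℝ = diagForm b lam h := by
  rw [← b.sum_inner_mul_inner, diagForm]
  refine Finset.sum_congr rfl fun j _ => ?_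
  rw [← hT, hb, real_inner_smul_left, real_inner_comm]
  ring

variable [LinearOrder ι]

lemma exists_ne_zero_inner_eq_zero (b b' : OrthonormalBasis ι ℝ E) (i : ι) :
    ∃ x : E, x ≠ 0 ∧ (∀ j < i, ⟪b j, x⟫_ℝ = 0) ∧ ∀ j > i, ⟪b' j, x⟫_ℝ = 0 := by
  have : FiniteDimensional ℝ E := b.toBasis.finiteDimensional_of_finite
  let F : E →ₗ[ℝ] {j // j ≠ i} → ℝ :=
    LinearMap.pi fun j => innerₛₗ ℝ (if (j : ι) < i then b j else b' j)
  have hrank : Module.finrank ℝ ({j // j ≠ i} → ℝ) < Module.finrank ℝ E := by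
    rw [Module.finrank_fintype_fun_eq_card, Module.finrank_eq_card_basis b.toBasis]
    exact Fintype.card_subtype_lt (x := i) (by simp)
  obtain ⟨x, hx, hx0⟩ :=
    (Submodule.ne_bot_iff _).1 (LinearMap.ker_ne_bot_of_finrank_lt (f := F) hrank)
  have hF (j : ι) (hj : j ≠ i) : ⟪if j < i then b j else b' j, x⟫_ℝ = 0 :=
    congrFun (LinearMap.mem_ker.1 hx) ⟨j, hj⟩
  exact ⟨x, hx0, fun j hj => by simpa [hj] using hF j hj.ne,
    fun j hj => by simpa [hj.not_gt] using hF j hj.ne'⟩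

lemma le_of_diagForm_le {b b' : OrthonormalBasis ι ℝ E} {lam mu : ι → ℝ} (hlam : Monotone lam)
    (hmu : Monotone mu) (hle : diagForm b lam ≤ diagForm b' mu) : lam ≤ mu := by
  intro i
  obtain ⟨x, hx0, hb, hb'⟩ := exists_ne_zero_inner_eq_zero b b' i
  have hx : 0 < ‖x‖ ^ 2 := by positivity
  have lower : lam i * ‖x‖ ^ 2 ≤ diagForm b lam x := by
    rw [← b.sum_sq_inner_right, Finset.mul_sum]
    refine Finset.sum_le_sum fun j _ => ?_
    rcases lt_or_ge j i with hj | hj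
    · simp [hb j hj]
    · exact mul_le_mul_of_nonneg_right (hlam hj) (sq_nonneg _)
  have upper : diagForm b' mu x ≤ mu i * ‖x‖ ^ 2 := by
    rw [← b'.sum_sq_inner_right, Finset.mul_sum]
    refine Finset.sum_le_sum fun j _ => ?_
    rcases lt_or_ge i j with hj | hj
    · simp [hb' j hj]
    · exact mul_le_mul_of_nonneg_right (hmu hj) (sq_nonneg _)
  exact le_of_mul_le_mul_right (lower.trans ((hle x).trans upper)) hx

end DiagonalForms

section Cones

namespace CondC

variable {n : ℕ} {Γ : Set (Fin n → ℝ)}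

lemma isOpen (hΓ : CondC Γ) : IsOpen Γ := hΓ.2.2.1

lemma comp_perm_mem (hΓ : CondC Γ) (σ : Equiv.Perm (Fin n)) {lam : Fin n → ℝ} (hlam : lam ∈ Γ) :
    lam ∘ σ ∈ Γ :=
  hΓ.2.2.2.1 σ lam hlam

lemma smul_mem (hΓ : CondC Γ) {lam : Fin n → ℝ} (hlam : lam ∈ Γ) {t : ℝ} (ht : 0 < t) :
    t • lam ∈ Γ :=
  hΓ.2.2.2.2.1 lam hlam t ht

lemma mem_of_lt (hΓ : CondC Γ) {lam mu : Fin n → ℝ} (hlam : lam ∈ Γ) (hlt : ∀ i, lam i < mu i) :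
    mu ∈ Γ := by
  simpa using hΓ.2.2.2.2.2 lam hlam (mu - lam) fun i => sub_pos.2 (hlt i)

lemma exists_sub_const_mem (hΓ : CondC Γ) {lam : Fin n → ℝ} (hlam : lam ∈ Γ) :
    ∃ ε > 0, (fun i => lam i - ε) ∈ Γ := by
  have hcont : Continuous fun (t : ℝ) (i : Fin n) => lam i - t := by fun_prop
  have hev : ∀ᶠ t in 𝓝[>] (0 : ℝ), (fun i => lam i - t) ∈ Γ :=
    (hcont.continuousAt.eventually_mem (hΓ.isOpen.mem_nhds (by simpa using hlam))).filter_mono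
      nhdsWithin_le_nhds
  exact (eventually_mem_nhdsWithin.and hev).exists

lemma mem_of_le (hΓ : CondC Γ) {lam mu : Fin n → ℝ} (hlam : lam ∈ Γ) (hle : lam ≤ mu) :
    mu ∈ Γ := by
  obtain ⟨ε, hε, hmem⟩ := hΓ.exists_sub_const_mem hlam
  exact hΓ.mem_of_lt hmem fun i => by linarith [hle i]

lemma mem_of_mem_closure_of_lt (hΓ : CondC Γ) {lam mu : Fin n → ℝ} (hlam : lam ∈ closure Γ)
    (hlt : ∀ i, lam i < mu i) : mu ∈ Γ := by
  have hopen : IsOpen {x : Fin n → ℝ | ∀ i, x i < mu i} := by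
    simp only [Set.ofPred_forall]
    exact isOpen_iInter_of_finite fun i => isOpen_lt (continuous_apply i) continuous_const
  obtain ⟨y, hy, hyΓ⟩ := mem_closure_iff.1 hlam _ hopen hlt
  exact hΓ.mem_of_lt hyΓ hy

lemma zero_mem_closure (hΓ : CondC Γ) : (0 : Fin n → ℝ) ∈ closure Γ := by
  obtain ⟨lam, hlam⟩ := hΓ.1
  have hcont : Continuous fun t : ℝ => t • lam := by fun_prop
  have hlim : Tendsto (fun t : ℝ => t • lam) (𝓝 0) (𝓝 0) := hcont.tendsto' _ _ (zero_smul ℝ lam)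
  refine mem_closure_of_tendsto (hlim.mono_left (nhdsWithin_le_nhds (s := Ioi 0))) ?_
  exact eventually_mem_nhdsWithin.mono fun t ht => hΓ.smul_mem hlam ht

end CondC

/-- The ellipticity hypotheses on a cone `G` of (not necessarily continuous) quadratic forms under
which the comparison theory for `λ(A[v]) ∈ ∂Γ` works: `G` plays the role of the matrices whose
eigenvalues lie in `Γ`. -/
structure IsEllipticCone {E : Type*} [NormedAddCommGroup E] [InnerProductSpace ℝ E]
    (G : Set (E → ℝ)) : Prop where
  mem_of_le {q q' : E → ℝ} : q ∈ G → q ≤ q' → q' ∈ G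
  smul_mem {q : E → ℝ} {t : ℝ} : 0 < t → q ∈ G → (fun h => t * q h) ∈ G
  comp_mem {q : E → ℝ} (R : E ≃ₗᵢ[ℝ] E) : q ∈ G → q ∘ R ∈ G
  exists_sub_norm_sq_mem {q : E → ℝ} : q ∈ G → ∃ ε > 0, (fun h => q h - ε * ‖h‖ ^ 2) ∈ G
  norm_sq_mem : (fun h => ‖h‖ ^ 2) ∈ G

variable {E : Type*} [NormedAddCommGroup E] [InnerProductSpace ℝ E] {n : ℕ}

variable (E) in
/-- The functions on `E` dominating a quadratic form with eigenvalues in `Γ`. -/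
def formCone (Γ : Set (Fin n → ℝ)) : Set (E → ℝ) :=
  {q | ∃ b : OrthonormalBasis (Fin n) ℝ E, ∃ lam ∈ Γ, diagForm b lam ≤ q}

namespace CondC

variable {Γ : Set (Fin n → ℝ)}

lemma diagForm_mem_formCone_iff (hΓ : CondC Γ) (b : OrthonormalBasis (Fin n) ℝ E)
    (mu : Fin n → ℝ) : diagForm b mu ∈ formCone E Γ ↔ mu ∈ Γ := by
  refine ⟨fun ⟨b', lam, hlam, hle⟩ => ?_, fun hmu => ⟨b, mu, hmu, le_rfl⟩⟩
  have hsorted : lam ∘ Tuple.sort lam ≤ mu ∘ Tuple.sort mu :=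
    le_of_diagForm_le (b := b'.reindex (Tuple.sort lam).symm) (b' := b.reindex (Tuple.sort mu).symm)
      (Tuple.monotone_sort lam) (Tuple.monotone_sort mu)
      fun h => by simpa only [diagForm_reindex_symm] using hle h
  have hmem := hΓ.comp_perm_mem (Tuple.sort mu).symm
    (hΓ.mem_of_le (hΓ.comp_perm_mem (Tuple.sort lam) hlam) hsorted)
  rwa [Function.comp_assoc, Equiv.self_comp_symm, Function.comp_id] at hmem

lemma isEllipticCone_formCone (hΓ : CondC Γ) (b₀ : OrthonormalBasis (Fin n) ℝ E) :
    IsEllipticCone (formCone E Γ) where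
  mem_of_le := fun ⟨b, lam, hlam, h⟩ hle => ⟨b, lam, hlam, h.trans hle⟩
  smul_mem := fun ht ⟨b, lam, hlam, h⟩ => ⟨b, _, hΓ.smul_mem hlam ht, fun x => by
    rw [diagForm_smul]
    exact mul_le_mul_of_nonneg_left (h x) ht.le⟩
  comp_mem := fun R ⟨b, lam, hlam, h⟩ => ⟨b.map R.symm, lam, hlam, fun x => by
    rw [diagForm_map_symm]
    exact h (R x)⟩
  exists_sub_norm_sq_mem := fun ⟨b, lam, hlam, h⟩ => by
    obtain ⟨ε, hε, hmem⟩ := hΓ.exists_sub_const_mem hlam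
    refine ⟨ε, hε, b, _, hmem, fun x => ?_⟩
    simp only [sub_eq_add_neg, diagForm_add_const, neg_mul]
    exact add_le_add_left (h x) _
  norm_sq_mem := ⟨b₀, fun _ => 0 + 1,
    hΓ.mem_of_mem_closure_of_lt hΓ.zero_mem_closure fun _ => by simp, fun h => by
      simpa only [one_mul, Pi.zero_apply, zero_add, diagForm_zero] using
        (diagForm_add_const b₀ 0 1 h).le⟩

end CondC

end Cones

section Jets

variable {E : Type*} [NormedAddCommGroup E] [InnerProductSpace ℝ E]

/-- `q` is a continuous quadratic form. The bilinear form `B` is not required to be symmetric. -/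
def IsQuadratic (q : E → ℝ) : Prop :=
  ∃ B : E →L[ℝ] E →L[ℝ] ℝ, ∀ h, q h = B h h

namespace IsQuadratic

variable {q q' : E → ℝ}

lemma zero : IsQuadratic fun _ : E => 0 := ⟨0, fun h => by simp⟩

lemma norm_sq : IsQuadratic fun h : E => ‖h‖ ^ 2 :=
  ⟨innerSL ℝ, fun h => (real_inner_self_eq_norm_sq h).symm⟩

lemma inner_mul_inner (a b : E) : IsQuadratic fun h => ⟪a, h⟫_ℝ * ⟪b, h⟫_ℝ :=
  ⟨(innerSL ℝ a).smulRight (innerSL ℝ b), fun h => by simp⟩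

lemma add (hq : IsQuadratic q) (hq' : IsQuadratic q') : IsQuadratic fun h => q h + q' h := by
  obtain ⟨B, hB⟩ := hq
  obtain ⟨B', hB'⟩ := hq'
  exact ⟨B + B', fun h => by simp [hB, hB']⟩

lemma sub (hq : IsQuadratic q) (hq' : IsQuadratic q') : IsQuadratic fun h => q h - q' h := by
  obtain ⟨B, hB⟩ := hq
  obtain ⟨B', hB'⟩ := hq'
  exact ⟨B - B', fun h => by simp [hB, hB']⟩

lemma const_mul (hq : IsQuadratic q) (c : ℝ) : IsQuadratic fun h => c * q h := by
  obtain ⟨B, hB⟩ := hq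
  exact ⟨c • B, fun h => by simp [hB]⟩

lemma comp (hq : IsQuadratic q) (R : E →L[ℝ] E) : IsQuadratic fun h => q (R h) := by
  obtain ⟨B, hB⟩ := hq
  exact ⟨B.bilinearComp R R, fun h => by simp [hB]⟩

end IsQuadratic

/-- The Möbius Hessian, as a quadratic form and without its conformal factor `e^{-2v}`, of a
function with gradient `p` and Hessian form `q`. -/
def mobiusForm (p : E) (q : E → ℝ) (h : E) : ℝ :=
  -q h + ⟪p, h⟫_ℝ ^ 2 - 1 / 2 * ‖p‖ ^ 2 * ‖h‖ ^ 2

/-- `(p, q)` is a second-order superjet of `v` at `x`, with `q` the full Hessian form. -/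
def HasUpperJet (v : E → ℝ) (x p : E) (q : E → ℝ) : Prop :=
  ∀ ε > 0, ∀ᶠ h in 𝓝 (0 : E), v (x + h) ≤ v x + ⟪p, h⟫_ℝ + 1 / 2 * q h + ε * ‖h‖ ^ 2

/-- `(p, q)` is a second-order subjet of `v` at `x`, with `q` the full Hessian form. -/
def HasLowerJet (v : E → ℝ) (x p : E) (q : E → ℝ) : Prop :=
  ∀ ε > 0, ∀ᶠ h in 𝓝 (0 : E), v x + ⟪p, h⟫_ℝ + 1 / 2 * q h - ε * ‖h‖ ^ 2 ≤ v (x + h)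

/-- Viscosity subsolutions of `λ(A[v]) ∈ ∂Γ`, with `G` in place of `Γ` and superjets in place of
test functions. -/
def JetSubsol (G : Set (E → ℝ)) (Ω : Set E) (v : E → ℝ) : Prop :=
  ∀ x ∈ Ω, ∀ p q, IsQuadratic q → HasUpperJet v x p q → mobiusForm p q ∉ G

/-- Viscosity supersolutions of `λ(A[v]) ∈ ∂Γ`, with `G` in place of `Γ` and subjets in place of
test functions. Membership in the closure of `Γ` is encoded by an arbitrarily small multiple of
the identity. -/
def JetSupersol (G : Set (E → ℝ)) (Ω : Set E) (v : E → ℝ) : Prop :=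
  ∀ x ∈ Ω, ∀ p q, IsQuadratic q → HasLowerJet v x p q →
    ∀ ε > 0, (fun h => mobiusForm p q h + ε * ‖h‖ ^ 2) ∈ G

lemma JetSubsol.mono {G : Set (E → ℝ)} {Ω Ω' : Set E} {v : E → ℝ} (hv : JetSubsol G Ω v)
    (hΩ : Ω' ⊆ Ω) : JetSubsol G Ω' v :=
  fun x hx => hv x (hΩ hx)

lemma JetSupersol.mono {G : Set (E → ℝ)} {Ω Ω' : Set E} {v : E → ℝ} (hv : JetSupersol G Ω v)
    (hΩ : Ω' ⊆ Ω) : JetSupersol G Ω' v :=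
  fun x hx => hv x (hΩ hx)

/-- The quadratic polynomial with value `a`, gradient `p` and Hessian `B` (symmetrised) at `x`. -/
def quadraticPoly (a : ℝ) (x p : E) (B : E →L[ℝ] E →L[ℝ] ℝ) (y : E) : ℝ :=
  a + ⟪p, y - x⟫_ℝ + 1 / 2 * B (y - x) (y - x)

lemma quadraticPoly_add (a : ℝ) (x p : E) (B : E →L[ℝ] E →L[ℝ] ℝ) (h : E) :
    quadraticPoly a x p B (x + h) = a + ⟪p, h⟫_ℝ + 1 / 2 * B h h := by
  simp [quadraticPoly]

lemma quadraticPoly_self (a : ℝ) (x p : E) (B : E →L[ℝ] E →L[ℝ] ℝ) :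
    quadraticPoly a x p B x = a := by
  simp [quadraticPoly]

lemma HasUpperJet.eventually_le_quadraticPoly {v : E → ℝ} {x p : E} {q : E → ℝ}
    (hv : HasUpperJet v x p q) {ε : ℝ} (hε : 0 < ε) {B : E →L[ℝ] E →L[ℝ] ℝ}
    (hB : ∀ h, q h + ε * ‖h‖ ^ 2 = B h h) : ∀ᶠ y in 𝓝 x, v y ≤ quadraticPoly (v x) x p B y := by
  rw [← map_add_left_nhds_zero, eventually_map]
  filter_upwards [hv (ε / 2) (by positivity)] with h hh
  rw [quadraticPoly_add, ← hB]
  linarith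

lemma HasLowerJet.eventually_quadraticPoly_le {v : E → ℝ} {x p : E} {q : E → ℝ}
    (hv : HasLowerJet v x p q) {ε : ℝ} (hε : 0 < ε) {B : E →L[ℝ] E →L[ℝ] ℝ}
    (hB : ∀ h, q h - ε * ‖h‖ ^ 2 = B h h) : ∀ᶠ y in 𝓝 x, quadraticPoly (v x) x p B y ≤ v y := by
  rw [← map_add_left_nhds_zero, eventually_map]
  filter_upwards [hv (ε / 2) (by positivity)] with h hh
  rw [quadraticPoly_add, ← hB]
  linarith

lemma contDiff_quadraticPoly (a : ℝ) (x p : E) (B : E →L[ℝ] E →L[ℝ] ℝ) :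
    ContDiff ℝ 2 (quadraticPoly a x p B) := by
  have hsub : ContDiff ℝ 2 fun y : E => y - x := contDiff_id.sub contDiff_const
  exact (contDiff_const.add (contDiff_const.inner ℝ hsub)).add
    (contDiff_const.mul ((B.contDiff.comp hsub).clm_apply hsub))

lemma fderiv_quadraticPoly_apply (a : ℝ) (x p : E) (B : E →L[ℝ] E →L[ℝ] ℝ) (y w : E) :
    fderiv ℝ (quadraticPoly a x p B) y w = ⟪p, w⟫_ℝ + 1 / 2 * (B w (y - x) + B (y - x) w) := by
  have hsub : HasFDerivAt (fun y : E => y - x) (ContinuousLinearMap.id ℝ E) y :=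
    (hasFDerivAt_id y).sub_const x
  have hB := (B.hasFDerivAt.comp y hsub).clm_apply hsub
  have hp := (innerSL ℝ p).hasFDerivAt.comp y hsub
  have hpoly : HasFDerivAt (quadraticPoly a x p B) _ y :=
    (hp.const_add a).add (hB.const_mul (1 / 2))
  rw [hpoly.fderiv]
  simp
  ring

lemma fderiv_fderiv_quadraticPoly_apply (a : ℝ) (x p : E) (B : E →L[ℝ] E →L[ℝ] ℝ) (y u w : E) :
    fderiv ℝ (fun z => fderiv ℝ (quadraticPoly a x p B) z w) y u =
      1 / 2 * (B w u + B u w) := by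
  simp only [fderiv_quadraticPoly_apply]
  have hsub : HasFDerivAt (fun y : E => y - x) (ContinuousLinearMap.id ℝ E) y :=
    (hasFDerivAt_id y).sub_const x
  have hw : HasFDerivAt (fun y => ⟪p, w⟫_ℝ + 1 / 2 * (B w (y - x) + B (y - x) w)) _ y :=
    ((((B w).hasFDerivAt.comp y hsub).add ((B.flip w).hasFDerivAt.comp y hsub)).const_mul
      (1 / 2)).const_add ⟪p, w⟫_ℝ
  rw [hw.fderiv]
  simp
  ring

end Jets

section Viscosity

variable {n : ℕ}

lemma sum_bilin_single (B : Euc n →L[ℝ] Euc n →L[ℝ] ℝ) (h : Euc n) :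
    ∑ i, ∑ j, B (EuclideanSpace.single i 1) (EuclideanSpace.single j 1) * h i * h j = B h h := by
  have hsum : h = ∑ i, h i • EuclideanSpace.single i (1 : ℝ) := by
    simpa using ((EuclideanSpace.basisFun (Fin n) ℝ).sum_repr h).symm
  conv_rhs => rw [hsum]
  simp only [map_sum, map_smul, sum_apply, smul_apply, smul_eq_mul, Finset.mul_sum]
  rw [Finset.sum_comm]
  exact Finset.sum_congr rfl fun i _ => Finset.sum_congr rfl fun j _ => by ring

lemma inner_toEuclideanLin_mobius (φ : Euc n → ℝ) (x h : Euc n) :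
    ⟪h, Matrix.toEuclideanLin (mobius φ x) h⟫_ℝ =
      Real.exp (-2 * φ x) * mobiusForm (WithLp.toLp 2 (pgrad φ x))
        (fun h => ∑ i, ∑ j, phess φ x i j * h i * h j) h := by
  have hdiag : ∑ i, ∑ j, (∑ k, pgrad φ x k ^ 2) * (if i = j then 1 else 0) * h i * h j =
      (∑ k, pgrad φ x k ^ 2) * ∑ i, h i ^ 2 := by
    simp [Finset.mul_sum, sq, mul_assoc]
  have hexp : ⟪h, Matrix.toEuclideanLin (mobius φ x) h⟫_ℝ = Real.exp (-2 * φ x) *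
      ∑ i, ∑ j, (-(phess φ x i j * h i * h j) + pgrad φ x i * h i * (pgrad φ x j * h j) -
        1 / 2 * ((∑ k, pgrad φ x k ^ 2) * (if i = j then 1 else 0) * h i * h j)) := by
    simp only [PiLp.inner_apply, Matrix.toLpLin_apply, Matrix.mulVec, dotProduct, mobius,
      Matrix.smul_apply, Matrix.of_apply, smul_eq_mul, RCLike.inner_apply, conj_trivial]
    generalize ∑ k, pgrad φ x k ^ 2 = S
    simp only [Finset.mul_sum, Finset.sum_mul]
    exact Finset.sum_congr rfl fun i _ => Finset.sum_congr rfl fun j _ => by ring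
  rw [hexp]
  simp only [Finset.sum_sub_distrib, Finset.sum_add_distrib, Finset.sum_neg_distrib,
    ← Finset.mul_sum, hdiag, ← Finset.sum_mul]
  simp only [mobiusForm, EuclideanSpace.real_norm_sq_eq, PiLp.inner_apply, RCLike.inner_apply,
    conj_trivial, mul_comm (h _)]
  ring

lemma inner_toEuclideanLin_mobius_quadraticPoly (a : ℝ) (x p : Euc n)
    (B : Euc n →L[ℝ] Euc n →L[ℝ] ℝ) (h : Euc n) :
    ⟪h, Matrix.toEuclideanLin (mobius (quadraticPoly a x p B) x) h⟫_ℝ =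
      Real.exp (-2 * a) * mobiusForm p (fun h => B h h) h := by
  have hgrad : WithLp.toLp 2 (pgrad (quadraticPoly a x p B) x) = p := by
    ext i
    simp [pgrad, fderiv_quadraticPoly_apply, EuclideanSpace.inner_single_right]
  have hhess (h : Euc n) :
      ∑ i, ∑ j, phess (quadraticPoly a x p B) x i j * h i * h j = B h h := by
    have hflip := sum_bilin_single B.flip h
    simp only [ContinuousLinearMap.flip_apply] at hflip
    simp only [phess, fderiv_fderiv_quadraticPoly_apply, mul_add, add_mul, mul_assoc,
      Finset.sum_add_distrib, ← Finset.mul_sum]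
    simp only [← mul_assoc, hflip, sum_bilin_single]
    ring
  simp only [inner_toEuclideanLin_mobius, hgrad, hhess, quadraticPoly_self]

lemma mobius_form_eq_diagForm {φ : Euc n → ℝ} {x : Euc n} (hM : (mobius φ x).IsHermitian)
    (h : Euc n) : ⟪h, Matrix.toEuclideanLin (mobius φ x) h⟫_ℝ =
      diagForm hM.eigenvectorBasis hM.eigenvalues h :=
  inner_map_self_eq_diagForm (Matrix.isSymmetric_toEuclideanLin_iff.2 hM) _
    (fun j => by
      rw [Matrix.toLpLin_apply, hM.mulVec_eigenvectorBasis]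
      rfl) h

variable {Γ : Set (Fin n → ℝ)} {Ω : Set (Euc n)} {v : Euc n → ℝ}

lemma Supersol.jetSupersol (hv : Supersol Γ Ω v) (hΓ : CondC Γ) :
    JetSupersol (formCone (Euc n) Γ) Ω v := by
  intro x hx p q hq hjet ε hε
  have hG := hΓ.isEllipticCone_formCone (EuclideanSpace.basisFun (Fin n) ℝ)
  obtain ⟨B, hB⟩ := hq.sub (IsQuadratic.norm_sq.const_mul (ε / 2))
  obtain ⟨hM, heig⟩ := hv x hx _ (contDiff_quadraticPoly _ _ _ _) (quadraticPoly_self _ _ _ _)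
    ((hjet.eventually_quadraticPoly_le (half_pos hε) hB).filter_mono nhdsWithin_le_nhds)
  have hc := Real.exp_pos (-2 * v x)
  have hmem : diagForm hM.eigenvectorBasis
      (fun i => hM.eigenvalues i + Real.exp (-2 * v x) * (ε / 2)) ∈ formCone (Euc n) Γ :=
    (hΓ.diagForm_mem_formCone_iff _ _).2 (hΓ.mem_of_mem_closure_of_lt heig fun i => by
      linarith [show 0 < Real.exp (-2 * v x) * (ε / 2) by positivity])
  refine hG.mem_of_le (hG.smul_mem (inv_pos.2 hc) hmem) fun h => le_of_eq ?_
  rw [diagForm_add_const, ← mobius_form_eq_diagForm, inner_toEuclideanLin_mobius_quadraticPoly]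
  simp only [mobiusForm, ← hB]
  field_simp
  ring

lemma Subsol.jetSubsol (hv : Subsol Γ Ω v) (hΓ : CondC Γ) :
    JetSubsol (formCone (Euc n) Γ) Ω v := by
  intro x hx p q hq hjet hmem
  have hG := hΓ.isEllipticCone_formCone (EuclideanSpace.basisFun (Fin n) ℝ)
  obtain ⟨ε, hε, hmem⟩ := hG.exists_sub_norm_sq_mem hmem
  obtain ⟨B, hB⟩ := hq.add (IsQuadratic.norm_sq.const_mul ε)
  obtain ⟨hM, heig⟩ := hv x hx _ (contDiff_quadraticPoly _ _ _ _) (quadraticPoly_self _ _ _ _)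
    ((hjet.eventually_le_quadraticPoly hε hB).filter_mono nhdsWithin_le_nhds)
  refine heig ((hΓ.diagForm_mem_formCone_iff hM.eigenvectorBasis _).1 ?_)
  refine hG.mem_of_le (hG.smul_mem (Real.exp_pos (-2 * v x)) hmem) fun h => le_of_eq ?_
  rw [← mobius_form_eq_diagForm, inner_toEuclideanLin_mobius_quadraticPoly]
  simp only [mobiusForm, ← hB]
  ring

end Viscosity

section LamStar

variable {E : Type*} [NormedAddCommGroup E] [InnerProductSpace ℝ E]

lemma exists_linearIsometryEquiv_inner_eq {e e' : E} (h : ‖e‖ = ‖e'‖) :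
    ∃ R : E ≃ₗᵢ[ℝ] E, ∀ x, ⟪e, R x⟫_ℝ = ⟪e', x⟫_ℝ :=
  ⟨(Submodule.span ℝ {e' - e})ᗮ.reflection, fun x => by
    have hR := (Submodule.span ℝ {e' - e})ᗮ.reflection.inner_map_map e' x
    rwa [Submodule.reflection_sub h.symm] at hR⟩

/-- The case `λ* ∈ Γ`, with room `δ`: the form with eigenvalues `(1 - δ, -1, …, -1)` lies in `G`,
whatever its first axis. -/
structure LamStarInside (G : Set (E → ℝ)) (δ : ℝ) : Prop where
  pos : 0 < δ
  mem {e : E} : ‖e‖ = 1 → (fun h => -‖h‖ ^ 2 + (2 - δ) * ⟪e, h⟫_ℝ ^ 2) ∈ G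

/-- The case `λ* ∉ closure Γ`, with room `δ`: the form with eigenvalues
`(1 + δ, -1 + δ, …, -1 + δ)` does not lie in `G`, whatever its first axis. -/
structure LamStarOutside (G : Set (E → ℝ)) (δ : ℝ) : Prop where
  pos : 0 < δ
  notMem {e : E} : ‖e‖ = 1 → (fun h => -‖h‖ ^ 2 + 2 * ⟪e, h⟫_ℝ ^ 2 + δ * ‖h‖ ^ 2) ∉ G

lemma diagForm_basisFun_lamStar {n : ℕ} (i : Fin n) (hi : i.val = 0) (h : Euc n) :
    diagForm (EuclideanSpace.basisFun (Fin n) ℝ) (lamStar n) h =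
      -‖h‖ ^ 2 + 2 * ⟪EuclideanSpace.single i (1 : ℝ), h⟫_ℝ ^ 2 := by
  have hfirst (j : Fin n) : lamStar n j = -1 + if j = i then 2 else 0 := by
    simp only [lamStar, Fin.ext_iff, hi]
    split_ifs <;> norm_num
  simp [diagForm, hfirst, add_mul, EuclideanSpace.inner_single_left, Finset.sum_add_distrib,
    EuclideanSpace.real_norm_sq_eq]

variable {n : ℕ} {Γ : Set (Fin n → ℝ)}

lemma CondC.lamStarInside (hΓ : CondC Γ) (hn : 0 < n) (hstar : lamStar n ∈ Γ) :
    ∃ δ, LamStarInside (formCone (Euc n) Γ) δ := by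
  have hG := hΓ.isEllipticCone_formCone (EuclideanSpace.basisFun (Fin n) ℝ)
  obtain ⟨ε, hε, hmem⟩ := hG.exists_sub_norm_sq_mem
    ((hΓ.diagForm_mem_formCone_iff (EuclideanSpace.basisFun (Fin n) ℝ) _).2 hstar)
  have hlt : 2 / (1 + ε) < 2 := by
    rw [div_lt_iff₀ (by positivity)]
    linarith
  refine ⟨2 - 2 / (1 + ε), by linarith, fun {e} he => ?_⟩
  obtain ⟨R, hR⟩ := exists_linearIsometryEquiv_inner_eq
    (e := EuclideanSpace.single (⟨0, hn⟩ : Fin n) (1 : ℝ)) (e' := e) (by simp [he])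
  refine hG.mem_of_le (hG.comp_mem R (hG.smul_mem (inv_pos.2 (by positivity : 0 < 1 + ε)) hmem))
    fun h => le_of_eq ?_
  rw [Function.comp, diagForm_basisFun_lamStar ⟨0, hn⟩ rfl, hR, R.norm_map]
  field_simp
  ring

lemma CondC.lamStarOutside (hΓ : CondC Γ) (hn : 0 < n) (hstar : lamStar n ∉ closure Γ) :
    ∃ δ, LamStarOutside (formCone (Euc n) Γ) δ := by
  have hG := hΓ.isEllipticCone_formCone (EuclideanSpace.basisFun (Fin n) ℝ)
  have hcont : Continuous fun (t : ℝ) i => lamStar n i + t := by fun_prop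
  have hev : ∀ᶠ t in 𝓝[>] (0 : ℝ), (fun i => lamStar n i + t) ∉ closure Γ :=
    (hcont.continuousAt.eventually_mem (isClosed_closure.isOpen_compl.mem_nhds
      (by simpa using hstar))).filter_mono nhdsWithin_le_nhds
  obtain ⟨δ, hδ, hnot⟩ := (eventually_mem_nhdsWithin.and hev).exists
  refine ⟨δ, hδ, fun {e} he hmem => hnot (subset_closure ?_)⟩
  refine (hΓ.diagForm_mem_formCone_iff (EuclideanSpace.basisFun (Fin n) ℝ) _).1 ?_
  obtain ⟨R, hR⟩ := exists_linearIsometryEquiv_inner_eq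
    (e := e) (e' := EuclideanSpace.single (⟨0, hn⟩ : Fin n) (1 : ℝ)) (by simp [he])
  refine hG.mem_of_le (hG.comp_mem R hmem) fun h => le_of_eq ?_
  rw [diagForm_add_const, diagForm_basisFun_lamStar ⟨0, hn⟩ rfl]
  simp only [Function.comp, hR, R.norm_map]

lemma CondC.lamStar_cases (hΓ : CondC Γ) (hn : 0 < n) (hstar : lamStar n ∉ frontier Γ) :
    (∃ δ, LamStarInside (formCone (Euc n) Γ) δ) ∨
      ∃ δ, LamStarOutside (formCone (Euc n) Γ) δ := by
  rw [hΓ.isOpen.frontier_eq, Set.mem_sdiff, not_and_not_right] at hstar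
  by_cases h : lamStar n ∈ closure Γ
  · exact .inl (hΓ.lamStarInside hn (hstar h))
  · exact .inr (hΓ.lamStarOutside hn h)

end LamStar

section JetCalculus

/-- `a₁` and `a₂` are the first and second derivatives of `g` at `a` in the sense of a second-order
Taylor expansion with Peano remainder. -/
def HasPeanoExpansion (g : ℝ → ℝ) (a a₁ a₂ : ℝ) : Prop :=
  (fun t => g (a + t) - g a - a₁ * t - 1 / 2 * a₂ * t ^ 2) =o[𝓝 0] fun t => t ^ 2

namespace HasPeanoExpansion

lemma of_hasDerivAt {g g' : ℝ → ℝ} {a a₂ : ℝ} (hg : ∀ᶠ s in 𝓝 a, HasDerivAt g (g' s) s)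
    (hg' : HasDerivAt g' a₂ a) : HasPeanoExpansion g a (g' a) a₂ := by
  rw [← map_add_left_nhds_zero, eventually_map] at hg
  obtain ⟨r, hr, hball⟩ := Metric.eventually_nhds_iff_ball.1 hg
  have hrem : ∀ t ∈ ball (0 : ℝ) r, HasDerivWithinAt
      (fun t => g (a + t) - g' a * t - 1 / 2 * a₂ * t ^ 2)
      (g' (a + t) - g' a - t * a₂) (ball 0 r) t := by
    intro t ht
    have hsq := (hasDerivAt_pow 2 t).const_mul (1 / 2 * a₂)
    refine ((((hball t ht).comp_const_add a t).sub ((hasDerivAt_id t).const_mul (g' a))).sub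
      hsq).hasDerivWithinAt.congr_deriv ?_
    norm_num
    ring
  have hderiv : (fun t => g' (a + t) - g' a - t * a₂) =o[𝓝[ball 0 r] 0]
      fun t => (t - 0) ^ 1 := by
    simpa using (hasDerivAt_iff_isLittleO_nhds_zero.1 hg').mono nhdsWithin_le_nhds
  have := (convex_ball (0 : ℝ) r).isLittleO_pow_succ_real (mem_ball_self hr) hrem hderiv
  rw [isOpen_ball.nhdsWithin_eq (mem_ball_self hr)] at this
  refine this.congr (fun t => ?_) fun t => by simp
  simp only [add_zero]
  ring

lemma sq (a : ℝ) : HasPeanoExpansion (fun t => t ^ 2) a (2 * a) 2 :=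
  (Asymptotics.isLittleO_zero _ _).congr_left fun t => by ring

lemma const_add {g : ℝ → ℝ} {a a₁ a₂ : ℝ} (hg : HasPeanoExpansion g a a₁ a₂) (c : ℝ) :
    HasPeanoExpansion (fun t => c + g t) a a₁ a₂ :=
  hg.congr_left fun t => by ring

lemma const_mul {g : ℝ → ℝ} {a a₁ a₂ : ℝ} (hg : HasPeanoExpansion g a a₁ a₂) (c : ℝ) :
    HasPeanoExpansion (fun t => c * g t) a (c * a₁) (c * a₂) :=
  (hg.const_mul_left c).congr_left fun t => by ring

lemma log {a : ℝ} (ha : 0 < a) : HasPeanoExpansion Real.log a a⁻¹ (-(a ^ 2)⁻¹) :=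
  of_hasDerivAt ((lt_mem_nhds ha).mono fun _ hs => Real.hasDerivAt_log hs.ne')
    (hasDerivAt_inv ha.ne')

lemma inv {a : ℝ} (ha : 0 < a) : HasPeanoExpansion (fun s => s⁻¹) a (-(a ^ 2)⁻¹) (2 / a ^ 3) := by
  refine of_hasDerivAt (g' := fun s => -(s ^ 2)⁻¹)
    ((lt_mem_nhds ha).mono fun _ hs => hasDerivAt_inv hs.ne') ?_
  refine ((hasDerivAt_pow 2 a).inv (by positivity)).neg.congr_deriv ?_
  field_simp
  norm_num
  ring

lemma exp_const_mul (c a : ℝ) : HasPeanoExpansion (fun s => Real.exp (c * s)) a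
    (c * Real.exp (c * a)) (c ^ 2 * Real.exp (c * a)) := by
  have hderiv (s : ℝ) : HasDerivAt (fun s => Real.exp (c * s)) (c * Real.exp (c * s)) s :=
    ((hasDerivAt_id s).const_mul c).exp.congr_deriv (by simp [mul_comm])
  exact of_hasDerivAt (.of_forall hderiv)
    (((hderiv a).const_mul c).congr_deriv (by ring))

lemma log_one_sub_exp (k C a t : ℝ) (ht : C * Real.exp (a * t) < 1) :
    HasPeanoExpansion (fun t => k * Real.log (1 - C * Real.exp (a * t))) t
      (-(k * a) * (C * Real.exp (a * t)) / (1 - C * Real.exp (a * t)))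
      (-(k * a ^ 2) * (C * Real.exp (a * t)) / (1 - C * Real.exp (a * t)) ^ 2) := by
  have hexp (s : ℝ) :
      HasDerivAt (fun s => C * Real.exp (a * s)) (a * (C * Real.exp (a * s))) s :=
    (((hasDerivAt_id s).const_mul a).exp.const_mul C).congr_deriv (by simp; ring)
  have hcont : Continuous fun s => C * Real.exp (a * s) := by fun_prop
  refine of_hasDerivAt
    (g' := fun t => -(k * a) * (C * Real.exp (a * t)) / (1 - C * Real.exp (a * t))) ?_ ?_
  · filter_upwards [hcont.continuousAt.eventually_lt continuousAt_const ht] with s hs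
    have hpos : 1 - C * Real.exp (a * s) ≠ 0 := by linarith
    refine ((((hexp s).const_sub 1).log hpos).const_mul k).congr_deriv ?_
    field_simp
  · have hpos : 1 - C * Real.exp (a * t) ≠ 0 := by linarith
    refine (((hexp t).const_mul (-(k * a))).div ((hexp t).const_sub 1) hpos).congr_deriv ?_
    field_simp
    ring

end HasPeanoExpansion

lemma isLittleO_norm_sq_norm {F : Type*} [SeminormedAddCommGroup F] :
    (fun h : F => ‖h‖ ^ 2) =o[𝓝 0] fun h => ‖h‖ :=
  (Asymptotics.isLittleO_pow_id one_lt_two).comp_tendsto tendsto_norm_zero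

variable {E : Type*} [NormedAddCommGroup E] [InnerProductSpace ℝ E]

/-- `f` has a second-order Taylor expansion with Peano remainder at `x`, with gradient `p` and
Hessian form `q`. -/
def HasJet (f : E → ℝ) (x p : E) (q : E → ℝ) : Prop :=
  IsQuadratic q ∧
    (fun h => f (x + h) - f x - ⟪p, h⟫_ℝ - 1 / 2 * q h) =o[𝓝 0] fun h => ‖h‖ ^ 2

lemma IsQuadratic.map_smul {q : E → ℝ} (hq : IsQuadratic q) (t : ℝ) (h : E) :
    q (t • h) = t ^ 2 * q h := by
  obtain ⟨B, hB⟩ := hq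
  simp [hB, sq, mul_assoc]

lemma IsQuadratic.isBigO {q : E → ℝ} (hq : IsQuadratic q) : q =O[𝓝 0] fun h => ‖h‖ ^ 2 := by
  obtain ⟨B, hB⟩ := hq
  refine .of_bound ‖B‖ (.of_forall fun h => ?_)
  simpa [hB, sq, mul_assoc] using B.le_opNorm₂ h h

lemma isBigO_inner_left (p : E) : (fun h => ⟪p, h⟫_ℝ) =O[𝓝 (0 : E)] fun h => ‖h‖ :=
  ((innerSL ℝ p).isBigO_id _).norm_right

namespace HasJet

variable {f g : E → ℝ} {x p p' : E} {q q' : E → ℝ}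

lemma congr_fun (hf : HasJet f x p q) (hg : g =ᶠ[𝓝 x] f) : HasJet g x p q := by
  refine ⟨hf.1, hf.2.congr' ?_ .rfl⟩
  have hx := hg.self_of_nhds
  rw [Filter.EventuallyEq, ← map_add_left_nhds_zero, eventually_map] at hg
  filter_upwards [hg] with h hh
  rw [hh, hx]

lemma congr (hf : HasJet f x p q) (hp : p' = p) (hq : ∀ h, q' h = q h) : HasJet f x p' q' := by
  rwa [hp, funext hq]

lemma const (c : ℝ) (x : E) : HasJet (fun _ => c) x 0 fun _ => 0 := by
  refine ⟨.zero, ?_⟩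
  simp

lemma inner_sub (p z x : E) : HasJet (fun y => ⟪p, y - z⟫_ℝ) x p fun _ => 0 :=
  ⟨.zero, (Asymptotics.isLittleO_zero _ _).congr_left fun h => by
    simp only [inner_sub_right, inner_add_right]
    ring⟩

lemma norm_sub_sq (z x : E) :
    HasJet (fun y => ‖y - z‖ ^ 2) x ((2 : ℝ) • (x - z)) fun h => 2 * ‖h‖ ^ 2 :=
  ⟨IsQuadratic.norm_sq.const_mul 2, (Asymptotics.isLittleO_zero _ _).congr_left fun h => by
    simp only [add_sub_right_comm, norm_add_sq_real, real_inner_smul_left]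
    ring⟩

lemma quadraticPoly (a : ℝ) (x p : E) (B : E →L[ℝ] E →L[ℝ] ℝ) :
    HasJet (quadraticPoly a x p B) x p fun h => B h h :=
  ⟨⟨B, fun _ => rfl⟩, (Asymptotics.isLittleO_zero _ _).congr_left fun h => by
    rw [quadraticPoly_add, quadraticPoly_self]
    ring⟩

lemma add (hf : HasJet f x p q) (hg : HasJet g x p' q') :
    HasJet (fun y => f y + g y) x (p + p') fun h => q h + q' h :=
  ⟨hf.1.add hg.1, (hf.2.add hg.2).congr_left fun h => by
    rw [inner_add_left]
    ring⟩

lemma const_mul (c : ℝ) (hf : HasJet f x p q) :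
    HasJet (fun y => c * f y) x (c • p) fun h => c * q h :=
  ⟨hf.1.const_mul c, (hf.2.const_mul_left c).congr_left fun h => by
    rw [real_inner_smul_left]
    ring⟩

lemma isBigO_sub_inner (hf : HasJet f x p q) :
    (fun h => f (x + h) - f x - ⟪p, h⟫_ℝ) =O[𝓝 0] fun h => ‖h‖ ^ 2 :=
  (hf.2.isBigO.add (hf.1.isBigO.const_mul_left (1 / 2))).congr_left fun h => by ring

lemma isBigO_sub (hf : HasJet f x p q) :
    (fun h => f (x + h) - f x) =O[𝓝 0] fun h => ‖h‖ :=
  ((hf.isBigO_sub_inner.trans isLittleO_norm_sq_norm.isBigO).add (isBigO_inner_left p)).congr_left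
    fun h => by ring

lemma comp_left (hf : HasJet f x p q) {φ : ℝ → ℝ} {a₁ a₂ : ℝ}
    (hφ : HasPeanoExpansion φ (f x) a₁ a₂) :
    HasJet (fun y => φ (f y)) x (a₁ • p) fun h => a₁ * q h + a₂ * ⟪p, h⟫_ℝ ^ 2 := by
  have hincr := hf.isBigO_sub
  have hremainder := (hφ.comp_tendsto (hincr.trans_tendsto tendsto_norm_zero)).trans_isBigO
    (hincr.pow 2)
  have hsq : (fun h => (f (x + h) - f x - ⟪p, h⟫_ℝ) * (f (x + h) - f x + ⟪p, h⟫_ℝ)) =o[𝓝 0]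
      fun h => ‖h‖ ^ 2 :=
    ((hf.isBigO_sub_inner.trans_isLittleO isLittleO_norm_sq_norm).mul_isBigO
      (hincr.add (isBigO_inner_left p))).congr_right fun h => (sq ‖h‖).symm
  have hquad := (hf.1.const_mul a₁).add ((IsQuadratic.inner_mul_inner p p).const_mul a₂)
  simp only [← sq] at hquad
  refine ⟨hquad, ((hremainder.add (hsq.const_mul_left (1 / 2 * a₂))).add
    (hf.2.const_mul_left a₁)).congr_left fun h => ?_⟩
  simp only [Function.comp, add_sub_cancel, real_inner_smul_left]
  ring

-- Polarisation reduces products to squares.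
lemma mul (hf : HasJet f x p q) (hg : HasJet g x p' q') :
    HasJet (fun y => f y * g y) x (f x • p' + g x • p) fun h =>
      f x * q' h + g x * q h + 2 * ⟪p, h⟫_ℝ * ⟪p', h⟫_ℝ := by
  have hplus := ((hf.add hg).comp_left (.sq _)).const_mul (1 / 4)
  have hminus := ((hf.add (hg.const_mul (-1))).comp_left (.sq _)).const_mul (-1 / 4)
  refine ((hplus.add hminus).congr_fun (.of_forall fun y => ?_)).congr ?_ fun h => ?_
  · ring
  · module
  · simp only [inner_add_left, real_inner_smul_left]
    ring

end HasJet

variable {v φ : E → ℝ} {x p : E} {q : E → ℝ}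

lemma HasUpperJet.of_isLocalMax (hφ : HasJet φ x p q) (hmax : IsLocalMax (v - φ) x) :
    HasUpperJet v x p q := by
  intro ε hε
  rw [IsLocalMax, IsMaxFilter, ← map_add_left_nhds_zero, eventually_map] at hmax
  filter_upwards [hφ.2.bound hε, hmax] with h hjet hle
  rw [Real.norm_eq_abs, Real.norm_of_nonneg (sq_nonneg ‖h‖)] at hjet
  simp only [Pi.sub_apply] at hle
  linarith [(abs_le.1 hjet).2]

lemma HasLowerJet.of_isLocalMin (hφ : HasJet φ x p q) (hmin : IsLocalMin (v - φ) x) :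
    HasLowerJet v x p q := by
  intro ε hε
  rw [IsLocalMin, IsMinFilter, ← map_add_left_nhds_zero, eventually_map] at hmin
  filter_upwards [hφ.2.bound hε, hmin] with h hjet hle
  rw [Real.norm_eq_abs, Real.norm_of_nonneg (sq_nonneg ‖h‖)] at hjet
  simp only [Pi.sub_apply] at hle
  linarith [(abs_le.1 hjet).1]

lemma HasUpperJet.exists_hasJet (hv : HasUpperJet v x p q) (hq : IsQuadratic q) {ε : ℝ}
    (hε : 0 < ε) : ∃ φ, HasJet φ x p (fun h => q h + ε * ‖h‖ ^ 2) ∧ φ x = v x ∧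
      IsLocalMax (v - φ) x := by
  obtain ⟨B, hB⟩ := hq.add (IsQuadratic.norm_sq.const_mul ε)
  refine ⟨quadraticPoly (v x) x p B, funext hB ▸ .quadraticPoly _ _ _ _,
    quadraticPoly_self _ _ _ _, (hv.eventually_le_quadraticPoly hε hB).mono fun y hy => ?_⟩
  simpa [quadraticPoly_self] using hy

lemma HasLowerJet.exists_hasJet (hv : HasLowerJet v x p q) (hq : IsQuadratic q) {ε : ℝ}
    (hε : 0 < ε) : ∃ φ, HasJet φ x p (fun h => q h - ε * ‖h‖ ^ 2) ∧ φ x = v x ∧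
      IsLocalMin (v - φ) x := by
  obtain ⟨B, hB⟩ := hq.sub (IsQuadratic.norm_sq.const_mul ε)
  refine ⟨quadraticPoly (v x) x p B, funext hB ▸ .quadraticPoly _ _ _ _,
    quadraticPoly_self _ _ _ _, (hv.eventually_quadraticPoly_le hε hB).mono fun y hy => ?_⟩
  simpa [quadraticPoly_self] using hy

end JetCalculus

section RadialJets

variable {E : Type*} [NormedAddCommGroup E] [InnerProductSpace ℝ E] {x z : E}

lemma HasJet.log_norm_sub (hx : x ≠ z) :
    HasJet (fun y => Real.log ‖y - z‖) x ((‖x - z‖ ^ 2)⁻¹ • (x - z))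
      (fun h => (‖x - z‖ ^ 2)⁻¹ * ‖h‖ ^ 2 - 2 * (‖x - z‖ ^ 4)⁻¹ * ⟪x - z, h⟫_ℝ ^ 2) := by
  have hr : 0 < ‖x - z‖ := norm_pos_iff.2 (sub_ne_zero.2 hx)
  have hsq := ((HasJet.norm_sub_sq z x).comp_left (.log (by positivity))).const_mul (1 / 2)
  refine (hsq.congr_fun (.of_forall fun y => ?_)).congr ?_ fun h => ?_
  · simp only [Real.log_pow]
    push_cast
    ring
  · module
  · simp only [real_inner_smul_left]
    field_simp
    ring

lemma HasJet.exists_radial {f : ℝ → ℝ} {a₁ a₂ : ℝ} (hx : x ≠ z)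
    (hf : HasPeanoExpansion f (Real.log ‖x - z‖) a₁ a₂) :
    ∃ p q, HasJet (fun y => f (Real.log ‖y - z‖)) x p q ∧ ∀ h, mobiusForm p q h =
      (‖x - z‖ ^ 2)⁻¹ * (-(a₁ + a₁ ^ 2 / 2) * ‖h‖ ^ 2 +
        (2 * (a₁ + a₁ ^ 2 / 2) - a₂) * ⟪‖x - z‖⁻¹ • (x - z), h⟫_ℝ ^ 2) := by
  refine ⟨_, _, (HasJet.log_norm_sub hx).comp_left hf, fun h => ?_⟩
  have hr : 0 < ‖x - z‖ := norm_pos_iff.2 (sub_ne_zero.2 hx)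
  simp only [mobiusForm, real_inner_smul_left, norm_smul, Real.norm_eq_abs, mul_pow, sq_abs]
  field_simp
  ring

end RadialJets

section Barriers

variable {E : Type*} [NormedAddCommGroup E] [InnerProductSpace ℝ E] {G : Set (E → ℝ)}

/-- `φ` satisfies `λ(A[φ]) ∈ Γ` at `x`: it serves as an upper barrier for subsolutions. -/
def IsStrictSupersolAt (G : Set (E → ℝ)) (φ : E → ℝ) (x : E) : Prop :=
  ∃ p q, HasJet φ x p q ∧ mobiusForm p q ∈ G

/-- `φ` satisfies `λ(A[φ]) ∉ closure Γ` at `x`: it serves as a lower barrier for supersolutions. -/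
def IsStrictSubsolAt (G : Set (E → ℝ)) (φ : E → ℝ) (x : E) : Prop :=
  ∃ p q, HasJet φ x p q ∧ ∃ ε > 0, (fun h => mobiusForm p q h + ε * ‖h‖ ^ 2) ∉ G

variable {K Ω : Set E} {v φ : E → ℝ}

lemma JetSubsol.le_of_isStrictSupersolAt (hv : JetSubsol G Ω v) (hK : IsCompact K)
    (hvK : ContinuousOn v K) (hφK : ContinuousOn φ K)
    (h : ∀ x ∈ K, v x ≤ φ x ∨ K ∈ 𝓝 x ∧ x ∈ Ω ∧ IsStrictSupersolAt G φ x) :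
    ∀ x ∈ K, v x ≤ φ x := by
  intro x hx
  obtain ⟨y, hy, hmax⟩ := hK.exists_isMaxOn ⟨x, hx⟩ (hvK.sub hφK)
  have hle : v x - φ x ≤ v y - φ y := hmax hx
  rcases h y hy with hyφ | ⟨hKy, hyΩ, p, q, hjet, hG⟩
  · linarith
  · exact absurd hG (hv y hyΩ p q hjet.1 (.of_isLocalMax hjet (hmax.isLocalMax hKy)))

lemma JetSupersol.ge_of_isStrictSubsolAt (hv : JetSupersol G Ω v) (hK : IsCompact K)
    (hvK : ContinuousOn v K) (hφK : ContinuousOn φ K)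
    (h : ∀ x ∈ K, φ x ≤ v x ∨ K ∈ 𝓝 x ∧ x ∈ Ω ∧ IsStrictSubsolAt G φ x) :
    ∀ x ∈ K, φ x ≤ v x := by
  intro x hx
  obtain ⟨y, hy, hmin⟩ := hK.exists_isMinOn ⟨x, hx⟩ (hvK.sub hφK)
  have hle : v y - φ y ≤ v x - φ x := hmin hx
  rcases h y hy with hyφ | ⟨hKy, hyΩ, p, q, hjet, ε, hε, hG⟩
  · linarith
  · exact absurd (hv y hyΩ p q hjet.1 (.of_isLocalMin hjet (hmin.isLocalMin hKy)) ε hε) hG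

variable {x z : E} {f : ℝ → ℝ} {a₁ a₂ δ : ℝ}

lemma LamStarInside.isStrictSupersolAt_radial (hG : IsEllipticCone G) (hstar : LamStarInside G δ)
    (hx : x ≠ z) (hf : HasPeanoExpansion f (Real.log ‖x - z‖) a₁ a₂)
    (hpos : 0 < a₁ + a₁ ^ 2 / 2) (hle : a₂ ≤ δ * (a₁ + a₁ ^ 2 / 2)) :
    IsStrictSupersolAt G (fun y => f (Real.log ‖y - z‖)) x := by
  obtain ⟨p, q, hjet, hA⟩ := HasJet.exists_radial hx hf
  refine ⟨p, q, hjet, ?_⟩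
  have hr : 0 < ‖x - z‖ := norm_pos_iff.2 (sub_ne_zero.2 hx)
  have hunit : ‖‖x - z‖⁻¹ • (x - z)‖ = 1 := norm_smul_inv_norm (sub_ne_zero.2 hx)
  refine hG.mem_of_le (hG.smul_mem (inv_pos.2 (pow_pos hr 2))
    (hG.smul_mem hpos (hstar.mem hunit))) fun h => ?_
  rw [hA]
  gcongr
  nlinarith [mul_le_mul_of_nonneg_right hle (sq_nonneg ⟪‖x - z‖⁻¹ • (x - z), h⟫_ℝ)]

lemma LamStarOutside.isStrictSubsolAt_radial (hG : IsEllipticCone G)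
    (hstar : LamStarOutside G δ) (hx : x ≠ z)
    (hf : HasPeanoExpansion f (Real.log ‖x - z‖) a₁ a₂) (hpos : 0 < a₁ + a₁ ^ 2 / 2)
    (hle : -(δ / 2 * (a₁ + a₁ ^ 2 / 2)) ≤ a₂) :
    IsStrictSubsolAt G (fun y => f (Real.log ‖y - z‖)) x := by
  obtain ⟨p, q, hjet, hA⟩ := HasJet.exists_radial hx hf
  set Q := a₁ + a₁ ^ 2 / 2
  set e := ‖x - z‖⁻¹ • (x - z)
  have hr : 0 < ‖x - z‖ := norm_pos_iff.2 (sub_ne_zero.2 hx)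
  have hunit : ‖e‖ = 1 := norm_smul_inv_norm (sub_ne_zero.2 hx)
  have hδ := hstar.pos
  refine ⟨p, q, hjet, (‖x - z‖ ^ 2)⁻¹ * Q * (δ / 2), by positivity,
    fun hmem => hstar.notMem hunit ?_⟩
  refine hG.mem_of_le (hG.smul_mem (t := ‖x - z‖ ^ 2 * Q⁻¹) (by positivity) hmem) fun h => ?_
  have hproj : ⟪e, h⟫_ℝ ^ 2 ≤ ‖h‖ ^ 2 := by
    simpa [hunit] using pow_le_pow_left₀ (abs_nonneg _) (abs_real_inner_le_norm e h) 2
  have hcoeff : -a₂ / Q ≤ δ / 2 := by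
    rw [div_le_iff₀ hpos]
    linarith
  calc ‖x - z‖ ^ 2 * Q⁻¹ * (mobiusForm p q h + (‖x - z‖ ^ 2)⁻¹ * Q * (δ / 2) * ‖h‖ ^ 2)
      = -‖h‖ ^ 2 + 2 * ⟪e, h⟫_ℝ ^ 2 + -a₂ / Q * ⟪e, h⟫_ℝ ^ 2 + δ / 2 * ‖h‖ ^ 2 := by
        rw [hA]
        field_simp
        ring
    _ ≤ -‖h‖ ^ 2 + 2 * ⟪e, h⟫_ℝ ^ 2 + δ / 2 * ‖h‖ ^ 2 + δ / 2 * ‖h‖ ^ 2 := by gcongr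
    _ = -‖h‖ ^ 2 + 2 * ⟪e, h⟫_ℝ ^ 2 + δ * ‖h‖ ^ 2 := by ring

end Barriers

section Kelvin

open EuclideanGeometry

variable {E : Type*} [NormedAddCommGroup E] [InnerProductSpace ℝ E]

/-- The conformal transform `v ∘ ι + log |Jac ι|` of `v` (per dimension) under the inversion `ι` in
the sphere of centre `c` and radius `l`. -/
def kelvin (c : E) (l : ℝ) (v : E → ℝ) (y : E) : ℝ :=
  v (inversion c l y) + 2 * (Real.log l - Real.log ‖y - c‖)

lemma HasJet.comp_sub_inner {φ : E → ℝ} {T : E → E} {x p : E} {q : E → ℝ} {D : E →L[ℝ] E}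
    (hφ : HasJet φ (T x) p q) (hT : HasFDerivAt T D x) :
    HasJet (fun y => φ (T y) - ⟪p, T y⟫_ℝ) x 0 fun h => q (D h) := by
  refine ⟨hφ.1.comp D, ?_⟩
  obtain ⟨B, hB⟩ := hφ.1
  set k : E → E := fun h => T (x + h) - T x
  have hrem : (fun h => k h - D h) =o[𝓝 0] fun h => ‖h‖ :=
    (hasFDerivAt_iff_isLittleO_nhds_zero.1 hT).norm_right
  have hD : (fun h => D h) =O[𝓝 (0 : E)] fun h => ‖h‖ := (D.isBigO_id (𝓝 0)).norm_right
  have hk : k =O[𝓝 0] fun h => ‖h‖ := (hrem.isBigO.add hD).congr_left fun h => sub_add_cancel _ _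
  have hφk := (hφ.2.comp_tendsto (hk.trans_tendsto tendsto_norm_zero)).trans_isBigO
    (hk.norm_left.pow 2)
  have hleft := (B.isBoundedBilinearMap.isBigO_comp (g := k)
    (h := fun h => k h - D h)).trans_isLittleO (hk.norm_left.mul_isLittleO hrem.norm_left)
  have hright := (B.isBoundedBilinearMap.isBigO_comp (g := fun h => k h - D h)
    (h := fun h => D h)).trans_isLittleO (hrem.norm_left.mul_isBigO hD.norm_left)
  have hquad : (fun h => q (k h) - q (D h)) =o[𝓝 0] fun h => ‖h‖ ^ 2 := by
    refine (hleft.add hright).congr (fun h => ?_) fun h => (sq ‖h‖).symm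
    simp only [hB, map_sub, sub_apply]
    ring
  refine (hφk.add (hquad.const_mul_left (1 / 2))).congr_left fun h => ?_
  simp only [Function.comp, k, add_sub_cancel, inner_sub_right, inner_zero_left]
  ring

lemma hasJet_inner_inversion {c x : E} (hx : x ≠ c) (l : ℝ) (p : E) :
    HasJet (fun y => ⟪p, inversion c l y⟫_ℝ) x
      ((l ^ 2 / ‖x - c‖ ^ 2) • p - (2 * l ^ 2 * ⟪p, x - c⟫_ℝ / ‖x - c‖ ^ 4) • (x - c))
      (fun h => l ^ 2 * (⟪p, x - c⟫_ℝ * (8 * ⟪x - c, h⟫_ℝ ^ 2 / ‖x - c‖ ^ 6 -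
        2 * ‖h‖ ^ 2 / ‖x - c‖ ^ 4) - 4 * ⟪p, h⟫_ℝ * ⟪x - c, h⟫_ℝ / ‖x - c‖ ^ 4)) := by
  have hr : 0 < ‖x - c‖ := norm_pos_iff.2 (sub_ne_zero.2 hx)
  have hjet := (((HasJet.inner_sub p c x).mul
    ((HasJet.norm_sub_sq c x).comp_left (.inv (by positivity)))).const_mul (l ^ 2)).add
      (.const ⟪p, c⟫_ℝ x)
  refine (hjet.congr_fun (.of_forall fun y => ?_)).congr ?_ fun h => ?_
  · simp only [inversion, dist_eq_norm, vsub_eq_sub, vadd_eq_add, inner_add_right,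
      real_inner_smul_right]
    ring
  · match_scalars <;> field_simp
  · simp only [real_inner_smul_left]
    field_simp
    ring

lemma reflection_orthogonal_singleton_apply (z h : E) :
    (Submodule.span ℝ {z})ᗮ.reflection h = h - (2 * ⟪z, h⟫_ℝ / ‖z‖ ^ 2) • z := by
  rw [Submodule.reflection_orthogonal_apply, Submodule.reflection_singleton_apply]
  simp
  module

lemma HasJet.exists_kelvin {φ : E → ℝ} {c x p : E} {q : E → ℝ} {l : ℝ} (hx : x ≠ c)
    (hφ : HasJet φ (inversion c l x) p q) :
    ∃ P Q, HasJet (kelvin c l φ) x P Q ∧ ∀ h, mobiusForm P Q h =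
      (l / ‖x - c‖) ^ 4 * mobiusForm p q ((Submodule.span ℝ {x - c})ᗮ.reflection h) := by
  have hr : 0 < ‖x - c‖ := norm_pos_iff.2 (sub_ne_zero.2 hx)
  have hjet := (((hφ.comp_sub_inner (hasFDerivAt_inversion hx)).add
    (hasJet_inner_inversion hx l p)).add ((HasJet.log_norm_sub hx).const_mul (-2))).add
      (.const (2 * Real.log l) x)
  refine ⟨_, _, hjet.congr_fun (.of_forall fun y => ?_), fun h => ?_⟩
  · simp only [kelvin]
    ring
  · obtain ⟨B, hB⟩ := hφ.1
    have hnorm := (Submodule.span ℝ {x - c})ᗮ.reflection.norm_map h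
    have hq (t : ℝ) (k : E) : q (t • k) = t ^ 2 * q k := by
      simp only [hB, map_smul, smul_apply, smul_eq_mul]
      ring
    simp only [mobiusForm, smul_apply, hnorm, dist_eq_norm, hq, LinearIsometryEquiv.coe_coe,
      ContinuousLinearEquiv.coe_coe]
    rw [reflection_orthogonal_singleton_apply, ← real_inner_self_eq_norm_sq (_ + _ : E)]
    generalize x - c = z at hr
    simp only [inner_add_left, inner_add_right, inner_sub_right, inner_sub_left,
      real_inner_smul_left, inner_smul_right, inner_zero_left, inner_zero_right,
      real_inner_self_eq_norm_sq, real_inner_comm p z]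
    field_simp
    ring

variable {G : Set (E → ℝ)} {Ω : Set E} {v : E → ℝ} {c : E} {l : ℝ}

lemma sub_kelvin_eq (hl : 0 < l) (v φ : E → ℝ) {y : E} (hy : y ≠ c) :
    v y - kelvin c l φ y = kelvin c l v (inversion c l y) - φ (inversion c l y) := by
  have hr : 0 < ‖y - c‖ := norm_pos_iff.2 (sub_ne_zero.2 hy)
  have hlog : Real.log ‖inversion c l y - c‖ = 2 * Real.log l - Real.log ‖y - c‖ := by
    rw [← dist_eq_norm, dist_inversion_center, dist_eq_norm, Real.log_div (by positivity) hr.ne',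
      Real.log_pow]
    norm_num
  simp only [kelvin, inversion_inversion c hl.ne', hlog]
  ring

lemma sub_kelvin_eventuallyEq (hl : 0 < l) (v φ : E → ℝ) {x : E} (hx : x ≠ c) :
    v - kelvin c l φ =ᶠ[𝓝 x] (kelvin c l v - φ) ∘ inversion c l := by
  filter_upwards [isOpen_ne.mem_nhds hx] with y hy
  exact sub_kelvin_eq hl v φ hy

lemma tendsto_inversion {x : E} (hx : x ≠ c) :
    Tendsto (inversion c l) (𝓝 x) (𝓝 (inversion c l x)) :=
  (hasFDerivAt_inversion hx).continuousAt

lemma jetSupersol_kelvin (hv : JetSupersol G Ω v) (hG : IsEllipticCone G) (c : E) (hl : 0 < l) :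
    JetSupersol G {y | y ≠ c ∧ inversion c l y ∈ Ω} (kelvin c l v) := by
  rintro y ⟨hy, hyΩ⟩ p q hq hjet ε hε
  set x := inversion c l y
  have hx : x ≠ c := (inversion_eq_center hl.ne').not.2 hy
  have hxy : inversion c l x = y := inversion_inversion c hl.ne' y
  obtain ⟨φ, hφ, -, hmin⟩ := hjet.exists_hasJet hq (half_pos hε)
  rw [← hxy] at hφ hmin
  obtain ⟨P, Q, hJ, hA⟩ := hφ.exists_kelvin hx
  have hlow : HasLowerJet v x P Q := .of_isLocalMin hJ <|
    (sub_kelvin_eventuallyEq hl v φ hx).isLocalMin_iff.2 <|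
      hmin.comp_tendsto (tendsto_inversion hx)
  have hr : 0 < ‖x - c‖ := norm_pos_iff.2 (sub_ne_zero.2 hx)
  have hs : 0 < (l / ‖x - c‖) ^ 4 := by positivity
  have hmem := hv x hyΩ P Q hJ.1 hlow ((l / ‖x - c‖) ^ 4 * (ε / 2)) (by positivity)
  refine hG.mem_of_le (hG.comp_mem (Submodule.span ℝ {x - c})ᗮ.reflection
    (hG.smul_mem (inv_pos.2 hs) hmem)) fun h => le_of_eq ?_
  simp only [Function.comp, hA, Submodule.reflection_reflection, LinearIsometryEquiv.norm_map]
  simp only [mobiusForm]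
  field_simp
  ring

lemma jetSubsol_kelvin (hv : JetSubsol G Ω v) (hG : IsEllipticCone G) (c : E) (hl : 0 < l) :
    JetSubsol G {y | y ≠ c ∧ inversion c l y ∈ Ω} (kelvin c l v) := by
  rintro y ⟨hy, hyΩ⟩ p q hq hjet hmem
  obtain ⟨ε, hε, hmem⟩ := hG.exists_sub_norm_sq_mem hmem
  set x := inversion c l y
  have hx : x ≠ c := (inversion_eq_center hl.ne').not.2 hy
  have hxy : inversion c l x = y := inversion_inversion c hl.ne' y
  obtain ⟨φ, hφ, -, hmax⟩ := hjet.exists_hasJet hq hε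
  rw [← hxy] at hφ hmax
  obtain ⟨P, Q, hJ, hA⟩ := hφ.exists_kelvin hx
  have hup : HasUpperJet v x P Q := .of_isLocalMax hJ <|
    (sub_kelvin_eventuallyEq hl v φ hx).isLocalMax_iff.2 <|
      hmax.comp_tendsto (tendsto_inversion hx)
  have hr : 0 < ‖x - c‖ := norm_pos_iff.2 (sub_ne_zero.2 hx)
  refine hv x hyΩ P Q hJ.1 hup ?_
  refine hG.mem_of_le (hG.comp_mem (Submodule.span ℝ {x - c})ᗮ.reflection
    (hG.smul_mem (t := (l / ‖x - c‖) ^ 4) (by positivity) hmem)) fun h => le_of_eq ?_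
  simp only [Function.comp, hA, LinearIsometryEquiv.norm_map]
  simp only [mobiusForm, LinearIsometryEquiv.norm_map]
  ring

end Kelvin

section Alexandrov

variable {E : Type*} [NormedAddCommGroup E] [InnerProductSpace ℝ E] {ψ : E → ℝ} {P g : E → E}

/-- `p` is a subgradient of `ψ` at `x`, in the sense of convex analysis. -/
def IsSubgradientAt (ψ : E → ℝ) (p x : E) : Prop := ∀ y, ψ x + ⟪p, y - x⟫_ℝ ≤ ψ y

lemma IsSubgradientAt.inner_sub_sub_nonneg {p q x y : E} (hp : IsSubgradientAt ψ p x)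
    (hq : IsSubgradientAt ψ q y) : 0 ≤ ⟪p - q, x - y⟫_ℝ := by
  have hxy := hp y
  have hyx := hq x
  simp only [inner_sub_left, inner_sub_right] at *
  linarith

/-- `P` is the proximal map of `ψ`, that is, the inverse of `1 + ∂ψ`. -/
def IsProximalMap (ψ : E → ℝ) (P : E → E) : Prop := ∀ z, IsSubgradientAt ψ (z - P z) (P z)

namespace IsProximalMap

lemma norm_sq_sub_le_inner (h : IsProximalMap ψ P) (a b : E) :
    ‖P a - P b‖ ^ 2 ≤ ⟪P a - P b, a - b⟫_ℝ := by
  have hmono := (h a).inner_sub_sub_nonneg (h b)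
  rw [sub_sub_sub_comm, inner_sub_left, real_inner_self_eq_norm_sq, real_inner_comm] at hmono
  linarith

lemma lipschitzWith (h : IsProximalMap ψ P) : LipschitzWith 1 P := by
  refine .of_dist_le_mul fun a b => ?_
  rw [dist_eq_norm, dist_eq_norm, NNReal.coe_one, one_mul]
  have hfirm := h.norm_sq_sub_le_inner a b
  have hcs := real_inner_le_norm (P a - P b) (a - b)
  by_contra! hlt
  nlinarith [norm_nonneg (a - b)]

lemma apply_add_subgradient (h : IsProximalMap ψ P) {p x : E} (hp : IsSubgradientAt ψ p x) :
    P (x + p) = x := by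
  have hmono := (h (x + p)).inner_sub_sub_nonneg hp
  rw [show x + p - P (x + p) - p = -(P (x + p) - x) by abel, inner_neg_left,
    real_inner_self_eq_norm_sq] at hmono
  exact sub_eq_zero.1 (norm_eq_zero.1 (pow_eq_zero_iff two_ne_zero |>.1
    (le_antisymm (by linarith) (sq_nonneg _))))

lemma envelope_le (h : IsProximalMap ψ P) (a b : E) :
    ψ (P b) + 1 / 2 * ‖P b - b‖ ^ 2 ≤
      ψ (P a) + 1 / 2 * ‖P a - a‖ ^ 2 + ⟪a - P a, b - a⟫_ℝ + 1 / 2 * ‖b - a‖ ^ 2 := by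
  have hsub := h b (P a)
  have hsq := sq_nonneg ‖P a - P b‖
  simp only [← real_inner_self_eq_norm_sq, inner_sub_left, inner_sub_right] at *
  rw [real_inner_comm (P a) (P b), real_inner_comm (P a) b, real_inner_comm (P a) a,
    real_inner_comm (P b) b, real_inner_comm a b] at *
  linarith

lemma hasFDerivAt_envelope (h : IsProximalMap ψ P) (a : E) :
    HasFDerivAt (fun z => ψ (P z) + 1 / 2 * ‖P z - z‖ ^ 2) (innerSL ℝ (a - P a)) a := by
  rw [hasFDerivAt_iff_isLittleO_nhds_zero]
  refine (Asymptotics.IsBigO.of_bound (g := fun k => ‖k‖ ^ 2) 1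
    (.of_forall fun k => ?_)).trans_isLittleO isLittleO_norm_sq_norm.of_norm_right
  have hupper := h.envelope_le a (a + k)
  have hlower := h.envelope_le (a + k) a
  have hmono := (sq_nonneg _).trans (h.norm_sq_sub_le_inner (a + k) a)
  have hlip := h.lipschitzWith.dist_le_mul (a + k) a
  have hcs := real_inner_le_norm (P (a + k) - P a) k
  have hsplit : ⟪a + k - P (a + k), a - (a + k)⟫_ℝ =
      ⟪P (a + k) - P a, k⟫_ℝ - ⟪a - P a, k⟫_ℝ - ‖k‖ ^ 2 := by
    rw [← real_inner_self_eq_norm_sq]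
    simp only [inner_sub_left, inner_sub_right, inner_add_left, inner_add_right]
    ring
  simp only [dist_eq_norm, add_sub_cancel_left, sub_add_cancel_left, norm_neg, NNReal.coe_one,
    one_mul] at *
  rw [Real.norm_eq_abs, norm_pow, norm_norm, abs_le, innerSL_apply_apply]
  constructor <;> nlinarith [norm_nonneg k]

lemma le_norm_sub_of_lt_norm (h : IsProximalMap ψ P) {z w : E} {c ρ : ℝ} (hc : 0 ≤ c) (hρ : 0 < ρ)
    (hsphere : ∀ w, ‖w‖ = ρ → c * ρ ≤ ‖P (z + w) - P z‖) (hw : ρ < ‖w‖) :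
    c ^ 2 * ρ ≤ ‖P (z + w) - P z‖ := by
  have hwpos : 0 < ‖w‖ := hρ.trans hw
  obtain ⟨t, ht, ht1, htw⟩ : ∃ t, 0 < t ∧ t < 1 ∧ t * ‖w‖ = ρ :=
    ⟨ρ / ‖w‖, by positivity, (div_lt_one hwpos).2 hw, div_mul_cancel₀ _ hwpos.ne'⟩
  have hinner := h.norm_sq_sub_le_inner (z + t • w) z
  have hmono := (sq_nonneg _).trans (h.norm_sq_sub_le_inner (z + w) (z + t • w))
  rw [add_sub_cancel_left, real_inner_smul_right] at hinner
  rw [show z + w - (z + t • w) = (1 - t) • w by module, real_inner_smul_right,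
    ← sub_sub_sub_cancel_right _ _ (P z), inner_sub_left] at hmono
  have hle := sub_nonneg.1 (nonneg_of_mul_nonneg_right hmono (sub_pos.2 ht1))
  have hcs := hle.trans (real_inner_le_norm (P (z + w) - P z) w)
  have hsq := pow_le_pow_left₀ (by positivity)
    (hsphere (t • w) (by rw [norm_smul, Real.norm_of_nonneg ht.le, htw])) 2
  refine le_of_mul_le_mul_right ?_ hρ
  calc c ^ 2 * ρ * ρ = (c * ρ) ^ 2 := by ring
    _ ≤ t * ⟪P (z + t • w) - P z, w⟫_ℝ := hsq.trans hinner
    _ ≤ t * (‖P (z + w) - P z‖ * ‖w‖) := by gcongr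
    _ = ‖P (z + w) - P z‖ * ρ := by rw [← htw]; ring

lemma exists_norm_le_mul_norm_sub (h : IsProximalMap ψ P) {z : E} {L : E ≃L[ℝ] E}
    (hL : HasFDerivAt P (L : E →L[ℝ] E) z) :
    ∃ C > 0, ∃ η > 0, ∀ w, ‖P (z + w) - P z‖ < η → ‖w‖ ≤ C * ‖P (z + w) - P z‖ := by
  obtain ⟨C, hC, hbound⟩ := (hL.isTheta_sub L.toHomeomorph.isInducing).2.exists_pos
  obtain ⟨r, hr, hball⟩ := Metric.eventually_nhds_iff_ball.1 hbound.bound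
  have hnear : ∀ w, ‖w‖ < r → ‖w‖ ≤ C * ‖P (z + w) - P z‖ := fun w hw => by
    simpa using hball (z + w) (by simpa using hw)
  refine ⟨C, hC, (C⁻¹) ^ 2 * (r / 2), by positivity, fun w hw => hnear w ?_⟩
  by_contra! hle
  refine hw.not_ge (h.le_norm_sub_of_lt_norm (by positivity) (by positivity) (fun w' hw' => ?_)
    (by linarith))
  rw [inv_mul_le_iff₀ hC, ← hw']
  exact hnear w' (by linarith)

end IsProximalMap

/-- The remainder is estimated by the mean value inequality along rays, so that no continuity of
the second derivative is needed. -/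
lemma isLittleO_taylor_of_hasFDerivAt_gradient {f : E → ℝ} {L : E →L[ℝ] E} {x : E}
    (hf : ∀ y, HasFDerivAt f (innerSL ℝ (g y)) y) (hg : HasFDerivAt g L x) :
    (fun h => f (x + h) - f x - ⟪g x, h⟫_ℝ - 1 / 2 * ⟪L h, h⟫_ℝ) =o[𝓝 0] fun h => ‖h‖ ^ 2 := by
  refine Asymptotics.isLittleO_iff.2 fun ε hε => ?_
  obtain ⟨r, hr, hball⟩ := Metric.eventually_nhds_iff_ball.1
    (Asymptotics.isLittleO_iff.1 (hasFDerivAt_iff_isLittleO_nhds_zero.1 hg) hε)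
  filter_upwards [Metric.ball_mem_nhds (0 : E) hr] with h hh
  have hderiv : ∀ s ∈ Icc (0 : ℝ) 1, HasDerivWithinAt
      (fun s => f (x + s • h) - f x - s * ⟪g x, h⟫_ℝ - s ^ 2 * (1 / 2 * ⟪L h, h⟫_ℝ))
      ⟪g (x + s • h) - g x - L (s • h), h⟫_ℝ (Icc 0 1) s := fun s _ => by
    have hray : HasDerivAt (fun s : ℝ => x + s • h) h s := by
      simpa using ((hasDerivAt_id s).smul_const h).const_add x
    refine ((((((hf (x + s • h)).comp_hasDerivAt s hray).sub_const (f x)).sub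
      ((hasDerivAt_id s).mul_const ⟪g x, h⟫_ℝ)).sub
      ((hasDerivAt_pow 2 s).mul_const (1 / 2 * ⟪L h, h⟫_ℝ))).congr_deriv ?_).hasDerivWithinAt
    simp [inner_sub_left, real_inner_smul_left]
    ring
  have hbound : ∀ s ∈ Icc (0 : ℝ) 1,
      ‖⟪g (x + s • h) - g x - L (s • h), h⟫_ℝ‖ ≤ ε * ‖h‖ ^ 2 := fun s hs => by
    have hsn : ‖s • h‖ ≤ ‖h‖ := by
      rw [norm_smul, Real.norm_eq_abs, abs_of_nonneg hs.1]
      exact mul_le_of_le_one_left (norm_nonneg _) hs.2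
    calc ‖⟪g (x + s • h) - g x - L (s • h), h⟫_ℝ‖
        ≤ ‖g (x + s • h) - g x - L (s • h)‖ * ‖h‖ := norm_inner_le_norm _ _
      _ ≤ ε * ‖s • h‖ * ‖h‖ := by
        gcongr
        exact hball _ (mem_ball_zero_iff.2 (hsn.trans_lt (mem_ball_zero_iff.1 hh)))
      _ ≤ ε * ‖h‖ * ‖h‖ := by gcongr
      _ = ε * ‖h‖ ^ 2 := by ring
  simpa using (convex_Icc (0 : ℝ) 1).norm_image_sub_le_of_norm_hasDerivWithin_le hderiv hbound
    (left_mem_Icc.2 zero_le_one) (right_mem_Icc.2 zero_le_one)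

lemma isLittleO_inner {f₁ f₂ : E → E} (h₁ : f₁ =o[𝓝 0] fun k : E => ‖k‖)
    (h₂ : f₂ =O[𝓝 0] fun k : E => ‖k‖) :
    (fun k => ⟪f₁ k, f₂ k⟫_ℝ) =o[𝓝 0] fun k => ‖k‖ ^ 2 := by
  refine (isBoundedBilinearMap_inner.isBigO_comp (𝕜 := ℝ)).trans_isLittleO ?_
  simpa only [sq] using h₁.norm_left.mul_isBigO h₂.norm_left

/-- The Moreau envelope has a second-order expansion where the proximal map is differentiable;
invertibility of the derivative transports it back to `ψ`. -/
lemma IsProximalMap.hasJet (h : IsProximalMap ψ P) (hg : ∀ x, IsSubgradientAt ψ (g x) x) {x : E}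
    {L : E ≃L[ℝ] E} (hL : HasFDerivAt P (L : E →L[ℝ] E) (x + g x)) :
    HasJet ψ x (g x) fun k => ⟪L.symm k - k, k⟫_ℝ := by
  have hP : ∀ k, P (x + k + g (x + k)) = x + k := fun k => h.apply_add_subgradient (hg _)
  have hPx : P (x + g x) = x := h.apply_add_subgradient (hg x)
  set w : E → E := fun k => k + g (x + k) - g x
  have hw : ∀ k, x + g x + w k = x + k + g (x + k) := fun k => by simp only [w]; abel
  have hwO : w =O[𝓝 0] fun k => ‖k‖ := by
    obtain ⟨C, -, η, hη, hbound⟩ := h.exists_norm_le_mul_norm_sub hL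
    refine .of_bound C ?_
    filter_upwards [ball_mem_nhds (0 : E) hη] with k hk
    simpa [hw, hP, hPx] using hbound (w k) (by simpa [hw, hP, hPx] using hk)
  have hw0 : Tendsto w (𝓝 0) (𝓝 0) := hwO.trans_tendsto tendsto_norm_zero
  have hinv : (fun k => k - L (w k)) =o[𝓝 0] fun k => ‖k‖ := by
    refine (((hasFDerivAt_iff_isLittleO_nhds_zero.1 hL).comp_tendsto hw0).trans_isBigO
      hwO).congr_left fun k => ?_
    simp only [Function.comp_apply, hw, hP, hPx, add_sub_cancel_left, ContinuousLinearEquiv.coe_coe]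
  have hinv' := ((L.symm : E →L[ℝ] E).isBigO_comp _ _).trans_isLittleO hinv
  have henv := ((isLittleO_taylor_of_hasFDerivAt_gradient h.hasFDerivAt_envelope
    ((hasFDerivAt_id _).sub hL)).comp_tendsto hw0).trans_isBigO (hwO.norm_left.pow 2)
  refine ⟨⟨(innerSL ℝ).comp ((L.symm : E →L[ℝ] E) - .id ℝ E), fun k => rfl⟩, ?_⟩
  refine ((henv.add ((isLittleO_inner hinv hwO).const_mul_left (1 / 2))).sub
    ((isLittleO_inner hinv' (Asymptotics.isBigO_refl _ _).norm_right).const_mul_left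
      (1 / 2))).congr_left fun k => ?_
  have hwk : x + k - (x + k + g (x + k)) = k - w k - g x := by simp only [w]; abel
  simp only [Function.comp_apply, hw, hP, hPx, hwk, map_sub, ContinuousLinearEquiv.coe_coe,
    ContinuousLinearEquiv.symm_apply_apply, sub_apply, ContinuousLinearMap.id_apply]
  simp only [← real_inner_self_eq_norm_sq, inner_sub_left, inner_sub_right, inner_add_left,
    inner_add_right]
  rw [real_inner_comm (w k) k, real_inner_comm (g x) k, real_inner_comm (g x) (w k),
    real_inner_comm (g x) x]
  ring

lemma convexOn_univ_of_isSubgradientAt (hg : ∀ x, IsSubgradientAt ψ (g x) x) :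
    ConvexOn ℝ univ ψ := by
  refine ⟨convex_univ, fun x _ y _ a b ha hb hab => ?_⟩
  have hx := mul_le_mul_of_nonneg_left (hg (a • x + b • y) x) ha
  have hy := mul_le_mul_of_nonneg_left (hg (a • x + b • y) y) hb
  obtain rfl : b = 1 - a := by linarith
  rw [smul_eq_mul, smul_eq_mul]
  simp only [inner_sub_right, inner_add_right, real_inner_smul_right] at hx hy
  linarith

lemma isSubgradientAt_of_forall_le {x z : E} (hψ : ConvexOn ℝ univ ψ)
    (hmin : ∀ y, ψ x + 1 / 2 * ‖x - z‖ ^ 2 ≤ ψ y + 1 / 2 * ‖y - z‖ ^ 2) :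
    IsSubgradientAt ψ (z - x) x := by
  intro y
  have hquot : ∀ t ∈ Ioc (0 : ℝ) 1,
      ψ x + ⟪z - x, y - x⟫_ℝ ≤ ψ y + t * (1 / 2 * ‖y - x‖ ^ 2) := fun t ht => by
    have hconv := hψ.2 (mem_univ x) (mem_univ y) (sub_nonneg.2 ht.2) ht.1.le (by ring)
    have hle := hmin (x + t • (y - x))
    rw [smul_eq_mul, smul_eq_mul, show (1 - t) • x + t • y = x + t • (y - x) by module] at hconv
    rw [add_sub_right_comm, norm_add_sq_real, real_inner_smul_right, norm_smul, mul_pow,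
      Real.norm_eq_abs, sq_abs, ← neg_sub z x, inner_neg_left] at hle
    refine le_of_mul_le_mul_left ?_ ht.1
    linarith
  have hlim : Tendsto (fun t : ℝ => ψ y + t * (1 / 2 * ‖y - x‖ ^ 2)) (𝓝[>] 0) (𝓝 (ψ y)) :=
    (Continuous.tendsto' (by fun_prop) _ _ (by simp)).mono_left nhdsWithin_le_nhds
  exact ge_of_tendsto hlim (mem_of_superset (Ioc_mem_nhdsGT one_pos) hquot)

lemma hausdorffMeasure_image_eq_zero [MeasurableSpace E] [BorelSpace E] {K : ℝ≥0} {f : E → E}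
    {s : Set E} (hf : LipschitzOnWith K f s) (hs : μH[Module.finrank ℝ E] s = 0) :
    μH[Module.finrank ℝ E] (f '' s) = 0 := by
  simpa [hs] using hf.hausdorffMeasure_image_le (Nat.cast_nonneg (Module.finrank ℝ E))

section FiniteDimensional

variable [FiniteDimensional ℝ E]

lemma exists_isProximalMap (hg : ∀ x, IsSubgradientAt ψ (g x) x) : ∃ P, IsProximalMap ψ P := by
  have hψ := convexOn_univ_of_isSubgradientAt hg
  have hcont : Continuous ψ := hψ.locallyLipschitz.continuous
  suffices ∀ z, ∃ x, ∀ y, ψ x + 1 / 2 * ‖x - z‖ ^ 2 ≤ ψ y + 1 / 2 * ‖y - z‖ ^ 2 by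
    choose P hP using this
    exact ⟨P, fun z => isSubgradientAt_of_forall_le hψ (hP z)⟩
  intro z
  refine Continuous.exists_forall_le_of_isBounded (by fun_prop) z
    ((isBounded_closedBall (x := z) (r := 2 * ‖g z‖)).subset fun y hy => ?_)
  have hsub := hg z y
  have hcs := neg_le_of_abs_le (abs_real_inner_le_norm (g z) (y - z))
  rw [mem_closedBall, dist_eq_norm]
  by_contra! hlt
  simp only [mem_ofPred_eq, sub_self, norm_zero] at hy
  nlinarith [norm_nonneg (g z), norm_nonneg (y - z)]

/-- Alexandrov's theorem. The exceptional set is the image under the proximal map of its singular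
points. -/
lemma exists_null_forall_hasJet [MeasurableSpace E] [BorelSpace E]
    (hg : ∀ x, IsSubgradientAt ψ (g x) x) :
    ∃ N : Set E, μH[Module.finrank ℝ E] N = 0 ∧ ∀ x ∉ N, ∃ q, HasJet ψ x (g x) q := by
  obtain ⟨P, hP⟩ := exists_isProximalMap hg
  refine ⟨P '' {z | ¬DifferentiableAt ℝ P z} ∪
    P '' {z | DifferentiableAt ℝ P z ∧ (fderiv ℝ P z).det = 0}, measure_union_null
      (hausdorffMeasure_image_eq_zero hP.lipschitzWith.lipschitzOnWith
        hP.lipschitzWith.ae_differentiableAt)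
      (addHaar_image_eq_zero_of_det_fderivWithin_eq_zero _
        (fun z hz => hz.1.hasFDerivAt.hasFDerivWithinAt) fun z hz => hz.2), fun x hx => ?_⟩
  rw [mem_union, not_or] at hx
  have hPx : P (x + g x) = x := hP.apply_add_subgradient (hg x)
  have hdiff : DifferentiableAt ℝ P (x + g x) := by
    by_contra hnot
    exact hx.1 ⟨x + g x, hnot, hPx⟩
  have hdet : (fderiv ℝ P (x + g x)).det ≠ 0 := fun hzero => hx.2 ⟨x + g x, ⟨hdiff, hzero⟩, hPx⟩
  refine ⟨_, hP.hasJet hg (L := (fderiv ℝ P (x + g x)).toContinuousLinearEquivOfDetNeZero hdet) ?_⟩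
  simpa using hdiff.hasFDerivAt

end FiniteDimensional

end Alexandrov

section Jensen

variable {E : Type*} [NormedAddCommGroup E] [InnerProductSpace ℝ E] {F : E → ℝ} {g : E → E} {k : ℝ}

/-- The affine function through `(x, F x)` with slope `p` lies above `F`. -/
def IsSupergradientAt (F : E → ℝ) (p x : E) : Prop := ∀ z, F z ≤ F x + ⟪p, z - x⟫_ℝ

/-- Test the two supports at `z = x' - (p - a) / (4 k)`. -/
lemma IsSupergradientAt.norm_sub_le {p a x x' : E} (hp : IsSupergradientAt F p x') (hk : 0 < k)
    (hF : ∀ z, F x + ⟪a, z - x⟫_ℝ - k * ‖z - x‖ ^ 2 ≤ F z)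
    (hle : F x' ≤ F x + ⟪a, x' - x⟫_ℝ) : ‖p - a‖ ≤ 4 * k * ‖x' - x‖ := by
  set d := p - a with hd
  set z := x' - (4 * k)⁻¹ • d with hz
  have hquad : (4 * k)⁻¹ * ‖d‖ ^ 2 ≤ k * ‖z - x‖ ^ 2 := by
    have hlow := hF z
    have hup := hp z
    rw [show z - x = (x' - x) + (z - x') by abel, inner_add_right] at hlow
    rw [← real_inner_self_eq_norm_sq, ← real_inner_smul_right,
      show (4 * k)⁻¹ • d = -(z - x') by simp [hz], inner_neg_right, hd, inner_sub_left,
      show z - x = (x' - x) + (z - x') by abel]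
    linarith
  have hnorm : ‖z - x‖ ≤ ‖x' - x‖ + (4 * k)⁻¹ * ‖d‖ := by
    calc ‖z - x‖ = ‖(x' - x) - (4 * k)⁻¹ • d‖ := by rw [hz, sub_right_comm]
      _ ≤ ‖x' - x‖ + ‖(4 * k)⁻¹ • d‖ := _root_.norm_sub_le _ _
      _ = _ := by rw [norm_smul, Real.norm_of_nonneg (by positivity)]
  have hsq : ‖d‖ ^ 2 ≤ (2 * k * (‖x' - x‖ + (4 * k)⁻¹ * ‖d‖)) ^ 2 := by
    calc ‖d‖ ^ 2 = 4 * k * ((4 * k)⁻¹ * ‖d‖ ^ 2) := by field_simp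
      _ ≤ 4 * k * (k * (‖x' - x‖ + (4 * k)⁻¹ * ‖d‖) ^ 2) := by
        exact mul_le_mul_of_nonneg_left (hquad.trans (by gcongr)) (by positivity)
      _ = _ := by ring
  have hroot := abs_le_of_sq_le_sq' hsq (by positivity) |>.2
  have hcancel : 2 * k * ((4 * k)⁻¹ * ‖d‖) = ‖d‖ / 2 := by
    field_simp
    ring
  linarith

/-- Jensen's lemma: the contact slopes of a semiconvex function fill a neighbourhood of `0`, while
they depend in a Lipschitz way on the contact point, so some contact point avoids the null set. -/
lemma exists_isSupergradientAt_notMem [FiniteDimensional ℝ E] [MeasurableSpace E] [BorelSpace E]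
    (hk : 0 < k) (hF : ∀ x z, F x + ⟪g x, z - x⟫_ℝ - k * ‖z - x‖ ^ 2 ≤ F z)
    (hmax : ∀ p, ∃ x, IsSupergradientAt F p x) {N : Set E} (hN : μH[Module.finrank ℝ E] N = 0)
    {ρ : ℝ} (hρ : 0 < ρ) : ∃ x ∉ N, ‖g x‖ < ρ ∧ IsSupergradientAt F (g x) x := by
  choose X hX using hmax
  have hslope : ∀ p, g (X p) = p := fun p => by
    have hle := (hX p).norm_sub_le hk (hF (X p)) (by simp)
    rw [sub_self, norm_zero, mul_zero, norm_le_zero_iff, sub_eq_zero] at hle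
    exact hle.symm
  by_contra! hcon
  have hlip : LipschitzOnWith (4 * k).toNNReal g (range X ∩ N) := by
    refine .of_dist_le_mul ?_
    rintro _ ⟨⟨p, rfl⟩, -⟩ _ ⟨⟨p', rfl⟩, -⟩
    rw [hslope, hslope, dist_eq_norm, dist_eq_norm, Real.coe_toNNReal _ (by positivity)]
    refine (hX p).norm_sub_le hk (fun z => ?_) (hX p' _)
    simpa only [hslope] using hF (X p') z
  have hnull := hausdorffMeasure_image_eq_zero hlip (measure_mono_null inter_subset_right hN)
  have hball : ball (0 : E) ρ ⊆ g '' (range X ∩ N) := fun p hp => by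
    refine ⟨X p, ⟨mem_range_self p, ?_⟩, hslope p⟩
    by_contra hnot
    have hcontact := hcon (X p) hnot
    rw [hslope] at hcontact
    exact hcontact (mem_ball_zero_iff.1 hp) (hX p)
  exact (measure_ball_pos μH[Module.finrank ℝ E] (0 : E) hρ).ne' (measure_mono_null hball hnull)

end Jensen

section Contact

variable {E : Type*} [NormedAddCommGroup E] [InnerProductSpace ℝ E]

lemma tendsto_smul_nhdsGT_zero (h : E) : Tendsto (fun t : ℝ => t • h) (𝓝[>] 0) (𝓝 0) := by
  have hcont : Continuous fun t : ℝ => t • h := by fun_prop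
  simpa using (hcont.tendsto 0).mono_left nhdsWithin_le_nhds

lemma HasLowerJet.nonpos_of_eventually_le {f : E → ℝ} {x p : E} {q : E → ℝ}
    (hf : HasLowerJet f x p q) (hq : IsQuadratic q)
    (hle : ∀ᶠ h in 𝓝 (0 : E), f (x + h) ≤ f x + ⟪p, h⟫_ℝ) (h : E) : q h ≤ 0 := by
  refine nonpos_of_mul_nonpos_right (le_of_forall_pos_le_add fun ε hε => ?_)
    (one_half_pos (α := ℝ))
  have hlow := hf (ε / (‖h‖ ^ 2 + 1)) (by positivity)
  obtain ⟨t, ⟨hup, hlow⟩, ht : 0 < t⟩ :=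
    (((tendsto_smul_nhdsGT_zero h).eventually (hle.and hlow)).and self_mem_nhdsWithin).exists
  rw [hq.map_smul, norm_smul, mul_pow, Real.norm_eq_abs, sq_abs] at hlow
  have hscaled : t ^ 2 * (1 / 2 * q h) ≤ t ^ 2 * (ε / (‖h‖ ^ 2 + 1) * ‖h‖ ^ 2) := by linarith
  refine (le_of_mul_le_mul_left hscaled (by positivity)).trans ?_
  rw [zero_add, div_mul_eq_mul_div, div_le_iff₀ (by positivity)]
  nlinarith [sq_nonneg ‖h‖]

lemma HasLowerJet.eq_zero_of_isLocalMax {f : E → ℝ} {x p : E} {q : E → ℝ}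
    (hf : HasLowerJet f x p q) (hq : IsQuadratic q) (hmax : IsLocalMax f x) : p = 0 := by
  rw [IsLocalMax, IsMaxFilter, ← map_add_left_nhds_zero, eventually_map] at hmax
  have hslope : ∀ᶠ t : ℝ in 𝓝[>] 0, ‖p‖ ^ 2 ≤ t * (‖p‖ ^ 2 - 1 / 2 * q p) := by
    filter_upwards [(tendsto_smul_nhdsGT_zero p).eventually (hmax.and (hf 1 one_pos)),
      self_mem_nhdsWithin] with t ⟨hup, hlow⟩ (ht : 0 < t)
    rw [hq.map_smul, real_inner_smul_right, real_inner_self_eq_norm_sq, norm_smul, mul_pow,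
      Real.norm_eq_abs, sq_abs] at hlow
    refine le_of_mul_le_mul_left ?_ ht
    linarith
  have hlim : Tendsto (fun t : ℝ => t * (‖p‖ ^ 2 - 1 / 2 * q p)) (𝓝[>] 0) (𝓝 0) :=
    tendsto_smul_nhdsGT_zero (‖p‖ ^ 2 - 1 / 2 * q p)
  simpa using le_antisymm (ge_of_tendsto hlim hslope) (sq_nonneg ‖p‖)

lemma HasUpperJet.neg {f : E → ℝ} {x p : E} {q : E → ℝ} (hf : HasUpperJet (-f) x p q) :
    HasLowerJet f x (-p) fun h => -q h := by
  intro ε hε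
  filter_upwards [hf ε hε] with h hh
  rw [Pi.neg_apply, Pi.neg_apply] at hh
  rw [inner_neg_left]
  linarith

end Contact

section SupConvolution

variable {E : Type*} [NormedAddCommGroup E]

/-- `φ` is the sup-convolution of `f` over `K` with kernel `k / 2 * ‖·‖ ^ 2`, the supremum defining
`φ x` being attained at `Y x`. -/
structure IsSupConvolution (K : Set E) (f : E → ℝ) (k : ℝ) (φ : E → ℝ) (Y : E → E) : Prop where
  mem : ∀ x, Y x ∈ K
  apply_eq : ∀ x, φ x = f (Y x) - k / 2 * ‖x - Y x‖ ^ 2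
  le_apply : ∀ x, ∀ y ∈ K, f y - k / 2 * ‖x - y‖ ^ 2 ≤ φ x

lemma exists_isSupConvolution {K : Set E} (hK : IsCompact K) (hne : K.Nonempty) {f : E → ℝ}
    (hf : UpperSemicontinuousOn f K) (k : ℝ) : ∃ φ Y, IsSupConvolution K f k φ Y := by
  have hker : ∀ x, UpperSemicontinuousOn (fun y => f y + -(k / 2 * ‖x - y‖ ^ 2)) K := fun x =>
    hf.add (Continuous.continuousOn (by fun_prop)).upperSemicontinuousOn
  choose Y hYK hY using fun x => (hker x).exists_isMaxOn hne hK
  exact ⟨_, Y, hYK, fun x => rfl, fun x y hy => by simpa [sub_eq_add_neg] using hY x hy⟩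

namespace IsSupConvolution

variable [InnerProductSpace ℝ E] {K : Set E} {f φ : E → ℝ} {k : ℝ} {Y : E → E}

lemma taylor_le (hφ : IsSupConvolution K f k φ Y) (x z : E) :
    φ x + ⟪k • (Y x - x), z - x⟫_ℝ - k / 2 * ‖z - x‖ ^ 2 ≤ φ z := by
  refine le_trans (le_of_eq ?_) (hφ.le_apply z (Y x) (hφ.mem x))
  rw [hφ.apply_eq x, norm_sub_rev x, show z - Y x = (z - x) - (Y x - x) by abel,
    norm_sub_sq_real (z - x), real_inner_smul_left, real_inner_comm (z - x)]
  ring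

lemma isSubgradientAt (hφ : IsSupConvolution K f k φ Y) (x : E) :
    IsSubgradientAt (fun x => φ x + k / 2 * ‖x‖ ^ 2) (k • Y x) x := by
  intro z
  refine le_trans (le_of_eq ?_) (add_le_add_left (hφ.taylor_le x z) _)
  have hz : ‖z‖ ^ 2 = ‖z - x‖ ^ 2 + 2 * ⟪z - x, x⟫_ℝ + ‖x‖ ^ 2 := by
    rw [← norm_add_sq_real, sub_add_cancel]
  rw [hz, smul_sub, inner_sub_left, real_inner_smul_left x, real_inner_comm x]
  ring

lemma continuous [FiniteDimensional ℝ E] (hφ : IsSupConvolution K f k φ Y) : Continuous φ := by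
  have hconv := (convexOn_univ_of_isSubgradientAt hφ.isSubgradientAt).locallyLipschitz.continuous
  have hnorm : Continuous fun x : E => k / 2 * ‖x‖ ^ 2 := by fun_prop
  exact (hconv.sub hnorm).congr fun x => by simp

lemma exists_null_forall_hasJet [FiniteDimensional ℝ E] [MeasurableSpace E] [BorelSpace E]
    (hφ : IsSupConvolution K f k φ Y) : ∃ N : Set E, μH[Module.finrank ℝ E] N = 0 ∧
      ∀ x ∉ N, ∃ q, HasJet φ x (k • (Y x - x)) q := by
  obtain ⟨N, hN, hjet⟩ := _root_.exists_null_forall_hasJet hφ.isSubgradientAt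
  refine ⟨N, hN, fun x hx => ?_⟩
  obtain ⟨q, hq⟩ := hjet x hx
  refine ⟨_, ((hq.add ((HasJet.norm_sub_sq 0 x).const_mul (-(k / 2)))).congr_fun
    (.of_forall fun y => ?_)).congr ?_ fun h => rfl⟩
  · simp only [sub_zero]
    ring
  · rw [sub_zero, smul_smul, smul_sub, sub_eq_add_neg, ← neg_smul]
    congr 2
    ring

lemma hasUpperJet (hφ : IsSupConvolution K f k φ Y) {x p : E} {q : E → ℝ} (hK : K ∈ 𝓝 (Y x))
    (hq : HasJet φ x p q) : HasUpperJet f (Y x) p q := by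
  intro ε hε
  rw [← map_add_left_nhds_zero] at hK
  filter_upwards [HasUpperJet.of_isLocalMax hq (v := φ) (by simp [IsLocalMax, IsMaxFilter]) ε hε,
    hK] with h hjet hmem
  have hle := hφ.le_apply (x + h) (Y x + h) hmem
  rw [add_sub_add_right_eq_sub] at hle
  linarith [hφ.apply_eq x]

lemma apply_le_of_norm_le (hφ : IsSupConvolution K f k φ Y) (hk : 0 ≤ k) {M : ℝ}
    (hM : ∀ y ∈ K, ‖y‖ ≤ M) (x : E) : φ x ≤ φ 0 + k * M * ‖x‖ - k / 2 * ‖x‖ ^ 2 := by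
  have hzero := hφ.le_apply 0 (Y x) (hφ.mem x)
  have hinner : k * ⟪x, Y x⟫_ℝ ≤ k * (‖x‖ * M) := by
    have := (real_inner_le_norm x (Y x)).trans
      (mul_le_mul_of_nonneg_left (hM _ (hφ.mem x)) (norm_nonneg x))
    gcongr
  rw [zero_sub, norm_neg] at hzero
  rw [hφ.apply_eq, norm_sub_sq_real]
  linarith

variable {f₁ f₂ φ₁ φ₂ : E → ℝ} {Y₁ Y₂ : E → E}

lemma exists_isSupergradientAt_add [FiniteDimensional ℝ E] (h₁ : IsSupConvolution K f₁ k φ₁ Y₁)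
    (h₂ : IsSupConvolution K f₂ k φ₂ Y₂) (hk : 0 < k) (hK : Bornology.IsBounded K) (p : E) :
    ∃ x, IsSupergradientAt (φ₁ + φ₂) p x := by
  obtain ⟨M, hM⟩ := hK.exists_norm_le
  have hcont : Continuous fun x => φ₁ x + φ₂ x - ⟪p, x⟫_ℝ :=
    (h₁.continuous.add h₂.continuous).sub (by fun_prop)
  have hpoly : Tendsto (fun s : ℝ => φ₁ 0 + φ₂ 0 + s * (2 * k * M + ‖p‖ - k * s)) atTop atBot := by
    refine tendsto_atBot_add_const_left _ _ (tendsto_id.atTop_mul_atBot₀ ?_)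
    exact tendsto_atBot_add_const_left _ _
      (tendsto_neg_atTop_atBot.comp (tendsto_id.const_mul_atTop hk))
  have hlim : Tendsto (fun x => φ₁ x + φ₂ x - ⟪p, x⟫_ℝ) (cocompact E) atBot := by
    refine tendsto_atBot_mono (fun x => ?_) (hpoly.comp (tendsto_norm_cocompact_atTop (E := E)))
    have hp := neg_le_of_abs_le (abs_real_inner_le_norm p x)
    simp only [Function.comp_apply]
    linarith [h₁.apply_le_of_norm_le hk.le hM x, h₂.apply_le_of_norm_le hk.le hM x]
  obtain ⟨x, hx⟩ := hcont.exists_forall_ge hlim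
  refine ⟨x, fun z => ?_⟩
  rw [inner_sub_right, Pi.add_apply, Pi.add_apply]
  linarith [hx z]

lemma norm_le_of_add_eq (h₁ : IsSupConvolution K f₁ k φ₁ Y₁)
    (h₂ : IsSupConvolution K f₂ k φ₂ Y₂) {M : ℝ} (hM : ∀ y ∈ K, ‖y‖ ≤ M) (hk : 0 < k)
    {x : E} (hp : ‖k • (Y₁ x - x) + k • (Y₂ x - x)‖ ≤ k) : ‖x‖ ≤ M + 1 := by
  rw [← smul_add, norm_smul, Real.norm_of_nonneg hk.le] at hp
  have hp : ‖(Y₁ x - x) + (Y₂ x - x)‖ ≤ 1 := le_of_mul_le_mul_left (hp.trans_eq (mul_one k).symm) hk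
  have hdouble : ‖(2 : ℝ) • x‖ ≤ ‖Y₁ x‖ + ‖Y₂ x‖ + 1 := by
    rw [show (2 : ℝ) • x = Y₁ x + Y₂ x - ((Y₁ x - x) + (Y₂ x - x)) by rw [two_smul]; abel]
    exact (norm_sub_le _ _).trans (add_le_add (norm_add_le _ _) hp)
  rw [norm_smul, Real.norm_two] at hdouble
  linarith [hM _ (h₁.mem x), hM _ (h₂.mem x)]

lemma add_le_of_isSupergradientAt (h₁ : IsSupConvolution K f₁ k φ₁ Y₁)
    (h₂ : IsSupConvolution K f₂ k φ₂ Y₂) (hk : 0 ≤ k) {p x : E}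
    (hp : IsSupergradientAt (φ₁ + φ₂) p x) {y : E} (hy : y ∈ K) :
    f₁ y + f₂ y + k / 4 * ‖Y₁ x - Y₂ x‖ ^ 2 ≤ f₁ (Y₁ x) + f₂ (Y₂ x) + ‖p‖ * ‖y - x‖ := by
  have hy₁ := h₁.le_apply y y hy
  have hy₂ := h₂.le_apply y y hy
  have hle := hp y
  have hparallel := parallelogram_law_with_norm ℝ (x - Y₁ x) (x - Y₂ x)
  rw [sub_sub_sub_cancel_left, norm_sub_rev (Y₂ x)] at hparallel
  rw [Pi.add_apply, Pi.add_apply, h₁.apply_eq x, h₂.apply_eq x] at hle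
  rw [sub_self, norm_zero] at hy₁ hy₂
  have hsq : k / 4 * ‖Y₁ x - Y₂ x‖ ^ 2 ≤ k / 2 * ‖x - Y₁ x‖ ^ 2 + k / 2 * ‖x - Y₂ x‖ ^ 2 := by
    have := mul_le_mul_of_nonneg_left (mul_self_nonneg ‖x - Y₁ x + (x - Y₂ x)‖) hk
    linear_combination k / 4 * hparallel + 1 / 4 * this
  linarith [real_inner_le_norm p (y - x)]

end IsSupConvolution

end SupConvolution

section CompactCrossing

variable {E : Type*} [NormedAddCommGroup E] {K U : Set E} {u w : E → ℝ}

lemma exists_forall_sub_le (hK : IsCompact K) (hne : K.Nonempty) (hu : LowerSemicontinuousOn u K)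
    (hw : UpperSemicontinuousOn w K) : ∃ D, ∀ y ∈ K, ∀ y' ∈ K, w y' - u y ≤ D := by
  obtain ⟨y', -, hmax⟩ := hw.exists_isMaxOn hne hK
  obtain ⟨y, -, hmin⟩ := hu.exists_isMinOn hne hK
  exact ⟨w y' - u y, fun z hz z' hz' => sub_le_sub (hmax hz') (hmin hz)⟩

lemma exists_forall_norm_sub_lt_mem (hK : IsCompact K) (hU : IsOpen U)
    (hu : LowerSemicontinuousOn u K) (hw : ContinuousOn w K) {τ σ : ℝ} (hσ : τ < σ)
    (hbdry : ∀ x ∈ K \ U, w x - u x ≤ τ) :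
    ∃ r > 0, ∀ y ∈ K, ∀ y' ∈ K, ‖y - y'‖ < r → σ ≤ w y' - u y → y ∈ U ∧ y' ∈ U := by
  set Z := {y ∈ K | u y + -w y ≤ -((σ + τ) / 2)}
  have hZcompact : IsCompact Z := by
    obtain ⟨V, hV, hVe⟩ := lowerSemicontinuousOn_iff_preimage_Iic.1
      (hu.add hw.neg.lowerSemicontinuousOn) (-((σ + τ) / 2))
    have hZV : Z = K ∩ V := hVe
    rw [hZV]
    exact hK.inter_right hV
  have hZU : Z ⊆ U := fun y hy => by
    by_contra hyU
    linarith [hbdry y ⟨hy.1, hyU⟩, hy.2]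
  obtain ⟨r₁, hr₁, hthick⟩ := hZcompact.exists_thickening_subset_open hU hZU
  obtain ⟨r₂, hr₂, hunif⟩ := Metric.uniformContinuousOn_iff.1
    (hK.uniformContinuousOn_of_continuous hw) ((σ - τ) / 2) (by linarith)
  refine ⟨min r₁ r₂, lt_min hr₁ hr₂, fun y hy y' hy' hdist hval => ?_⟩
  rw [← dist_eq_norm, lt_min_iff] at hdist
  have hclose := hunif y hy y' hy' hdist.2
  rw [Real.dist_eq, abs_lt] at hclose
  have hyZ : y ∈ Z := ⟨hy, by linarith [hclose.1]⟩
  exact ⟨hZU hyZ, hthick (mem_thickening_iff.2 ⟨y, hyZ, dist_comm y y' ▸ hdist.1⟩)⟩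

end CompactCrossing

section Doubling

variable {E : Type*} [NormedAddCommGroup E] [InnerProductSpace ℝ E]

/-- No cone opening upwards touches `u` from below at `s`. -/
def NoConeBelow (u : E → ℝ) (s : E) : Prop :=
  ∀ p, ∀ e > 0, ¬ ∀ᶠ z in 𝓝 s, u s + ⟪p, z - s⟫_ℝ + e * ‖z - s‖ ≤ u z

/-- The points `x` such that the paraboloid of vertex `x` and opening `-k` passing through
`(s, u s)` lies below `u` on `K`. -/
def contactSet (K : Set E) (u : E → ℝ) (k : ℝ) (s : E) : Set E :=
  {x | ∀ h, s + h ∈ K → u s + k * ⟪x - s, h⟫_ℝ - k / 2 * ‖h‖ ^ 2 ≤ u (s + h)}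

variable {K U : Set E} {u w : E → ℝ} {k : ℝ} {s : E}

lemma convex_contactSet : Convex ℝ (contactSet K u k s) := by
  intro x hx y hy a b ha hb hab h hh
  have hxh := mul_le_mul_of_nonneg_left (hx h hh) ha
  have hyh := mul_le_mul_of_nonneg_left (hy h hh) hb
  obtain rfl : b = 1 - a := by linarith
  simp only [inner_sub_left, inner_add_left, real_inner_smul_left] at hxh hyh ⊢
  linarith

lemma interior_contactSet_eq_empty (hK : K ∈ 𝓝 s) (hs : NoConeBelow u s) (hk : 0 < k) :
    interior (contactSet K u k s) = ∅ := by
  by_contra hne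
  obtain ⟨x, hx⟩ := nonempty_iff_ne_empty.2 hne
  obtain ⟨e, he, hball⟩ := Metric.mem_nhds_iff.1 (mem_interior_iff_mem_nhds.1 hx)
  refine hs (k • (x - s)) (k * (e / 4)) (by positivity) ?_
  rw [← map_add_left_nhds_zero] at hK ⊢
  rw [eventually_map]
  filter_upwards [hK, ball_mem_nhds 0 (half_pos he)] with h hhK hhe
  rw [mem_ball_zero_iff] at hhe
  rw [add_sub_cancel_left]
  rcases eq_or_ne h 0 with rfl | hh
  · simp
  have hpos : 0 < ‖h‖ := norm_pos_iff.2 hh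
  have hmem : x + (e / 2 / ‖h‖) • h ∈ contactSet K u k s := hball <| by
    rw [mem_ball, dist_eq_norm, add_sub_cancel_left, norm_smul, Real.norm_of_nonneg (by positivity),
      div_mul_cancel₀ _ hpos.ne']
    linarith
  have hle := hmem h hhK
  have hcancel : e / 2 / ‖h‖ * ‖h‖ ^ 2 = e / 2 * ‖h‖ := by field_simp
  rw [add_sub_right_comm x, inner_add_left, real_inner_smul_left, real_inner_self_eq_norm_sq,
    hcancel] at hle
  rw [real_inner_smul_left]
  have hsmall : k * ‖h‖ ^ 2 ≤ k * (e / 2 * ‖h‖) := by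
    rw [sq]
    gcongr
  linarith

lemma hausdorffMeasure_contactSet_eq_zero [FiniteDimensional ℝ E] [MeasurableSpace E]
    [BorelSpace E] (hK : K ∈ 𝓝 s) (hs : NoConeBelow u s) (hk : 0 < k) :
    μH[Module.finrank ℝ E] (contactSet K u k s) = 0 := by
  refine measure_mono_null ?_
    ((convex_contactSet (K := K) (u := u) (k := k) (s := s)).addHaar_frontier _)
  rw [frontier, interior_contactSet_eq_empty hK hs hk, sdiff_empty]
  exact subset_closure

lemma IsSupConvolution.mem_contactSet {φ : E → ℝ} {Y : E → E} (hφ : IsSupConvolution K (-u) k φ Y)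
    (x : E) : x ∈ contactSet K u k (Y x) := by
  intro h hh
  have hle := hφ.le_apply x _ hh
  rw [hφ.apply_eq, ← sub_sub, norm_sub_sq_real (x - Y x), Pi.neg_apply, Pi.neg_apply] at hle
  linarith

lemma mobiusForm_le_of_le {p₁ p₂ h : E} {q₁ q₂ : E → ℝ} (hq : q₂ h ≤ q₁ h) {ρ B : ℝ}
    (hp : ‖p₂ - p₁‖ ≤ ρ) (hρ : ρ ≤ 1) (hB : ‖p₁‖ ≤ B) :
    mobiusForm p₁ q₁ h ≤ mobiusForm p₂ q₂ h + ρ * (3 * B + 1) * ‖h‖ ^ 2 := by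
  obtain ⟨d, rfl⟩ : ∃ d, p₂ = p₁ + d := ⟨p₂ - p₁, by abel⟩
  rw [add_sub_cancel_left] at hp
  have hρ0 : 0 ≤ ρ := (norm_nonneg d).trans hp
  have hB0 : 0 ≤ B := (norm_nonneg p₁).trans hB
  have hmixed : -(⟪p₁, h⟫_ℝ * ⟪d, h⟫_ℝ) ≤ (B * ‖h‖) * (ρ * ‖h‖) := by
    refine (neg_le_abs _).trans ?_
    rw [abs_mul]
    gcongr
    · exact (abs_real_inner_le_norm p₁ h).trans (by gcongr)
    · exact (abs_real_inner_le_norm d h).trans (by gcongr)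
  have hcross : ⟪p₁, d⟫_ℝ * ‖h‖ ^ 2 ≤ B * ρ * ‖h‖ ^ 2 := by
    gcongr
    exact (real_inner_le_norm p₁ d).trans (by gcongr)
  have hsq : ‖d‖ ^ 2 * ‖h‖ ^ 2 ≤ ρ * ‖h‖ ^ 2 := by
    gcongr
    exact (pow_le_pow_left₀ (norm_nonneg d) hp 2).trans (pow_le_of_le_one hρ0 hρ two_ne_zero)
  have hρh : 0 ≤ ρ * ‖h‖ ^ 2 := by positivity
  unfold mobiusForm
  rw [inner_add_left, norm_add_sq_real]
  linarith [sq_nonneg ⟪d, h⟫_ℝ]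

variable [FiniteDimensional ℝ E]

lemma IsSupConvolution.exists_hasJet_add [MeasurableSpace E] [BorelSpace E]
    {f₁ f₂ φ₁ φ₂ : E → ℝ} {Y₁ Y₂ : E → E} (h₁ : IsSupConvolution K f₁ k φ₁ Y₁)
    (h₂ : IsSupConvolution K f₂ k φ₂ Y₂) (hk : 0 < k) (hK : Bornology.IsBounded K) {N : Set E}
    (hN : μH[Module.finrank ℝ E] N = 0) {ρ : ℝ} (hρ : 0 < ρ) :
    ∃ x ∉ N, ∃ q₁ q₂, HasJet φ₁ x (k • (Y₁ x - x)) q₁ ∧ HasJet φ₂ x (k • (Y₂ x - x)) q₂ ∧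
      (∀ h, q₁ h + q₂ h ≤ 0) ∧ ‖k • (Y₁ x - x) + k • (Y₂ x - x)‖ < ρ ∧
      IsSupergradientAt (φ₁ + φ₂) (k • (Y₁ x - x) + k • (Y₂ x - x)) x := by
  obtain ⟨N₁, hN₁, hjet₁⟩ := h₁.exists_null_forall_hasJet
  obtain ⟨N₂, hN₂, hjet₂⟩ := h₂.exists_null_forall_hasJet
  obtain ⟨x, hxN, hpρ, hmax⟩ := exists_isSupergradientAt_notMem (F := φ₁ + φ₂)
    (g := fun x => k • (Y₁ x - x) + k • (Y₂ x - x)) hk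
    (fun x z => by
      rw [inner_add_left, Pi.add_apply, Pi.add_apply]
      linarith [h₁.taylor_le x z, h₂.taylor_le x z])
    (h₁.exists_isSupergradientAt_add h₂ hk hK)
    (measure_union_null hN (measure_union_null hN₁ hN₂)) hρ
  simp only [mem_union, not_or] at hxN
  obtain ⟨q₁, hq₁⟩ := hjet₁ x hxN.2.1
  obtain ⟨q₂, hq₂⟩ := hjet₂ x hxN.2.2
  have hsum : HasJet (φ₁ + φ₂) x _ _ := hq₁.add hq₂
  have hlow : HasLowerJet (φ₁ + φ₂) x _ _ :=
    .of_isLocalMin hsum (by simp [IsLocalMin, IsMinFilter])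
  exact ⟨x, hxN.1, q₁, q₂, hq₁, hq₂, hlow.nonpos_of_eventually_le hsum.1
    (.of_forall fun h => by simpa using hmax (x + h)), hpρ, hmax⟩

/-- The theorem on sums: `k` penalises the distance of `y₁` and `y₂`, and Jensen's lemma yields a
nearby maximum point at which both sup-convolutions are twice differentiable. -/
lemma exists_hasLowerJet_hasUpperJet {S : Set E} (hK : IsCompact K) (hne : K.Nonempty)
    (hS : S.Countable) (hKS : ∀ s ∈ S, K ∈ 𝓝 s) (hu : LowerSemicontinuousOn u K)
    (hw : UpperSemicontinuousOn w K) (hcone : ∀ s ∈ S, NoConeBelow u s) {M : ℝ}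
    (hM : ∀ y ∈ K, ‖y‖ ≤ M) (hk : 0 < k) {ρ : ℝ} (hρ : 0 < ρ) (hρk : ρ ≤ k) :
    ∃ y₁ ∈ K \ S, ∃ y₂ ∈ K, ∃ p₁ p₂ : E, ∃ q₁ q₂ : E → ℝ,
      ‖p₂ - p₁‖ < ρ ∧ ‖p₁‖ ≤ k * (2 * M + 1) ∧ IsQuadratic q₁ ∧ IsQuadratic q₂ ∧
      (∀ h, q₂ h ≤ q₁ h) ∧ (K ∈ 𝓝 y₁ → HasLowerJet u y₁ p₁ q₁) ∧
      (K ∈ 𝓝 y₂ → HasUpperJet w y₂ p₂ q₂) ∧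
      ∀ y ∈ K, w y - u y + k / 4 * ‖y₁ - y₂‖ ^ 2 ≤ w y₂ - u y₁ + ρ * (2 * M + 1) := by
  borelize E
  obtain ⟨φ₁, Y₁, h₁⟩ := exists_isSupConvolution hK hne hu.neg k
  obtain ⟨φ₂, Y₂, h₂⟩ := exists_isSupConvolution hK hne hw k
  have hN : μH[Module.finrank ℝ E] (⋃ s ∈ S, contactSet K u k s) = 0 :=
    (measure_biUnion_null_iff hS).2 fun s hs =>
      hausdorffMeasure_contactSet_eq_zero (hKS s hs) (hcone s hs) hk
  obtain ⟨x, hxN, q₁, q₂, hq₁, hq₂, hsum, hpρ, hmax⟩ :=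
    h₁.exists_hasJet_add h₂ hk hK.isBounded hN hρ
  have hnorm : ∀ y ∈ K, ‖y - x‖ ≤ 2 * M + 1 := fun y hy => (norm_sub_le _ _).trans <| by
    linarith [hM y hy, h₁.norm_le_of_add_eq h₂ hM hk (hpρ.le.trans hρk)]
  refine ⟨Y₁ x, ⟨h₁.mem x, fun hs => hxN (mem_iUnion₂_of_mem hs (h₁.mem_contactSet x))⟩, Y₂ x,
    h₂.mem x, _, _, _, q₂, ?_, ?_, ?_, hq₂.1, fun h => ?_,
    fun hy => (h₁.hasUpperJet hy hq₁).neg, fun hy => h₂.hasUpperJet hy hq₂, fun y hy => ?_⟩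
  · rwa [sub_neg_eq_add, add_comm]
  · rw [norm_neg, norm_smul, Real.norm_of_nonneg hk.le]
    exact mul_le_mul_of_nonneg_left (hnorm _ (h₁.mem x)) hk.le
  · simpa using IsQuadratic.zero.sub hq₁.1
  · linarith [hsum h]
  · have hle := h₁.add_le_of_isSupergradientAt h₂ hk.le hmax hy
    have hslope := mul_le_mul hpρ.le (hnorm y hy) (norm_nonneg _) hρ.le
    rw [Pi.neg_apply, Pi.neg_apply] at hle
    linarith

lemma exists_pos_mul_le {a b k A B : ℝ} (hk : 0 < k) (ha : 0 < a) (hb : 0 < b) (hA : 0 < A)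
    (hB : 0 < B) : ∃ ρ > 0, ρ ≤ 1 ∧ ρ ≤ k ∧ ρ * A ≤ a ∧ ρ * B ≤ b := by
  refine ⟨min (min 1 k) (min (a / A) (b / B)), by positivity, ?_⟩
  rw [← le_div_iff₀ hA, ← le_div_iff₀ hB]
  simp

lemma sub_le_of_strict {G : Set (E → ℝ)} (hG : IsEllipticCone G) {S : Set E} (hK : IsCompact K)
    (hU : IsOpen U) (hUK : U ⊆ K) (hS : S.Countable) (hSU : S ⊆ U)
    (hu : LowerSemicontinuousOn u K) (hw : ContinuousOn w K) (hsup : JetSupersol G (U \ S) u)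
    (hcone : ∀ s ∈ S, NoConeBelow u s) {c τ : ℝ} (hc : 0 < c)
    (hstrict : ∀ x ∈ U, ∀ p q, IsQuadratic q → HasUpperJet w x p q →
      (fun h => mobiusForm p q h + c * ‖h‖ ^ 2) ∉ G)
    (hbdry : ∀ x ∈ K \ U, w x - u x ≤ τ) {x : E} (hx : x ∈ K) : w x - u x ≤ τ := by
  by_contra! hcon
  obtain ⟨σ, hτσ, hσ⟩ := exists_between hcon
  obtain ⟨r, hr, hmemU⟩ := exists_forall_norm_sub_lt_mem hK hU hu hw hτσ hbdry
  obtain ⟨M, hM0, hM⟩ := hK.isBounded.exists_pos_norm_le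
  obtain ⟨D, hD⟩ := exists_forall_sub_le hK ⟨x, hx⟩ hu hw.upperSemicontinuousOn
  obtain ⟨k, hk, hkr⟩ : ∃ k > 0, D - σ < k / 4 * r ^ 2 := by
    refine ⟨4 * (|D - σ| + 1) / r ^ 2, by positivity, ?_⟩
    field_simp
    linarith [le_abs_self (D - σ)]
  obtain ⟨ρ, hρ, hρ1, hρk, hρσ, hρc⟩ := exists_pos_mul_le hk (sub_pos.2 hσ) (half_pos hc)
    (show 0 < 2 * M + 1 by positivity) (show 0 < 3 * (k * (2 * M + 1)) + 1 by positivity)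
  obtain ⟨y₁, hy₁, y₂, hy₂, p₁, p₂, q₁, q₂, hp, hp₁, hq₁, hq₂, hq, hjet₁, hjet₂, hmax⟩ :=
    exists_hasLowerJet_hasUpperJet hK ⟨x, hx⟩ hS
      (fun s hs => mem_of_superset (hU.mem_nhds (hSU hs)) hUK) hu hw.upperSemicontinuousOn hcone
      hM hk hρ hρk
  have hval : σ ≤ w y₂ - u y₁ := by
    have : 0 ≤ k / 4 * ‖y₁ - y₂‖ ^ 2 := by positivity
    linarith [hmax x hx]
  have hdist : ‖y₁ - y₂‖ < r := by
    refine lt_of_pow_lt_pow_left₀ 2 hr.le (lt_of_mul_lt_mul_left (a := k / 4) ?_ (by positivity))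
    linarith [hmax x hx, hD y₁ hy₁.1 y₂ hy₂]
  obtain ⟨hyU₁, hyU₂⟩ := hmemU y₁ hy₁.1 y₂ hy₂ hdist hval
  have hmem₁ := hsup y₁ ⟨hyU₁, hy₁.2⟩ p₁ q₁ hq₁
    (hjet₁ (mem_of_superset (hU.mem_nhds hyU₁) hUK)) (c / 2) (by positivity)
  refine hstrict y₂ hyU₂ p₂ q₂ hq₂ (hjet₂ (mem_of_superset (hU.mem_nhds hyU₂) hUK))
    (hG.mem_of_le hmem₁ fun h => ?_)
  have hle := mobiusForm_le_of_le (hq h) hp.le hρ1 hp₁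
  have hsmall := mul_le_mul_of_nonneg_right hρc (sq_nonneg ‖h‖)
  linarith

end Doubling

section Comparison

variable {E : Type*} [NormedAddCommGroup E] [InnerProductSpace ℝ E] {u v w f g : E → ℝ}
  {x p P : E} {q Q : E → ℝ}

lemma HasLowerJet.congr_fun (hf : HasLowerJet f x p q) (hg : g =ᶠ[𝓝 x] f) :
    HasLowerJet g x p q := by
  intro ε hε
  rw [← map_add_left_nhds_zero, EventuallyEq, eventually_map] at hg
  filter_upwards [hf ε hε, hg] with h hfh hgh
  rwa [hgh, show g x = f x by simpa using hg.self_of_nhds]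

lemma HasLowerJet.add_hasJet (hf : HasLowerJet f x p q) (hg : HasJet g x P Q) :
    HasLowerJet (fun y => f y + g y) x (p + P) fun h => q h + Q h := by
  intro ε hε
  filter_upwards [hf (ε / 2) (half_pos hε), hg.2.bound (half_pos hε)] with h hfh hgh
  rw [Real.norm_eq_abs, Real.norm_of_nonneg (sq_nonneg ‖h‖)] at hgh
  rw [inner_add_left]
  linarith [(abs_le.1 hgh).1]

lemma HasUpperJet.exp_neg (hv : HasUpperJet v x p q) (hq : IsQuadratic q) :
    HasLowerJet (fun y => Real.exp (-v y)) x (-Real.exp (-v x) • p)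
      fun h => Real.exp (-v x) * (⟪p, h⟫_ℝ ^ 2 - q h) := by
  intro ε hε
  obtain ⟨φ, hφ, hφx, hmax⟩ := hv.exists_hasJet hq (ε := ε * Real.exp (v x)) (by positivity)
  have hjet := hφ.comp_left (.exp_const_mul (-1) (φ x))
  have hlow : HasLowerJet (fun y => Real.exp (-v y)) x _ _ := .of_isLocalMin hjet <| by
    filter_upwards [hmax] with y hy
    simp only [Pi.sub_apply, hφx, sub_self, sub_nonpos, neg_one_mul, sub_nonneg,
      Real.exp_le_exp, neg_le_neg_iff] at hy ⊢
    exact hy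
  filter_upwards [hlow (ε / 2) (half_pos hε)] with h hh
  have hcancel : Real.exp (-v x) * Real.exp (v x) = 1 := by rw [← Real.exp_add]; simp
  simp only [hφx, neg_one_mul, real_inner_smul_left] at hh ⊢
  linear_combination hh + ε / 2 * ‖h‖ ^ 2 * hcancel

lemma HasLowerJet.neg_log (hw : HasLowerJet w x P Q) (hQ : IsQuadratic Q) (hpos : 0 < w x) :
    HasUpperJet (fun y => -Real.log (w y)) x (-(w x)⁻¹ • P)
      fun h => (w x ^ 2)⁻¹ * ⟪P, h⟫_ℝ ^ 2 - (w x)⁻¹ * Q h := by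
  intro ε hε
  obtain ⟨φ, hφ, hφx, hmin⟩ := hw.exists_hasJet hQ (ε := ε * w x) (by positivity)
  have hjet := (hφ.comp_left (.log (hφx ▸ hpos))).const_mul (-1)
  have hcont : Tendsto φ (𝓝 x) (𝓝 (φ x)) := by
    rw [← tendsto_sub_nhds_zero_iff, ← map_add_left_nhds_zero, tendsto_map'_iff]
    exact hφ.isBigO_sub.trans_tendsto tendsto_norm_zero
  have hup : HasUpperJet (fun y => -Real.log (w y)) x _ _ := .of_isLocalMax hjet <| by
    filter_upwards [hmin, hcont.eventually_const_lt (hφx ▸ hpos)] with y hy hφy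
    simp only [Pi.sub_apply, hφx, sub_self, sub_nonneg] at hy ⊢
    linarith [Real.log_le_log hφy hy]
  filter_upwards [hup (ε / 2) (half_pos hε)] with h hh
  have hcancel : (w x)⁻¹ * w x = 1 := inv_mul_cancel₀ hpos.ne'
  simp only [hφx, real_inner_smul_left] at hh ⊢
  linear_combination hh + ε / 2 * ‖h‖ ^ 2 * hcancel

/-- With `v = -log w`, where `w`, `∇w`, `∇²w` are `a`, `P`, `Q`. -/
lemma mobiusForm_neg_log (P : E) (Q : E → ℝ) (a : ℝ) (h : E) :
    mobiusForm (-a⁻¹ • P) (fun h => (a ^ 2)⁻¹ * ⟪P, h⟫_ℝ ^ 2 - a⁻¹ * Q h) h =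
      a⁻¹ * Q h - 1 / 2 * (‖P‖ ^ 2 / a ^ 2) * ‖h‖ ^ 2 := by
  unfold mobiusForm
  rw [norm_smul, mul_pow, Real.norm_eq_abs, sq_abs, real_inner_smul_left]
  ring

lemma norm_add_sq_div_add_le {s t : ℝ} (hs : 0 < s) (ht : 0 < t) (a b : E) :
    ‖a + b‖ ^ 2 / (s + t) ≤ ‖a‖ ^ 2 / s + ‖b‖ ^ 2 / t := by
  rw [div_add_div _ _ hs.ne' ht.ne', div_le_div_iff₀ (by positivity) (by positivity),
    norm_add_sq_real]
  have hsq := sq_nonneg ‖t • a - s • b‖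
  rw [norm_sub_sq_real, norm_smul, norm_smul, real_inner_smul_left, real_inner_smul_right,
    Real.norm_of_nonneg hs.le, Real.norm_of_nonneg ht.le] at hsq
  linarith

lemma mul_mobiusForm_add_le {a m η : ℝ} (ha : 0 < a) (hm : 0 < m) (hη : 0 ≤ η)
    (hx : 2 * η * ‖x‖ ^ 2 ≤ m) (h : E) :
    a / (a + m) * mobiusForm p q h + η / (a + m) * ‖h‖ ^ 2 ≤
      (a + m)⁻¹ * (a * (⟪p, h⟫_ℝ ^ 2 - q h) + 2 * η * ‖h‖ ^ 2) -
        1 / 2 * (‖-a • p + (2 * η) • x‖ ^ 2 / (a + m) ^ 2) * ‖h‖ ^ 2 := by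
  have hsplit := norm_add_sq_div_add_le ha hm (-a • p) ((2 * η) • x)
  have hgrad : ‖-a • p + (2 * η) • x‖ ^ 2 / (a + m) ≤ a * ‖p‖ ^ 2 + 2 * η := by
    refine hsplit.trans (add_le_add (le_of_eq ?_) ?_)
    · rw [norm_smul, norm_neg, Real.norm_of_nonneg ha.le]
      field_simp
    · rw [norm_smul, Real.norm_of_nonneg (by positivity), div_le_iff₀ hm]
      nlinarith
  have hscaled : ‖-a • p + (2 * η) • x‖ ^ 2 / (a + m) ^ 2 * ‖h‖ ^ 2 ≤
      (a * ‖p‖ ^ 2 + 2 * η) / (a + m) * ‖h‖ ^ 2 := by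
    rw [sq (a + m), ← div_div]
    gcongr
  unfold mobiusForm
  linear_combination 1 / 2 * hscaled

lemma HasUpperJet.exp_neg_add_paraboloid (hup : HasUpperJet w x p q) (hq : IsQuadratic q) {η A : ℝ}
    (hw : ∀ᶠ y in 𝓝 x, Real.exp (-v y) = Real.exp (-w y) + η * (A + ‖y‖ ^ 2)) :
    HasLowerJet (fun y => Real.exp (-v y)) x (-Real.exp (-w x) • p + (2 * η) • x)
      fun h => Real.exp (-w x) * (⟪p, h⟫_ℝ ^ 2 - q h) + 2 * η * ‖h‖ ^ 2 := by
  have hparab : HasJet (fun y => η * (A + ‖y‖ ^ 2)) x ((2 * η) • x)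
      fun h => 2 * η * ‖h‖ ^ 2 :=
    ((((HasJet.const A x).add (.norm_sub_sq 0 x)).const_mul η).congr_fun
      (.of_forall fun y => by simp)).congr (by module) fun h => by ring
  exact ((hup.exp_neg hq).add_hasJet hparab).congr_fun hw

lemma JetSubsol.notMem_of_exp_neg_add_eq {G : Set (E → ℝ)} {U : Set E} (hv : JetSubsol G U v)
    (hG : IsEllipticCone G) {η A W : ℝ} (hη : 0 < η) (hA : 0 < A)
    (hw : ∀ᶠ y in 𝓝 x, Real.exp (-v y) = Real.exp (-w y) + η * (A + ‖y‖ ^ 2)) (hx : x ∈ U)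
    (hxA : ‖x‖ ^ 2 ≤ A) (hxW : Real.exp (-v x) ≤ W) (hq : IsQuadratic q)
    (hup : HasUpperJet w x p q) : (fun h => mobiusForm p q h + η / W * ‖h‖ ^ 2) ∉ G := by
  intro hmem
  have hvx := hw.self_of_nhds
  have hpp := IsQuadratic.inner_mul_inner p p
  have hPP := IsQuadratic.inner_mul_inner (-Real.exp (-w x) • p + (2 * η) • x)
    (-Real.exp (-w x) • p + (2 * η) • x)
  simp only [← sq] at hpp hPP
  have hQ := ((hpp.sub hq).const_mul (Real.exp (-w x))).add (IsQuadratic.norm_sq.const_mul (2 * η))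
  have hvjet := (hup.exp_neg_add_paraboloid hq hw).neg_log hQ (Real.exp_pos _)
  simp only [Real.log_exp, neg_neg] at hvjet
  refine hv x hx _ _ ((hPP.const_mul _).sub (hQ.const_mul _)) hvjet
    (hG.mem_of_le (hG.smul_mem (div_pos (Real.exp_pos (-w x)) (Real.exp_pos (-v x))) hmem)
      fun h => ?_)
  rw [mobiusForm_neg_log]
  have hle := mul_mobiusForm_add_le (p := p) (q := q) (Real.exp_pos (-w x))
    (m := η * (A + ‖x‖ ^ 2)) (by positivity) hη.le (x := x) (by nlinarith) h
  rw [← hvx] at hle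
  have hW : 0 < W := (Real.exp_pos _).trans_le hxW
  have hconst : Real.exp (-w x) / Real.exp (-v x) * (η / W) ≤ 1 * (η / Real.exp (-v x)) := by
    gcongr
    rw [div_le_one (Real.exp_pos _), hvx]
    exact le_add_of_nonneg_right (by positivity)
  linarith [mul_le_mul_of_nonneg_right hconst (sq_nonneg ‖h‖)]

variable {G : Set (E → ℝ)} {K U S : Set E}

lemma JetSubsol.exists_strict_approximation (hv : JetSubsol G U v) (hG : IsEllipticCone G)
    (hK : IsCompact K) (hU : IsOpen U) (hUK : U ⊆ K) (hvK : ContinuousOn v K) {θ : ℝ}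
    (hθ : 0 < θ) : ∃ w, ContinuousOn w K ∧ (∀ y ∈ K, v y ≤ w y ∧ w y ≤ v y + θ) ∧
      ∃ c > 0, ∀ x ∈ U, ∀ p q, IsQuadratic q → HasUpperJet w x p q →
        (fun h => mobiusForm p q h + c * ‖h‖ ^ 2) ∉ G := by
  obtain ⟨R, hR0, hR⟩ := hK.isBounded.exists_pos_norm_le
  have hRsq : ∀ y ∈ K, ‖y‖ ^ 2 ≤ R ^ 2 := fun y hy => pow_le_pow_left₀ (norm_nonneg y) (hR y hy) 2
  obtain ⟨C, hC⟩ := hK.exists_bound_of_continuousOn hvK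
  obtain ⟨η, hη, hηθ⟩ : ∃ η > 0, η * (R ^ 2 + R ^ 2) ≤ Real.exp (-C) * (1 - Real.exp (-θ)) := by
    have : 0 < 1 - Real.exp (-θ) := by simpa using hθ
    exact ⟨Real.exp (-C) * (1 - Real.exp (-θ)) / (R ^ 2 + R ^ 2), by positivity,
      (div_mul_cancel₀ _ (by positivity)).le⟩
  have hlow : ∀ y ∈ K, Real.exp (-(v y + θ)) ≤ Real.exp (-v y) - η * (R ^ 2 + ‖y‖ ^ 2) := by
    intro y hy
    have hmono : η * (R ^ 2 + ‖y‖ ^ 2) ≤ η * (R ^ 2 + R ^ 2) := by gcongr; exact hR y hy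
    have hexp : Real.exp (-C) * (1 - Real.exp (-θ)) ≤ Real.exp (-v y) * (1 - Real.exp (-θ)) := by
      gcongr
      · simpa using hθ.le
      · exact (abs_le.1 (hC y hy)).2
    rw [neg_add, Real.exp_add]
    linarith
  have hpos : ∀ y ∈ K, 0 < Real.exp (-v y) - η * (R ^ 2 + ‖y‖ ^ 2) := fun y hy =>
    (Real.exp_pos _).trans_le (hlow y hy)
  refine ⟨fun y => -Real.log (Real.exp (-v y) - η * (R ^ 2 + ‖y‖ ^ 2)), ?_, fun y hy => ⟨?_, ?_⟩,
    η / Real.exp C, by positivity, fun x hx p q hq hup =>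
      hv.notMem_of_exp_neg_add_eq hG hη (by positivity) ?_ hx (hRsq x (hUK hx)) ?_ hq hup⟩
  · exact ((hvK.neg.rexp.sub (by fun_prop)).log fun y hy => (hpos y hy).ne').neg
  · rw [le_neg, Real.log_le_iff_le_exp (hpos y hy)]
    exact sub_le_self _ (by positivity)
  · rw [neg_le, Real.le_log_iff_exp_le (hpos y hy)]
    exact hlow y hy
  · filter_upwards [hU.mem_nhds hx] with y hy
    rw [neg_neg, Real.exp_log (hpos y (hUK hy)), sub_add_cancel]
  · rw [Real.exp_le_exp, neg_le]
    exact (abs_le.1 (hC x (hUK hx))).1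

theorem JetSubsol.le_of_jetSupersol [FiniteDimensional ℝ E] (hv : JetSubsol G U v)
    (hG : IsEllipticCone G) (hK : IsCompact K) (hU : IsOpen U) (hUK : U ⊆ K) (hS : S.Countable)
    (hSU : S ⊆ U) (hu : LowerSemicontinuousOn u K) (hvK : ContinuousOn v K)
    (hsup : JetSupersol G (U \ S) u) (hcone : ∀ s ∈ S, NoConeBelow u s)
    (hbdry : ∀ x ∈ K \ U, v x ≤ u x) : ∀ x ∈ K, v x ≤ u x := by
  refine fun x hx => le_of_forall_pos_le_add fun θ hθ => ?_
  obtain ⟨w, hw, hvw, c, hc, hstrict⟩ := hv.exists_strict_approximation hG hK hU hUK hvK hθ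
  linarith [(hvw x hx).1, sub_le_of_strict hG hK hU hUK hS hSU hu hw hsup hcone hc hstrict
    (τ := θ) (fun y hy => by linarith [hbdry y hy, (hvw y hy.1).2]) hx]

end Comparison

section IsolatedSingularities

variable {E : Type*} [NormedAddCommGroup E] {K S : Set E} {w : E → ℝ} {s : E}

open Classical in
/-- `w` with its values on `S` replaced by the lower limits, which makes it lower semicontinuous at
the points of a finite set `S`. -/
def liminfExtension (S : Set E) (w : E → ℝ) : E → ℝ :=
  S.piecewise (fun s => liminf w (𝓝[≠] s)) w

lemma liminfExtension_of_notMem (hs : s ∉ S) : liminfExtension S w s = w s := by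
  classical exact piecewise_eq_of_notMem _ _ _ hs

lemma liminfExtension_of_mem (hs : s ∈ S) : liminfExtension S w s = liminf w (𝓝[≠] s) := by
  classical exact piecewise_eq_of_mem _ _ _ hs

lemma liminfExtension_eventuallyEq (hS : IsClosed S) (hs : s ∉ S) :
    liminfExtension S w =ᶠ[𝓝 s] w :=
  eventually_of_mem (hS.isOpen_compl.mem_nhds hs) fun _ hz => liminfExtension_of_notMem hz

lemma liminfExtension_eventuallyEq_nhdsNE (hS : S.Finite) (s : E) :
    liminfExtension S w =ᶠ[𝓝[≠] s] w := by
  have hSs : Sᶜ ∈ 𝓝[≠] s := by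
    simpa [mem_codiscrete, disjoint_principal_right] using
      mem_codiscrete.1 hS.compl_mem_codiscrete s
  exact eventually_of_mem hSs fun _ hz => liminfExtension_of_notMem hz

lemma lowerSemicontinuousOn_liminfExtension (hS : S.Finite) (hw : ContinuousOn w (K \ S))
    (hbdd : ∀ s ∈ S, (𝓝[≠] s).IsBoundedUnder (· ≥ ·) w) :
    LowerSemicontinuousOn (liminfExtension S w) K := by
  intro x hx m hm
  by_cases hxS : x ∈ S
  · have hlt := hm
    rw [liminfExtension_of_mem hxS] at hlt
    have hpunct : ∀ᶠ z in 𝓝[≠] x, m < liminfExtension S w z := by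
      filter_upwards [eventually_lt_of_lt_liminf hlt (hbdd x hxS),
        liminfExtension_eventuallyEq_nhdsNE hS x] with z hz heq
      rwa [heq]
    refine nhdsWithin_le_nhds ?_
    filter_upwards [eventually_nhdsWithin_iff.1 hpunct] with z hz
    obtain rfl | hzx := eq_or_ne z x
    exacts [hm, hz hzx]
  · rw [liminfExtension_of_notMem hxS] at hm
    have hcont := (hw x ⟨hx, hxS⟩).eventually_const_lt hm
    rw [eventually_nhdsWithin_iff] at hcont ⊢
    filter_upwards [hcont, liminfExtension_eventuallyEq hS.isClosed hxS,
      hS.isClosed.isOpen_compl.mem_nhds hxS] with z hz heq hzS hzK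
    exact heq ▸ hz ⟨hzK, hzS⟩

variable [InnerProductSpace ℝ E] {u v : E → ℝ} {G : Set (E → ℝ)} {Ω U : Set E}

lemma JetSupersol.congr (hu : JetSupersol G Ω u) (h : ∀ x ∈ Ω, u =ᶠ[𝓝 x] w) :
    JetSupersol G Ω w := fun x hx p q hq hjet =>
  hu x hx p q hq (hjet.congr_fun (h x hx))

lemma JetSupersol.min_const (hu : JetSupersol G Ω u) (hG : IsEllipticCone G) (N : ℝ) :
    JetSupersol G Ω fun y => min (u y) N := by
  intro x hx p q hq hjet ε hε
  rcases le_or_gt (u x) N with hle | hlt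
  · refine hu x hx p q hq (fun ε' hε' => (hjet ε' hε').mono fun h hh => ?_) ε hε
    simp only [min_eq_left hle] at hh
    exact hh.trans (min_le_left _ _)
  · have hconst : HasLowerJet (fun _ => N) x p q := fun ε' hε' =>
      (hjet ε' hε').mono fun h hh => by
        simp only [min_eq_right hlt.le] at hh
        exact hh.trans (min_le_right _ _)
    obtain rfl := hconst.eq_zero_of_isLocalMax hq isLocalMax_const
    refine hG.mem_of_le (hG.smul_mem hε hG.norm_sq_mem) fun h => ?_
    have hq0 := hconst.nonpos_of_eventually_le hq (by simp) h
    simp only [mobiusForm, inner_zero_left, norm_zero]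
    linarith

/-- If an upward cone with vertex value `m` touches `u` from below at the isolated singularity `s`,
then `u` exceeds `m` by a fixed amount near `s`. -/
def NoConeAtSingularity (u : E → ℝ) (s : E) : Prop :=
  ∀ m p, ∀ e > 0, (∀ᶠ z in 𝓝[≠] s, m + ⟪p, z - s⟫_ℝ + e * ‖z - s‖ ≤ u z) →
    ∃ m' > m, ∀ᶠ z in 𝓝[≠] s, m' ≤ u z

variable [Nontrivial E]

-- Reflecting the inequality in `s` cancels the linear term.
lemma not_eventually_inner_add_mul_norm_nonpos (p : E) {e : ℝ} (he : 0 < e) :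
    ¬∀ᶠ z in 𝓝[≠] s, ⟪p, z - s⟫_ℝ + e * ‖z - s‖ ≤ 0 := by
  intro hle
  have : NeBot (𝓝[≠] s) := Module.punctured_nhds_neBot ℝ E s
  have hreflect : Tendsto (fun z => s - (z - s)) (𝓝[≠] s) (𝓝[≠] s) := by
    refine tendsto_nhdsWithin_iff.2 ⟨(Continuous.tendsto' (by fun_prop) _ _ (by simp)).mono_left
      nhdsWithin_le_nhds, eventually_mem_nhdsWithin.mono fun z hz => ?_⟩
    rwa [mem_compl_singleton_iff, ne_eq, sub_eq_self, sub_eq_zero]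
  obtain ⟨z, ⟨hz, hz'⟩, hne⟩ := ((hle.and (hreflect.eventually hle)).and
    (eventually_mem_nhdsWithin (s := {s}ᶜ))).exists
  rw [sub_sub_cancel_left, inner_neg_right, norm_neg] at hz'
  have hpos : 0 < e * ‖z - s‖ := mul_pos he (norm_pos_iff.2 (sub_ne_zero.2 hne))
  linarith

lemma noConeBelow_of_isLocalMax (hu : IsLocalMax u s) : NoConeBelow u s := by
  intro p e he hcone
  refine not_eventually_inner_add_mul_norm_nonpos (s := s) p he ?_
  filter_upwards [nhdsWithin_le_nhds hcone, nhdsWithin_le_nhds hu] with z hz hmax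
  linarith

lemma NoConeAtSingularity.noConeBelow_liminfExtension (hu : NoConeAtSingularity u s)
    (hS : S.Finite) (hs : s ∈ S) {m : ℝ} (hm : ∀ᶠ z in 𝓝[≠] s, m ≤ u z) (N : ℝ) :
    NoConeBelow (liminfExtension S fun y => min (u y) N) s := by
  have : NeBot (𝓝[≠] s) := Module.punctured_nhds_neBot ℝ E s
  set w := fun y => min (u y) N
  have hcob : (𝓝[≠] s).IsCoboundedUnder (· ≥ ·) w :=
    isCoboundedUnder_ge_of_le _ fun y => min_le_right _ N
  have heq := liminfExtension_eventuallyEq_nhdsNE (w := w) hS s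
  rcases lt_or_ge (liminf w (𝓝[≠] s)) N with hlt | hge
  · intro p e he hcone
    rw [liminfExtension_of_mem hs] at hcone
    obtain ⟨m', hm', hev⟩ := hu (liminf w (𝓝[≠] s)) p e he <| by
      filter_upwards [nhdsWithin_le_nhds hcone, heq] with z hz hzw
      exact (hzw ▸ hz).trans (min_le_left _ _)
    have hle : min m' N ≤ liminf w (𝓝[≠] s) :=
      le_liminf_of_le hcob (hev.mono fun z hz => min_le_min_right _ hz)
    exact hle.not_gt (lt_min hm' hlt)
  · refine noConeBelow_of_isLocalMax ?_
    filter_upwards [eventually_nhdsWithin_iff.1 heq] with z hz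
    obtain rfl | hzs := eq_or_ne z s
    · exact le_rfl
    · rw [hz hzs, liminfExtension_of_mem hs]
      exact (min_le_right _ _).trans hge

theorem JetSubsol.le_of_noConeAtSingularity [FiniteDimensional ℝ E] (hv : JetSubsol G U v)
    (hG : IsEllipticCone G) (hK : IsCompact K) (hU : IsOpen U) (hUK : U ⊆ K) (hS : S.Finite)
    (hSU : S ⊆ U) (hu : ContinuousOn u (K \ S)) (hvK : ContinuousOn v K)
    (hsup : JetSupersol G (U \ S) u) (hlow : ∀ s ∈ S, ∃ m, ∀ᶠ z in 𝓝[≠] s, m ≤ u z)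
    (hcone : ∀ s ∈ S, NoConeAtSingularity u s) (hbdry : ∀ x ∈ K \ U, v x ≤ u x) :
    ∀ x ∈ K \ S, v x ≤ u x := by
  intro x hx
  obtain ⟨y, -, hmax⟩ := hK.exists_isMaxOn ⟨x, hx.1⟩ hvK
  set w := fun z => min (u z) (v y)
  have hbdd : ∀ s ∈ S, (𝓝[≠] s).IsBoundedUnder (· ≥ ·) w := fun s hs => by
    obtain ⟨m, hm⟩ := hlow s hs
    exact ⟨min m (v y), hm.mono fun z hz => min_le_min_right _ hz⟩
  have hle : v x ≤ liminfExtension S w x := by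
    refine hv.le_of_jetSupersol hG hK hU hUK hS.countable hSU
      (lowerSemicontinuousOn_liminfExtension hS (hu.inf continuousOn_const) hbdd) hvK
      ((hsup.min_const hG (v y)).congr fun z hz =>
        (liminfExtension_eventuallyEq hS.isClosed hz.2).symm)
      (fun s hs => ?_) (fun z hz => ?_) x hx.1
    · obtain ⟨m, hm⟩ := hlow s hs
      exact (hcone s hs).noConeBelow_liminfExtension hS hs hm (v y)
    · rw [liminfExtension_of_notMem fun hzS => hz.2 (hSU hzS)]
      exact le_min (hbdry z hz) (hmax hz.1)
  rw [liminfExtension_of_notMem hx.2] at hle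
  exact hle.trans (min_le_left _ _)

end IsolatedSingularities

section MovingSpheres

open EuclideanGeometry

variable {E : Type*} [NormedAddCommGroup E] [InnerProductSpace ℝ E] {v : E → ℝ} {c x y : E} {l : ℝ}

lemma continuousOn_kelvin {Ω : Set E} (hv : ContinuousOn v Ω) (c : E) (l : ℝ) :
    ContinuousOn (kelvin c l v) {y | y ≠ c ∧ inversion c l y ∈ Ω} := by
  have hinv : ContinuousOn (inversion c l) {y | y ≠ c ∧ inversion c l y ∈ Ω} := fun y hy =>
    (tendsto_inversion hy.1).mono_left nhdsWithin_le_nhds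
  refine (hv.comp hinv fun y hy => hy.2).add (continuousOn_const.mul (continuousOn_const.sub ?_))
  exact ContinuousOn.log (by fun_prop) fun y hy => norm_ne_zero_iff.2 (sub_ne_zero.2 hy.1)

lemma ne_and_inversion_ne_zero (hl : l ≠ 0) (hy : y ∉ ({c, inversion c l 0} : Set E)) :
    y ≠ c ∧ inversion c l y ∈ ({0}ᶜ : Set E) := by
  simp only [mem_insert_iff, mem_singleton_iff, not_or] at hy
  exact ⟨hy.1, fun h0 => hy.2 (by rw [← mem_singleton_iff.1 h0, inversion_inversion c hl])⟩

lemma inversion_zero_mem_ball (hl : 0 < l) (hlc : l < ‖c‖) : inversion c l 0 ∈ ball c l := by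
  rw [mem_ball, dist_inversion_center, dist_zero_left, div_lt_iff₀ (hl.trans hlc), sq]
  exact mul_lt_mul_of_pos_left hlc hl

lemma kelvin_of_mem_sphere (v : E → ℝ) (hy : y ∈ sphere c l) : kelvin c l v y = v y := by
  rw [kelvin, inversion_of_mem_sphere hy, ← dist_eq_norm, mem_sphere.1 hy]
  ring

lemma kelvin_eq_add_log (hl : 0 < l) (v : E → ℝ) (hy : y ≠ c) :
    kelvin c l v y = v (inversion c l y) + Real.log ((l / ‖y - c‖) ^ 2) := by
  rw [kelvin, Real.log_pow, Real.log_div hl.ne' (norm_ne_zero_iff.2 (sub_ne_zero.2 hy))]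
  push_cast
  ring

-- The centre runs to infinity along the ray from `x` through `y` as `s → ∞`.
lemma exists_inversion_eq (hne : y ≠ x) {s : ℝ} (hs : 0 < s) :
    ∃ c l, 0 < l ∧ ‖c‖ ^ 2 = ‖y‖ ^ 2 + s * (‖y‖ ^ 2 - ‖x‖ ^ 2) + l ^ 2 ∧ y ≠ c ∧
      y ∈ closedBall c l ∧ inversion c l y = x ∧ (l / ‖y - c‖) ^ 2 = (s + 1) / s := by
  set d := y - x with hd
  have hdpos : 0 < ‖d‖ := norm_pos_iff.2 (sub_ne_zero.2 hne)
  have hl : (√(s * (s + 1)) * ‖d‖) ^ 2 = s * (s + 1) * ‖d‖ ^ 2 := by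
    rw [mul_pow, Real.sq_sqrt (by positivity)]
  have hyc : y - (y + s • d) = -(s • d) := by abel
  have hnorm : ‖y - (y + s • d)‖ = s * ‖d‖ := by
    rw [hyc, norm_neg, norm_smul, Real.norm_of_nonneg hs.le]
  have hratio : (√(s * (s + 1)) * ‖d‖ / ‖y - (y + s • d)‖) ^ 2 = (s + 1) / s := by
    rw [div_pow, hl, hnorm]
    field_simp
  refine ⟨y + s • d, √(s * (s + 1)) * ‖d‖, by positivity, ?_, fun h => ?_, ?_, ?_, hratio⟩
  · have hx : ‖x‖ ^ 2 = ‖y‖ ^ 2 - 2 * ⟪y, d⟫_ℝ + ‖d‖ ^ 2 := by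
      rw [← norm_sub_sq_real, hd, sub_sub_cancel]
    rw [hl, norm_add_sq_real, inner_smul_right, norm_smul, mul_pow, Real.norm_eq_abs, sq_abs, hx]
    ring
  · rw [← h, sub_self, norm_zero] at hnorm
    exact (mul_pos hs hdpos).ne hnorm
  · rw [mem_closedBall, dist_eq_norm, hnorm]
    gcongr
    exact Real.le_sqrt_of_sq_le (by nlinarith)
  · have hsmul : (s + 1) / s * s = s + 1 := by field_simp
    simp only [inversion_def]
    rw [dist_eq_norm, hratio, vsub_eq_sub, vadd_eq_add, hyc, smul_neg, smul_smul,
      hsmul, hd]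
    module

variable [FiniteDimensional ℝ E] [Nontrivial E] {G : Set (E → ℝ)}

lemma JetSubsol.le_kelvin (hsub : JetSubsol G {0}ᶜ v) (hsup : JetSupersol G {0}ᶜ v)
    (hG : IsEllipticCone G) (hv : ContinuousOn v {0}ᶜ) (hl : 0 < l) (hlc : l < ‖c‖)
    (hsing : ∀ s ∈ ({c, inversion c l 0} : Set E),
      (∃ m, ∀ᶠ z in 𝓝[≠] s, m ≤ kelvin c l v z) ∧ NoConeAtSingularity (kelvin c l v) s)
    (hy : y ∈ closedBall c l \ {c, inversion c l 0}) : v y ≤ kelvin c l v y := by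
  have hball : ball c l ⊆ closedBall c l := ball_subset_closedBall
  have hne0 : closedBall c l ⊆ {0}ᶜ := by
    rintro z hz rfl
    exact (dist_zero_left c ▸ mem_closedBall.1 hz).not_gt hlc
  have hdom (z : E) (hz : z ∉ ({c, inversion c l 0} : Set E)) := ne_and_inversion_ne_zero hl.ne' hz
  refine (hsub.mono (hball.trans hne0)).le_of_noConeAtSingularity hG (isCompact_closedBall c l)
    isOpen_ball hball (toFinite _) (insert_subset (mem_ball_self hl)
      (singleton_subset_iff.2 (inversion_zero_mem_ball hl hlc)))
    ((continuousOn_kelvin hv c l).mono fun z hz => hdom z hz.2) (hv.mono hne0)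
    ((jetSupersol_kelvin hsup hG c hl).mono fun z hz => hdom z hz.2) (fun s hs => (hsing s hs).1)
    (fun s hs => (hsing s hs).2) (fun z hz => ?_) y hy
  exact (kelvin_of_mem_sphere v (le_antisymm hz.1 (not_lt.1 hz.2))).ge

theorem JetSubsol.le_of_norm_le (hsub : JetSubsol G {0}ᶜ v) (hsup : JetSupersol G {0}ᶜ v)
    (hG : IsEllipticCone G) (hv : ContinuousOn v {0}ᶜ)
    (hsing : ∀ c l, 0 < l → l < ‖c‖ → ∀ s ∈ ({c, inversion c l 0} : Set E),
      (∃ m, ∀ᶠ z in 𝓝[≠] s, m ≤ kelvin c l v z) ∧ NoConeAtSingularity (kelvin c l v) s)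
    (hx : x ≠ 0) (hy : y ≠ 0) (hxy : ‖x‖ ≤ ‖y‖) : v y ≤ v x := by
  obtain rfl | hne := eq_or_ne y x
  · rfl
  refine le_of_forall_pos_le_add fun ε hε => ?_
  obtain ⟨c, l, hl, hc, hyc, hyl, hinv, hratio⟩ := exists_inversion_eq hne (s := 1 / ε)
    (by positivity)
  have hlc : l < ‖c‖ := by
    refine lt_of_pow_lt_pow_left₀ 2 (norm_nonneg _) ?_
    have : 0 ≤ 1 / ε * (‖y‖ ^ 2 - ‖x‖ ^ 2) := by
      have : ‖x‖ ^ 2 ≤ ‖y‖ ^ 2 := by gcongr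
      exact mul_nonneg (by positivity) (by linarith)
    have : 0 < ‖y‖ ^ 2 := pow_pos (norm_pos_iff.2 hy) 2
    linarith
  have hyS : y ∉ ({c, inversion c l 0} : Set E) := by
    rintro (rfl | rfl)
    exacts [hyc rfl, hx (by rw [← hinv, inversion_inversion c hl.ne'])]
  calc v y ≤ kelvin c l v y := hsub.le_kelvin hsup hG hv hl hlc (hsing c l hl hlc) ⟨hyl, hyS⟩
    _ = v x + Real.log (1 + ε) := by
      rw [kelvin_eq_add_log hl v hyc, hinv, hratio]
      congr 2
      field_simp
    _ ≤ v x + ε := by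
      have := Real.log_le_sub_one_of_pos (show 0 < 1 + ε by positivity)
      linarith

end MovingSpheres

section LogBarrier

/-- The solutions of `f'' = -a (f' + f'² / 2)` with a logarithmic pole at `l` that vanish at
infinity on the side of `l` where `a (l - t) < 0`. -/
def logBarrier (a l t : ℝ) : ℝ := 2 / a * Real.log (1 - Real.exp (a * (l - t)))

variable {a l t : ℝ}

lemma logBarrier_neg (a l t : ℝ) : logBarrier (-a) l t = -logBarrier a (-l) (-t) := by
  simp only [logBarrier]
  ring_nf

lemma hasPeanoExpansion_logBarrier (ha : a ≠ 0) (h : a * (l - t) < 0) :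
    ∃ a₁, 0 < a₁ + a₁ ^ 2 / 2 ∧
      HasPeanoExpansion (logBarrier a l) t a₁ (-(a * (a₁ + a₁ ^ 2 / 2))) := by
  have hexp (s : ℝ) : Real.exp (a * l) * Real.exp (-a * s) = Real.exp (a * (l - s)) := by
    rw [← Real.exp_add]
    ring_nf
  have hlt : Real.exp (a * (l - t)) < 1 := Real.exp_lt_one_iff.2 h
  have hg := HasPeanoExpansion.log_one_sub_exp (2 / a) (Real.exp (a * l)) (-a) t (by rwa [hexp])
  simp only [hexp] at hg
  set S := Real.exp (a * (l - t))
  have hS : 0 < S := Real.exp_pos _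
  have hS1 : 0 < 1 - S := sub_pos.2 hlt
  have hQ : 2 * S / (1 - S) + (2 * S / (1 - S)) ^ 2 / 2 = 2 * S / (1 - S) ^ 2 := by
    field_simp
    ring
  have ha₁ : -(2 / a * -a) * S / (1 - S) = 2 * S / (1 - S) := by field_simp
  have ha₂ : -(2 / a * (-a) ^ 2) * S / (1 - S) ^ 2 = -(a * (2 * S / (1 - S) ^ 2)) := by
    field_simp
  refine ⟨2 * S / (1 - S), by rw [hQ]; positivity, ?_⟩
  rw [hQ, ← ha₁, ← ha₂]
  exact hg

lemma continuousOn_logBarrier (a l : ℝ) : ContinuousOn (logBarrier a l) {t | a * (l - t) < 0} :=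
  continuousOn_const.mul <| ContinuousOn.log (by fun_prop) fun _ ht =>
    (sub_pos.2 (Real.exp_lt_one_iff.2 ht)).ne'

lemma logBarrier_nonpos (ha : 0 < a) (h : l ≤ t) : logBarrier a l t ≤ 0 := by
  have hexp : Real.exp (a * (l - t)) ≤ 1 :=
    Real.exp_le_one_iff.2 (mul_nonpos_of_nonneg_of_nonpos ha.le (sub_nonpos.2 h))
  refine mul_nonpos_of_nonneg_of_nonpos (by positivity) (Real.log_nonpos (sub_nonneg.2 hexp) ?_)
  linarith [Real.exp_pos (a * (l - t))]

lemma tendsto_logBarrier_nhdsGT (ha : 0 < a) (l : ℝ) :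
    Tendsto (logBarrier a l) (𝓝[>] l) atBot := by
  refine Tendsto.const_mul_atBot (by positivity) (Real.tendsto_log_nhdsGT_zero.comp ?_)
  refine tendsto_nhdsWithin_iff.2 ⟨?_, ?_⟩
  · exact (Continuous.tendsto' (by fun_prop) _ _ (by simp)).mono_left nhdsWithin_le_nhds
  · filter_upwards [self_mem_nhdsWithin] with t ht
    exact sub_pos.2 (Real.exp_lt_one_iff.2 (mul_neg_of_pos_of_neg ha (sub_neg.2 ht)))

lemma tendsto_logBarrier_atBot (ha : 0 < a) (t : ℝ) :
    Tendsto (fun l => logBarrier a l t) atBot (𝓝 0) := by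
  have hexp : Tendsto (fun l => Real.exp (a * (l - t))) atBot (𝓝 0) :=
    Real.tendsto_exp_atBot.comp
      ((tendsto_atBot_add_const_right _ (-t) tendsto_id).const_mul_atBot ha)
  simpa [logBarrier] using (((hexp.const_sub 1).log (by simp)).const_mul (2 / a))

lemma logBarrier_neg_nonneg (ha : 0 < a) (h : t ≤ l) : 0 ≤ logBarrier (-a) l t := by
  rw [logBarrier_neg]
  exact neg_nonneg.2 (logBarrier_nonpos ha (neg_le_neg h))

lemma tendsto_logBarrier_neg_nhdsLT (ha : 0 < a) (l : ℝ) :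
    Tendsto (logBarrier (-a) l) (𝓝[<] l) atTop := by
  rw [funext (logBarrier_neg a l)]
  exact tendsto_neg_atBot_atTop.comp ((tendsto_logBarrier_nhdsGT ha (-l)).comp tendsto_neg_nhdsLT)

lemma tendsto_logBarrier_neg_atTop (ha : 0 < a) (t : ℝ) :
    Tendsto (fun l => logBarrier (-a) l t) atTop (𝓝 0) := by
  simp only [logBarrier_neg]
  simpa using ((tendsto_logBarrier_atBot ha (-t)).comp tendsto_neg_atTop_atBot).neg

end LogBarrier

section SphereBounds

variable {E : Type*} [NormedAddCommGroup E] {s x y : E} {r R t : ℝ}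

/-- The closed annulus of centre `s` and radii `r` and `R`. -/
def annulus (s : E) (r R : ℝ) : Set E := (dist · s) ⁻¹' Icc r R

lemma isCompact_annulus [ProperSpace E] (s : E) (r R : ℝ) : IsCompact (annulus s r R) :=
  (isCompact_closedBall s R).of_isClosed_subset
    (isClosed_Icc.preimage (continuous_id.dist continuous_const)) fun _ hy => mem_closedBall.2 hy.2

lemma ne_of_mem_annulus (hr : 0 < r) (hy : y ∈ annulus s r R) : y ≠ s :=
  dist_pos.1 (hr.trans_le hy.1)

lemma dist_eq_or_eq_or_annulus_mem_nhds (hy : y ∈ annulus s r R) :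
    dist y s = r ∨ dist y s = R ∨ annulus s r R ∈ 𝓝 y := by
  rcases hy.1.eq_or_lt with h | hr
  · exact .inl h.symm
  rcases hy.2.eq_or_lt with h | hR
  · exact .inr (.inl h)
  exact .inr (.inr ((continuous_id.dist continuous_const).continuousAt.preimage_mem_nhds
    (Icc_mem_nhds hr hR)))

lemma le_log_of_mem_annulus (hy : y ∈ annulus s (Real.exp t) R) : t ≤ Real.log ‖y - s‖ := by
  rw [← dist_eq_norm, Real.le_log_iff_exp_le ((Real.exp_pos t).trans_le hy.1)]
  exact hy.1

lemma log_le_of_mem_annulus (hr : 0 < r) (hy : y ∈ annulus s r (Real.exp t)) :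
    Real.log ‖y - s‖ ≤ t := by
  rw [← dist_eq_norm, Real.log_le_iff_le_exp (hr.trans_le hy.1)]
  exact hy.2

lemma continuousOn_comp_log_norm_sub {f : ℝ → ℝ} {A : Set ℝ} {K : Set E} (hf : ContinuousOn f A)
    (hK : ∀ y ∈ K, y ≠ s ∧ Real.log ‖y - s‖ ∈ A) :
    ContinuousOn (fun y => f (Real.log ‖y - s‖)) K :=
  hf.comp (ContinuousOn.log (by fun_prop) fun y hy =>
    norm_ne_zero_iff.2 (sub_ne_zero.2 (hK y hy).1)) fun y hy => (hK y hy).2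

lemma exists_closedBall_diff_subset {U : Set E} (hU : U ∈ 𝓝[≠] s) :
    ∃ r > 0, closedBall s r \ {s} ⊆ U :=
  (nhdsWithin_hasBasis nhds_basis_closedBall _).mem_iff.1 hU

variable [InnerProductSpace ℝ E] [FiniteDimensional ℝ E] {G : Set (E → ℝ)} {U : Set E} {u : E → ℝ}
  {δ M : ℝ}

lemma LamStarOutside.add_logBarrier_le (hstar : LamStarOutside G δ) (hG : IsEllipticCone G)
    (hu : JetSupersol G U u) (hcont : ContinuousOn u U) (hU : closedBall s R \ {s} ⊆ U)
    (hM : ∀ y ∈ sphere s R, M ≤ u y) (hx : x ∈ closedBall s R \ {s}) {l : ℝ}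
    (hl : l < Real.log ‖x - s‖) :
    M + logBarrier (δ / 2) l (Real.log ‖x - s‖) ≤ u x := by
  have hδ : 0 < δ / 2 := half_pos hstar.pos
  have hann (t : ℝ) : annulus s (Real.exp t) R ⊆ U := fun y hy =>
    hU ⟨hy.2, ne_of_mem_annulus (Real.exp_pos t) hy⟩
  obtain ⟨m, hm⟩ := ((isCompact_annulus s (Real.exp l) R).image_of_continuousOn
    (hcont.mono (hann l))).bddBelow
  obtain ⟨t, ⟨hlt, htx⟩, hpole⟩ := ((eventually_of_mem (Ioo_mem_nhdsGT hl) fun _ h => h).and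
    ((tendsto_logBarrier_nhdsGT hδ l).eventually_le_atBot (m - M))).exists
  have hlog {y : E} (hy : y ∈ annulus s (Real.exp t) R) :
      δ / 2 * (l - Real.log ‖y - s‖) < 0 :=
    mul_neg_of_pos_of_neg hδ (sub_neg.2 (hlt.trans_le (le_log_of_mem_annulus hy)))
  refine hu.ge_of_isStrictSubsolAt (φ := fun y => M + logBarrier (δ / 2) l (Real.log ‖y - s‖))
    (isCompact_annulus s (Real.exp t) R) (hcont.mono (hann t))
    (continuousOn_const.add (continuousOn_comp_log_norm_sub (continuousOn_logBarrier _ _)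
      fun y hy => ⟨ne_of_mem_annulus (Real.exp_pos t) hy, hlog hy⟩)) (fun y hy => ?_) x ⟨?_, hx.1⟩
  · rcases dist_eq_or_eq_or_annulus_mem_nhds hy with h | h | h
    · have hmy : m ≤ u y := hm (mem_image_of_mem u ⟨(Real.exp_le_exp.2 hlt.le).trans hy.1, hy.2⟩)
      left
      rw [← dist_eq_norm, h, Real.log_exp]
      linarith
    · have hle := logBarrier_nonpos hδ (hlt.trans_le (le_log_of_mem_annulus hy)).le
      exact .inl (by linarith [hM y h])
    · obtain ⟨a₁, hpos, hf⟩ := hasPeanoExpansion_logBarrier hδ.ne' (hlog hy)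
      exact .inr ⟨h, hann t hy, hstar.isStrictSubsolAt_radial hG
        (ne_of_mem_annulus (Real.exp_pos t) hy) (hf.const_add M) hpos le_rfl⟩
  · exact ((Real.le_log_iff_exp_le (norm_pos_iff.2 (sub_ne_zero.2 hx.2))).1 htx.le).trans_eq
      (dist_eq_norm x s).symm

theorem LamStarOutside.le_of_le_sphere (hstar : LamStarOutside G δ) (hG : IsEllipticCone G)
    (hu : JetSupersol G U u) (hcont : ContinuousOn u U) (hU : closedBall s R \ {s} ⊆ U)
    (hM : ∀ y ∈ sphere s R, M ≤ u y) : ∀ x ∈ closedBall s R \ {s}, M ≤ u x := by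
  intro x hx
  have hlim := (tendsto_logBarrier_atBot (half_pos hstar.pos) (Real.log ‖x - s‖)).const_add M
  rw [add_zero] at hlim
  refine le_of_tendsto hlim ?_
  filter_upwards [eventually_lt_atBot (Real.log ‖x - s‖)] with l hl
  exact hstar.add_logBarrier_le hG hu hcont hU hM hx hl

end SphereBounds

section OutsideSingularities

open EuclideanGeometry

variable {E : Type*} [NormedAddCommGroup E] [InnerProductSpace ℝ E] {u : E → ℝ} {c p s x : E}
  {l m e : ℝ}

lemma tendsto_inversion_nhdsNE (hl : l ≠ 0) (hx : x ≠ c) :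
    Tendsto (inversion c l) (𝓝[≠] x) (𝓝[≠] (inversion c l x)) :=
  (tendsto_inversion hx).inf <| tendsto_principal_principal.2 fun _ hz =>
    (inversion_injective c hl).ne hz

lemma kelvin_kelvin (hl : 0 < l) (u : E → ℝ) {y : E} (hy : y ≠ c) :
    kelvin c l (kelvin c l u) y = u y := by
  linarith [sub_kelvin_eq hl u (kelvin c l u) hy]

-- The conformal factor of the inversion fixing `s` contributes the gradient that cancels `p`.
lemma exists_inner_inversion_sub_log_eventually_ge (hp : p ≠ 0) (s : E) {ε : ℝ} (hε : 0 < ε) :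
    ∃ c, c ≠ s ∧ ∀ᶠ z in 𝓝 s, -(ε * ‖z - s‖) ≤ ⟪p, inversion c ‖s - c‖ z - s⟫_ℝ +
      2 * (Real.log ‖s - c‖ - Real.log ‖z - c‖) := by
  set c := s + (2 / ‖p‖ ^ 2) • p
  have hc : c ≠ s := by simp [c, hp]
  have hsc : s - c = -((2 / ‖p‖ ^ 2) • p) := by simp [c]
  have hl : ‖s - c‖ = 2 / ‖p‖ := by
    rw [hsc, norm_neg, norm_smul, Real.norm_of_nonneg (by positivity)]
    field_simp
  have hfix : inversion c ‖s - c‖ s = s := inversion_of_mem_sphere (mem_sphere_iff_norm.2 rfl)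
  have hjet := (hasJet_inner_inversion hc.symm ‖s - c‖ p).add
    ((HasJet.log_norm_sub hc.symm).const_mul (-2))
  have hgrad : (‖s - c‖ ^ 2 / ‖s - c‖ ^ 2) • p -
      (2 * ‖s - c‖ ^ 2 * ⟪p, s - c⟫_ℝ / ‖s - c‖ ^ 4) • (s - c) +
        (-2 : ℝ) • ((‖s - c‖ ^ 2)⁻¹ • (s - c)) = 0 := by
    rw [hl, hsc, inner_neg_right, inner_smul_right, real_inner_self_eq_norm_sq]
    match_scalars
    field_simp
    ring
  have hbound := (hjet.isBigO_sub_inner.trans_isLittleO isLittleO_norm_sq_norm).bound hε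
  rw [hgrad] at hbound
  refine ⟨c, hc, ?_⟩
  rw [← map_add_left_nhds_zero, eventually_map]
  filter_upwards [hbound] with h hh
  rw [inner_zero_left, sub_zero, norm_norm, hfix] at hh
  rw [add_sub_cancel_left, inner_sub_right]
  linarith [(abs_le.1 hh).1]

lemma half_norm_sub_eventually_le_norm_inversion_sub (hc : c ≠ s) :
    ∀ᶠ z in 𝓝 s, 1 / 2 * ‖z - s‖ ≤ ‖inversion c ‖s - c‖ z - s‖ := by
  have hl : 0 < ‖s - c‖ := norm_pos_iff.2 (sub_ne_zero.2 hc.symm)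
  have hfix : inversion c ‖s - c‖ s = s := inversion_of_mem_sphere (mem_sphere_iff_norm.2 rfl)
  have hcont : ContinuousAt (fun z => ‖z - c‖) s := by fun_prop
  filter_upwards [isOpen_ne.mem_nhds hc.symm,
    hcont.eventually_lt_const (show ‖s - c‖ < 2 * ‖s - c‖ by linarith)] with z hz hlt
  have hzc : 0 < ‖z - c‖ := norm_pos_iff.2 (sub_ne_zero.2 hz)
  have hdist := dist_inversion_inversion hz hc.symm ‖s - c‖
  simp only [hfix, dist_eq_norm] at hdist
  rw [hdist]
  refine mul_le_mul_of_nonneg_right ?_ (norm_nonneg _)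
  rw [div_le_div_iff₀ two_pos (by positivity)]
  nlinarith

variable [FiniteDimensional ℝ E] {G : Set (E → ℝ)} {U : Set E} {δ : ℝ}

lemma LamStarOutside.exists_gt_eventually_le (hstar : LamStarOutside G δ) (hG : IsEllipticCone G)
    (hu : JetSupersol G U u) (hcont : ContinuousOn u U) (hU : U ∈ 𝓝[≠] s) (he : 0 < e)
    (hcone : ∀ᶠ z in 𝓝[≠] s, m + e * ‖z - s‖ ≤ u z) : ∃ m' > m, ∀ᶠ z in 𝓝[≠] s, m' ≤ u z := by
  obtain ⟨r, hr, hball⟩ := exists_closedBall_diff_subset (inter_mem hU hcone)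
  have hsphere : ∀ y ∈ sphere s r, m + e * r ≤ u y := fun y hy => by
    have := (hball ⟨sphere_subset_closedBall hy, ne_of_mem_sphere hy hr.ne'⟩).2
    rwa [mem_ofPred_eq, ← dist_eq_norm, hy] at this
  refine ⟨m + e * r, by linarith [mul_pos he hr], ?_⟩
  filter_upwards [sdiff_mem_nhdsWithin_compl (closedBall_mem_nhds s hr) {s}] with z hz
  exact hstar.le_of_le_sphere hG hu hcont (hball.trans inter_subset_left) hsphere z hz

lemma LamStarOutside.exists_eventually_le (hstar : LamStarOutside G δ) (hG : IsEllipticCone G)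
    (hu : JetSupersol G U u) (hcont : ContinuousOn u U) (hU : U ∈ 𝓝[≠] s) :
    ∃ m, ∀ᶠ z in 𝓝[≠] s, m ≤ u z := by
  obtain ⟨r, hr, hball⟩ := exists_closedBall_diff_subset hU
  have hsphere : sphere s r ⊆ U := fun y hy =>
    hball ⟨sphere_subset_closedBall hy, ne_of_mem_sphere hy hr.ne'⟩
  obtain ⟨m, hm⟩ := ((isCompact_sphere s r).image_of_continuousOn (hcont.mono hsphere)).bddBelow
  refine ⟨m, ?_⟩
  filter_upwards [sdiff_mem_nhdsWithin_compl (closedBall_mem_nhds s hr) {s}] with z hz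
  exact hstar.le_of_le_sphere hG hu hcont hball (fun y hy => hm (mem_image_of_mem u hy)) z hz

theorem LamStarOutside.noConeAtSingularity (hstar : LamStarOutside G δ) (hG : IsEllipticCone G)
    (hu : JetSupersol G U u) (hcont : ContinuousOn u U) (hU : U ∈ 𝓝[≠] s) :
    NoConeAtSingularity u s := by
  intro m p e he hcone
  obtain rfl | hp := eq_or_ne p 0
  · exact hstar.exists_gt_eventually_le hG hu hcont hU he (by simpa using hcone)
  obtain ⟨c, hc, hgrad⟩ := exists_inner_inversion_sub_log_eventually_ge hp s
    (show 0 < e / 4 by positivity)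
  have hl : 0 < ‖s - c‖ := norm_pos_iff.2 (sub_ne_zero.2 hc.symm)
  have hι : Tendsto (inversion c ‖s - c‖) (𝓝[≠] s) (𝓝[≠] s) := by
    have := tendsto_inversion_nhdsNE hl.ne' hc.symm
    rwa [inversion_of_mem_sphere (mem_sphere_iff_norm.2 rfl)] at this
  have hne : ∀ᶠ z in 𝓝[≠] s, z ≠ c := nhdsWithin_le_nhds (isOpen_ne.mem_nhds hc.symm)
  have hkelvin : ∀ᶠ z in 𝓝[≠] s, m + e / 4 * ‖z - s‖ ≤ kelvin c ‖s - c‖ u z := by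
    filter_upwards [hι.eventually hcone, nhdsWithin_le_nhds hgrad, nhdsWithin_le_nhds
      (half_norm_sub_eventually_le_norm_inversion_sub hc)] with z hcone hgrad hhalf
    rw [kelvin]
    nlinarith
  obtain ⟨m', hm', hle⟩ := hstar.exists_gt_eventually_le hG (jetSupersol_kelvin hu hG c hl)
    (continuousOn_kelvin hcont c _) (hne.and (hι.eventually hU)) (by positivity) hkelvin
  have hlog : ContinuousAt (fun z => 2 * (Real.log ‖s - c‖ - Real.log ‖z - c‖)) s := by
    fun_prop (disch := simpa using hl.ne')
  refine ⟨(m + m') / 2, by linarith, ?_⟩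
  filter_upwards [hι.eventually hle, hne, nhdsWithin_le_nhds
    (hlog.eventually_const_lt (show (m - m') / 2 < _ by simp; linarith))] with z hz hzc hlogz
  rw [← kelvin_kelvin hl u hzc, kelvin]
  linarith

end OutsideSingularities

section InsideEstimates

open EuclideanGeometry

variable {E : Type*} [NormedAddCommGroup E] [InnerProductSpace ℝ E] {G : Set (E → ℝ)}
  {U : Set E} {v : E → ℝ} {s x : E} {δ b r R M : ℝ}

lemma LamStarInside.one_sub_half_rpow_pos (hstar : LamStarInside G δ) :
    (0 : ℝ) < 1 - (1 / 2) ^ δ :=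
  sub_pos.2 (Real.rpow_lt_one (by norm_num) (by norm_num) hstar.pos)

lemma LamStarInside.isStrictSupersolAt_rpow (hstar : LamStarInside G δ) (hG : IsEllipticCone G)
    (a : ℝ) {κ : ℝ} (hκ : 0 < κ) (hR : 0 < R) (hx : x ≠ s) :
    IsStrictSupersolAt G (fun y => a + κ * (‖y - s‖ / R) ^ δ) x := by
  have hδ := hstar.pos
  have hprofile := ((HasPeanoExpansion.exp_const_mul δ (Real.log ‖x - s‖)).const_mul
    (κ * Real.exp (-δ * Real.log R))).const_add a
  obtain ⟨p, q, hjet, hmem⟩ := hstar.isStrictSupersolAt_radial hG hx hprofile (by positivity)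
    (by rw [mul_add]; refine le_add_of_le_of_nonneg (le_of_eq ?_) (by positivity); ring)
  refine ⟨p, q, hjet.congr_fun ?_, hmem⟩
  filter_upwards [isOpen_ne.mem_nhds hx] with z hz
  have hzs : 0 < ‖z - s‖ := norm_pos_iff.2 (sub_ne_zero.2 hz)
  rw [Real.rpow_def_of_pos (by positivity), mul_assoc, ← Real.exp_add,
    Real.log_div hzs.ne' hR.ne']
  ring_nf

variable [FiniteDimensional ℝ E]

lemma LamStarInside.le_add_logBarrier (hstar : LamStarInside G δ) (hG : IsEllipticCone G)
    (hv : JetSubsol G U v) (hcont : ContinuousOn v U) (hr : 0 < r) (hU : (ball s r)ᶜ ⊆ U)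
    (hM : ∀ y ∈ sphere s r, v y ≤ M) (hx : x ∉ ball s r) {l : ℝ} (hl : Real.log ‖x - s‖ < l) :
    v x ≤ M + logBarrier (-δ) l (Real.log ‖x - s‖) := by
  have hδ := hstar.pos
  have hann (t : ℝ) : annulus s r (Real.exp t) ⊆ U := fun y hy => hU (not_lt.2 hy.1)
  obtain ⟨m, hm⟩ := ((isCompact_annulus s r (Real.exp l)).image_of_continuousOn
    (hcont.mono (hann l))).bddAbove
  obtain ⟨t, ⟨hxt, htl⟩, hpole⟩ := ((eventually_of_mem (Ioo_mem_nhdsLT hl) fun _ h => h).and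
    ((tendsto_logBarrier_neg_nhdsLT hδ l).eventually_ge_atTop (m - M))).exists
  have hlog {y : E} (hy : y ∈ annulus s r (Real.exp t)) : -δ * (l - Real.log ‖y - s‖) < 0 :=
    mul_neg_of_neg_of_pos (neg_neg_of_pos hδ)
      (sub_pos.2 ((log_le_of_mem_annulus hr hy).trans_lt htl))
  refine hv.le_of_isStrictSupersolAt (φ := fun y => M + logBarrier (-δ) l (Real.log ‖y - s‖))
    (isCompact_annulus s r (Real.exp t)) (hcont.mono (hann t))
    (continuousOn_const.add (continuousOn_comp_log_norm_sub (continuousOn_logBarrier _ _)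
      fun y hy => ⟨ne_of_mem_annulus hr hy, hlog hy⟩)) (fun y hy => ?_) x ⟨not_lt.1 hx, ?_⟩
  · rcases dist_eq_or_eq_or_annulus_mem_nhds hy with h | h | h
    · have hle := logBarrier_neg_nonneg hδ ((log_le_of_mem_annulus hr hy).trans htl.le)
      exact .inl (by linarith [hM y h])
    · have hmy : v y ≤ m := hm (mem_image_of_mem v ⟨hy.1, hy.2.trans (Real.exp_le_exp.2 htl.le)⟩)
      left
      rw [← dist_eq_norm, h, Real.log_exp]
      linarith
    · obtain ⟨a₁, hpos, hf⟩ := hasPeanoExpansion_logBarrier (neg_ne_zero.2 hδ.ne') (hlog hy)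
      exact .inr ⟨h, hann t hy, hstar.isStrictSupersolAt_radial hG
        (ne_of_mem_annulus hr hy) (hf.const_add M) hpos (by linarith)⟩
  · have hxs : 0 < ‖x - s‖ := (hr.trans_le (not_lt.1 hx)).trans_eq (dist_eq_norm x s)
    exact (dist_eq_norm x s).trans_le ((Real.log_le_iff_le_exp hxs).1 hxt.le)

theorem LamStarInside.le_of_le_sphere (hstar : LamStarInside G δ) (hG : IsEllipticCone G)
    (hv : JetSubsol G U v) (hcont : ContinuousOn v U) (hr : 0 < r) (hU : (ball s r)ᶜ ⊆ U)
    (hM : ∀ y ∈ sphere s r, v y ≤ M) : ∀ x ∉ ball s r, v x ≤ M := by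
  intro x hx
  have hlim := (tendsto_logBarrier_neg_atTop hstar.pos (Real.log ‖x - s‖)).const_add M
  rw [add_zero] at hlim
  refine ge_of_tendsto hlim ?_
  filter_upwards [eventually_gt_atTop (Real.log ‖x - s‖)] with l hl
  exact hstar.le_add_logBarrier hG hv hcont hr hU hM hx hl

theorem LamStarInside.le_add_mul_rpow (hstar : LamStarInside G δ) (hG : IsEllipticCone G)
    (hv : JetSubsol G U v) (hcont : ContinuousOn v U) (hR : 0 < R) (hU : closedBall s R ⊆ U)
    (hb : ∀ y ∈ closedBall s R, v y ≤ b) :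
    ∀ x ∈ closedBall s R, v x ≤ v s + (b - v s) * (‖x - s‖ / R) ^ δ := by
  have hδ := hstar.pos
  rcases (hb s (mem_closedBall_self hR.le)).eq_or_lt with heq | hlt
  · simpa [heq] using hb
  refine hv.le_of_isStrictSupersolAt (φ := fun y => v s + (b - v s) * (‖y - s‖ / R) ^ δ)
    (isCompact_closedBall s R) (hcont.mono hU) (by fun_prop (disch := simp [hδ.le])) fun y hy => ?_
  obtain rfl | hys := eq_or_ne y s
  · simp [hδ.ne']
  rcases (mem_closedBall.1 hy).eq_or_lt with h | h
  · left
    rw [← dist_eq_norm, h, div_self hR.ne', Real.one_rpow]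
    linarith [hb y hy]
  · exact .inr ⟨closedBall_mem_nhds_of_mem h, hU hy,
      hstar.isStrictSupersolAt_rpow hG _ (sub_pos.2 hlt) hR hys⟩

lemma LamStarInside.harnack_step (hstar : LamStarInside G δ) (hG : IsEllipticCone G)
    (hv : JetSubsol G U v) (hcont : ContinuousOn v U) (hr : 0 < r)
    (hU : closedBall s (2 * r) ⊆ U) (hb : ∀ y ∈ closedBall s (2 * r), v y ≤ b)
    (hx : x ∈ closedBall s r) : (1 - (1 / 2) ^ δ) * (b - v s) ≤ b - v x := by
  have hgrowth := hstar.le_add_mul_rpow hG hv hcont (by positivity) hU hb x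
    (closedBall_subset_closedBall (by linarith) hx)
  have hpow : (‖x - s‖ / (2 * r)) ^ δ ≤ (1 / 2) ^ δ := by
    refine Real.rpow_le_rpow (by positivity) ?_ hstar.pos.le
    rw [div_le_div_iff₀ (by positivity) two_pos, ← dist_eq_norm]
    linarith [mem_closedBall.1 hx]
  have hsb : 0 ≤ b - v s := sub_nonneg.2 (hb s (mem_closedBall_self (by positivity)))
  nlinarith [mul_le_mul_of_nonneg_left hpow hsb]

theorem LamStarInside.harnack_segment (hstar : LamStarInside G δ) (hG : IsEllipticCone G)
    (hv : JetSubsol G U v) (hcont : ContinuousOn v U) (hr : 0 < r) {z : E} (N : ℕ)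
    (hU : ∀ y ∈ segment ℝ s z, closedBall y (2 * r) ⊆ U)
    (hb : ∀ y ∈ segment ℝ s z, ∀ y' ∈ closedBall y (2 * r), v y' ≤ b)
    (hdist : dist s z ≤ N * r) : (1 - (1 / 2) ^ δ) ^ N * (b - v s) ≤ b - v z := by
  have hθ := hstar.one_sub_half_rpow_pos
  induction N generalizing s with
  | zero =>
    obtain rfl : s = z := dist_le_zero.1 (by simpa using hdist)
    simp
  | succ N ih =>
    push_cast at hdist
    set x := AffineMap.lineMap s z (1 / (N + 1) : ℝ) with hx
    have hxseg : x ∈ segment ℝ s z := by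
      rw [segment_eq_image_lineMap]
      exact mem_image_of_mem _ ⟨by positivity, (div_le_one (by positivity)).2 (by simp)⟩
    have hsub : segment ℝ x z ⊆ segment ℝ s z :=
      (convex_segment s z).segment_subset hxseg (right_mem_segment ℝ s z)
    have hstep := hstar.harnack_step hG hv hcont hr (hU s (left_mem_segment ℝ s z))
      (hb s (left_mem_segment ℝ s z)) (x := x) <| by
        rw [mem_closedBall, hx, dist_lineMap_left, Real.norm_of_nonneg (by positivity),
          one_div_mul_eq_div, div_le_iff₀ (by positivity)]
        linarith
    have hrest := ih (fun y hy => hU y (hsub hy)) (fun y hy => hb y (hsub hy)) <| by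
      have hcoeff : 1 - 1 / (N + 1 : ℝ) = N / (N + 1) := by field_simp; ring
      rw [hx, dist_lineMap_right, hcoeff, Real.norm_of_nonneg (by positivity), div_mul_eq_mul_div,
        div_le_iff₀ (by positivity)]
      nlinarith
    calc (1 - (1 / 2) ^ δ) ^ (N + 1) * (b - v s)
        = (1 - (1 / 2) ^ δ) ^ N * ((1 - (1 / 2) ^ δ) * (b - v s)) := by ring
      _ ≤ (1 - (1 / 2) ^ δ) ^ N * (b - v x) := by gcongr
      _ ≤ b - v z := hrest

end InsideEstimates

section Harnack

open EuclideanGeometry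

variable {E : Type*} [NormedAddCommGroup E] [InnerProductSpace ℝ E] {v : E → ℝ} {x z : E} {r : ℝ}

lemma exists_norm_eq_inner_eq_zero [FiniteDimensional ℝ E] (hdim : 1 < Module.finrank ℝ E)
    (x y : E) (hr : 0 ≤ r) : ∃ z, ‖z‖ = r ∧ ⟪x, z⟫_ℝ = 0 ∧ 0 ≤ ⟪z, y⟫_ℝ := by
  have hpos : 0 < Module.finrank ℝ (ℝ ∙ x)ᗮ := by
    have := Submodule.finrank_add_finrank_orthogonal (ℝ ∙ x)
    have := finrank_span_le_card ({x} : Set E) (R := ℝ)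
    rw [toFinset_singleton, Finset.card_singleton] at this
    omega
  have := Module.nontrivial_of_finrank_pos hpos
  obtain ⟨⟨z, hzx⟩, hz⟩ := exists_norm_eq (ℝ ∙ x)ᗮ hr
  rw [Submodule.mem_orthogonal_singleton_iff_inner_right] at hzx
  rcases le_total 0 ⟪z, y⟫_ℝ with h | h
  · exact ⟨z, hz, hzx, h⟩
  · exact ⟨-z, (norm_neg z).trans hz, by rw [inner_neg_right, hzx, neg_zero],
      by rwa [inner_neg_left, neg_nonneg]⟩

lemma le_norm_of_mem_segment (hx : ‖x‖ = r) (hz : ‖z‖ = r) (hxz : 0 ≤ ⟪x, z⟫_ℝ) {y : E}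
    (hy : y ∈ segment ℝ x z) : 5 / 8 * r ≤ ‖y‖ := by
  obtain ⟨a, b, ha, hb, hab, rfl⟩ := hy
  refine le_of_sq_le_sq ?_ (norm_nonneg _)
  calc (5 / 8 * r) ^ 2 ≤ 1 / 2 * (a + b) ^ 2 * r ^ 2 := by rw [hab]; nlinarith [sq_nonneg r]
    _ ≤ (a ^ 2 + b ^ 2) * r ^ 2 := by gcongr; nlinarith [sq_nonneg (a - b)]
    _ ≤ (a ^ 2 + b ^ 2) * r ^ 2 + 2 * (a * b * ⟪x, z⟫_ℝ) := by
      rw [le_add_iff_nonneg_right]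
      positivity
    _ = ‖a • x + b • z‖ ^ 2 := by
      rw [norm_add_sq_real, norm_smul, norm_smul, real_inner_smul_left, inner_smul_right, hx, hz,
        Real.norm_of_nonneg ha, Real.norm_of_nonneg hb]
      ring

lemma norm_inversion_zero_one (x : E) : ‖inversion (0 : E) 1 x‖ = ‖x‖⁻¹ := by
  rw [← dist_zero_right, dist_inversion_center, dist_zero_right, one_pow, one_div]

lemma kelvin_inversion_zero_one (v : E → ℝ) (x : E) :
    kelvin 0 1 v (inversion 0 1 x) = v x + 2 * Real.log ‖x‖ := by
  rw [kelvin, inversion_inversion _ one_ne_zero, sub_zero, norm_inversion_zero_one, Real.log_inv,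
    Real.log_one]
  ring

lemma setOf_ne_and_inversion_zero_one_mem_eq :
    {y : E | y ≠ 0 ∧ inversion 0 1 y ∈ ({0}ᶜ : Set E)} = {0}ᶜ := by
  ext y
  exact ⟨fun h => h.1, fun h => ⟨h, (inversion_eq_center one_ne_zero).not.2 h⟩⟩

variable {G : Set (E → ℝ)} {δ M : ℝ}

lemma continuousOn_kelvin_zero_one (hv : ContinuousOn v {0}ᶜ) :
    ContinuousOn (kelvin 0 1 v) {0}ᶜ :=
  setOf_ne_and_inversion_zero_one_mem_eq (E := E) ▸ continuousOn_kelvin hv 0 1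

lemma JetSubsol.kelvin_zero_one (hv : JetSubsol G {0}ᶜ v) (hG : IsEllipticCone G) :
    JetSubsol G {0}ᶜ (kelvin 0 1 v) :=
  setOf_ne_and_inversion_zero_one_mem_eq (E := E) ▸ jetSubsol_kelvin hv hG 0 one_pos

variable [FiniteDimensional ℝ E]

theorem LamStarInside.le_of_le_norm (hstar : LamStarInside G δ) (hG : IsEllipticCone G)
    (hv : JetSubsol G {0}ᶜ v) (hcont : ContinuousOn v {0}ᶜ) (hr : 0 < r)
    (hM : ∀ y, ‖y‖ = r → v y ≤ M) (hx : r ≤ ‖x‖) : v x ≤ M :=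
  hstar.le_of_le_sphere hG hv hcont hr (s := 0)
    (fun y hy h0 => hy (by rw [mem_singleton_iff.1 h0]; exact mem_ball_self hr))
    (fun y hy => hM y (mem_sphere_zero_iff_norm.1 hy)) x
    (by rwa [mem_ball_zero_iff, not_lt])

theorem LamStarInside.add_log_le_of_norm_le (hstar : LamStarInside G δ) (hG : IsEllipticCone G)
    (hv : JetSubsol G {0}ᶜ v) (hcont : ContinuousOn v {0}ᶜ)
    (hM : ∀ y, ‖y‖ = r → v y + 2 * Real.log ‖y‖ ≤ M) (hx : x ≠ 0) (hxr : ‖x‖ ≤ r) :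
    v x + 2 * Real.log ‖x‖ ≤ M := by
  have hxpos : 0 < ‖x‖ := norm_pos_iff.2 hx
  rw [← kelvin_inversion_zero_one]
  refine hstar.le_of_le_norm hG (hv.kelvin_zero_one hG) (continuousOn_kelvin_zero_one hcont)
    (inv_pos.2 (hxpos.trans_le hxr)) (fun y hy => ?_)
    (by rw [norm_inversion_zero_one]; gcongr)
  rw [← inversion_inversion 0 one_ne_zero y, kelvin_inversion_zero_one]
  exact hM _ (by rw [norm_inversion_zero_one, hy, inv_inv])

lemma LamStarInside.harnack_sphere_of_inner_nonneg (hstar : LamStarInside G δ)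
    (hG : IsEllipticCone G) (hv : JetSubsol G {0}ᶜ v) (hcont : ContinuousOn v {0}ᶜ) (hr : 0 < r)
    {b : ℝ} (hb : ∀ y, r / 2 ≤ ‖y‖ → v y ≤ b) (hx : ‖x‖ = r) (hz : ‖z‖ = r)
    (hxz : 0 ≤ ⟪x, z⟫_ℝ) : (1 - (1 / 2) ^ δ) ^ 32 * (b - v x) ≤ b - v z := by
  have hfar : ∀ y ∈ segment ℝ x z, ∀ y' ∈ closedBall y (2 * (r / 16)), r / 2 ≤ ‖y'‖ := by
    intro y hy y' hy'
    have hdist := mem_closedBall_iff_norm'.1 hy'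
    linarith [le_norm_of_mem_segment hx hz hxz hy, norm_sub_norm_le y y']
  refine hstar.harnack_segment hG hv hcont (by positivity) 32 (fun y hy y' hy' h0 => ?_)
    (fun y hy y' hy' => hb y' (hfar y hy y' hy')) ?_
  · have := hfar y hy y' hy'
    rw [mem_singleton_iff.1 h0, norm_zero] at this
    linarith
  · push_cast
    linarith [dist_le_norm_add_norm x z]

-- A point orthogonal to `x` makes both segments of the path from `x` to `x'` stay away from `0`.
theorem LamStarInside.harnack_sphere (hstar : LamStarInside G δ) (hG : IsEllipticCone G)
    (hdim : 1 < Module.finrank ℝ E) (hv : JetSubsol G {0}ᶜ v) (hcont : ContinuousOn v {0}ᶜ)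
    (hr : 0 < r) {b : ℝ} (hb : ∀ y, ‖y‖ = r / 2 → v y ≤ b) {x x' : E} (hx : ‖x‖ = r)
    (hx' : ‖x'‖ = r) : (1 - (1 / 2) ^ δ) ^ 64 * (b - v x) ≤ b - v x' := by
  have hθ := hstar.one_sub_half_rpow_pos
  have hb' : ∀ y, r / 2 ≤ ‖y‖ → v y ≤ b := fun y hy =>
    hstar.le_of_le_norm hG hv hcont (by positivity) hb hy
  obtain ⟨z, hz, hxz, hzx'⟩ := exists_norm_eq_inner_eq_zero hdim x x' hr.le
  calc (1 - (1 / 2) ^ δ) ^ 64 * (b - v x)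
      = (1 - (1 / 2) ^ δ) ^ 32 * ((1 - (1 / 2) ^ δ) ^ 32 * (b - v x)) := by ring
    _ ≤ (1 - (1 / 2) ^ δ) ^ 32 * (b - v z) := by
      gcongr
      exact hstar.harnack_sphere_of_inner_nonneg hG hv hcont hr hb' hx hz hxz.ge
    _ ≤ b - v x' := hstar.harnack_sphere_of_inner_nonneg hG hv hcont hr hb' hz hx' hzx'

end Harnack

section Dichotomy

variable {E : Type*} [NormedAddCommGroup E] [InnerProductSpace ℝ E] {v : E → ℝ}

/-- The maximum of `v` over the sphere of radius `r` about the origin. -/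
def sphereMax (v : E → ℝ) (r : ℝ) : ℝ := sSup (v '' sphere 0 r)

/-- At the origin `w` tends to its supremum over the punctured space, finite or infinite. -/
def TendsToSupAtZero (w : E → ℝ) : Prop :=
  Tendsto w (𝓝[≠] 0) atTop ∨ ∃ M, Tendsto w (𝓝[≠] 0) (𝓝 M) ∧ ∀ x ≠ 0, w x ≤ M

lemma tendsto_atTop_or_tendsto_nhds_of_antitoneOn {f : ℝ → ℝ} {a : ℝ} (hf : AntitoneOn f (Ioi a)) :
    Tendsto f (𝓝[>] a) atTop ∨ ∃ M, Tendsto f (𝓝[>] a) (𝓝 M) ∧ ∀ t > a, f t ≤ M := by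
  by_cases hbdd : BddAbove (f '' Ioi a)
  · exact .inr ⟨_, hf.tendsto_nhdsGT hbdd, fun t ht => le_csSup hbdd (mem_image_of_mem f ht)⟩
  refine .inl (tendsto_atTop.2 fun B => ?_)
  obtain ⟨_, ⟨t, ht, rfl⟩, hB⟩ := not_bddAbove_iff.1 hbdd B
  filter_upwards [Ioo_mem_nhdsGT ht] with t' ht'
  exact hB.le.trans (hf ht'.1 ht ht'.2.le)

variable [FiniteDimensional ℝ E] {G : Set (E → ℝ)} {x : E} {δ r : ℝ}

lemma exists_norm_eq_apply_eq_sphereMax [Nontrivial E] (hv : ContinuousOn v {0}ᶜ) (hr : 0 < r) :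
    ∃ x, ‖x‖ = r ∧ v x = sphereMax v r := by
  obtain ⟨x, hx, h⟩ := (isCompact_sphere (0 : E) r).exists_sSup_image_eq
    (NormedSpace.sphere_nonempty.2 hr.le)
    (hv.mono fun _ hy => ne_of_mem_sphere hy hr.ne')
  exact ⟨x, mem_sphere_zero_iff_norm.1 hx, h.symm⟩

lemma le_sphereMax (hv : ContinuousOn v {0}ᶜ) (hx : x ≠ 0) : v x ≤ sphereMax v ‖x‖ :=
  le_csSup ((isCompact_sphere (0 : E) ‖x‖).image_of_continuousOn
    (hv.mono fun _ hy => ne_of_mem_sphere hy (norm_ne_zero_iff.2 hx))).bddAbove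
    (mem_image_of_mem v (mem_sphere_zero_iff_norm.2 rfl))

lemma le_sphereMax_of_norm_eq (hv : ContinuousOn v {0}ᶜ) (hr : 0 < r) (hx : ‖x‖ = r) :
    v x ≤ sphereMax v r :=
  hx ▸ le_sphereMax hv (norm_pos_iff.1 (hx ▸ hr))

variable [Nontrivial E]

lemma LamStarInside.antitoneOn_sphereMax (hstar : LamStarInside G δ) (hG : IsEllipticCone G)
    (hv : JetSubsol G {0}ᶜ v) (hcont : ContinuousOn v {0}ᶜ) :
    AntitoneOn (sphereMax v) (Ioi 0) := by
  intro r hr r' hr' hrr'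
  obtain ⟨x, hx, hmax⟩ := exists_norm_eq_apply_eq_sphereMax hcont hr'
  rw [← hmax]
  exact hstar.le_of_le_norm hG hv hcont hr (fun y hy => le_sphereMax_of_norm_eq hcont hr hy)
    (hrr'.trans_eq hx.symm)

lemma LamStarInside.sphereMax_half_le (hstar : LamStarInside G δ) (hG : IsEllipticCone G)
    (hv : JetSubsol G {0}ᶜ v) (hcont : ContinuousOn v {0}ᶜ) (hr : 0 < r) :
    sphereMax v (r / 2) ≤ sphereMax v r + 2 * Real.log 2 := by
  obtain ⟨x, hx, hmax⟩ := exists_norm_eq_apply_eq_sphereMax hcont (half_pos hr)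
  have hle := hstar.add_log_le_of_norm_le hG hv hcont (r := r)
    (M := sphereMax v r + 2 * Real.log r)
    (fun y hy => by rw [hy]; linarith [le_sphereMax_of_norm_eq hcont hr hy])
    (norm_pos_iff.1 (hx ▸ half_pos hr)) (by linarith)
  rw [hx, hmax, Real.log_div hr.ne' two_ne_zero] at hle
  linarith

lemma LamStarInside.sphereMax_half_sub_le (hstar : LamStarInside G δ) (hG : IsEllipticCone G)
    (hdim : 1 < Module.finrank ℝ E) (hv : JetSubsol G {0}ᶜ v) (hcont : ContinuousOn v {0}ᶜ)
    (hx : x ≠ 0) : sphereMax v (‖x‖ / 2) -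
      (sphereMax v (‖x‖ / 2) - sphereMax v ‖x‖) / (1 - (1 / 2) ^ δ) ^ 64 ≤ v x := by
  have hxpos : 0 < ‖x‖ := norm_pos_iff.2 hx
  obtain ⟨x', hx', hmax⟩ := exists_norm_eq_apply_eq_sphereMax hcont hxpos
  have hharnack := hstar.harnack_sphere hG hdim hv hcont hxpos
    (fun y hy => le_sphereMax_of_norm_eq hcont (half_pos hxpos) hy) rfl hx'
  rw [hmax, ← le_div_iff₀' (pow_pos hstar.one_sub_half_rpow_pos 64)] at hharnack
  linarith

theorem LamStarInside.tendsToSupAtZero (hstar : LamStarInside G δ) (hG : IsEllipticCone G)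
    (hdim : 1 < Module.finrank ℝ E) (hv : JetSubsol G {0}ᶜ v) (hcont : ContinuousOn v {0}ᶜ) :
    TendsToSupAtZero v := by
  have hnorm : Tendsto (fun x : E => ‖x‖) (𝓝[≠] 0) (𝓝[>] 0) := tendsto_norm_nhdsNE_zero
  have hhalf : Tendsto (fun x : E => ‖x‖ / 2) (𝓝[≠] 0) (𝓝[>] 0) := by
    refine tendsto_nhdsWithin_iff.2 ⟨?_, eventually_mem_nhdsWithin.mono
      fun x hx => mem_Ioi.2 (half_pos (norm_pos_iff.2 hx))⟩
    simpa using (hnorm.mono_right nhdsWithin_le_nhds).div_const 2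
  have hlow : ∀ᶠ x : E in 𝓝[≠] 0, sphereMax v (‖x‖ / 2) - (sphereMax v (‖x‖ / 2) -
      sphereMax v ‖x‖) / (1 - (1 / 2) ^ δ) ^ 64 ≤ v x :=
    eventually_mem_nhdsWithin.mono fun x hx => hstar.sphereMax_half_sub_le hG hdim hv hcont hx
  rcases tendsto_atTop_or_tendsto_nhds_of_antitoneOn (hstar.antitoneOn_sphereMax hG hv hcont)
    with hM | ⟨M, hM, hle⟩
  · refine .inl (tendsto_atTop_mono' _ ?_ (tendsto_atTop_add_const_right _
      (-(2 * Real.log 2 / (1 - (1 / 2) ^ δ) ^ 64)) (hM.comp hhalf)))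
    filter_upwards [hlow, self_mem_nhdsWithin] with x hx hx0
    refine le_trans ?_ hx
    rw [Function.comp_apply, ← sub_eq_add_neg]
    have := hstar.one_sub_half_rpow_pos
    gcongr
    linarith [hstar.sphereMax_half_le hG hv hcont (norm_pos_iff.2 hx0)]
  · have hvM : ∀ x ≠ 0, v x ≤ M := fun x hx =>
      (le_sphereMax hcont hx).trans (hle _ (norm_pos_iff.2 hx))
    have hlim := (hM.comp hhalf).sub (((hM.comp hhalf).sub (hM.comp hnorm)).div_const
      ((1 - (1 / 2) ^ δ) ^ 64))
    rw [sub_self, zero_div, sub_zero] at hlim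
    exact .inr ⟨M, tendsto_of_tendsto_of_tendsto_of_le_of_le' hlim tendsto_const_nhds hlow
      (eventually_mem_nhdsWithin.mono hvM), hvM⟩

end Dichotomy

section Singularities

open EuclideanGeometry

variable {E : Type*} [NormedAddCommGroup E] [InnerProductSpace ℝ E] {u h w v : E → ℝ} {τ : E → E}
  {c s y : E} {l : ℝ}

lemma differentiableAt_const_sub_log_norm_sub (hs : s ≠ c) (a : ℝ) :
    DifferentiableAt ℝ (fun y => a - 2 * Real.log ‖y - c‖) s := by
  have hne : s - c ≠ 0 := sub_ne_zero.2 hs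
  exact ((((differentiableAt_id.sub_const c).norm ℝ hne).log (norm_ne_zero_iff.2 hne)).const_mul
    2).const_sub a

lemma norm_inversion_mul_norm_sub (hc : c ≠ 0) (hl : l ≠ 0) (hy : y ≠ c) :
    ‖inversion c l y‖ * ‖y - c‖ = ‖c‖ * ‖y - inversion c l 0‖ := by
  have hdist := dist_inversion_inversion hy ((inversion_eq_center hl).not.2 hc.symm) l
  have hyc := dist_pos.2 hy
  rw [inversion_inversion c hl, dist_zero_right, dist_inversion_center, dist_zero_left] at hdist
  rw [hdist, ← dist_eq_norm, ← dist_eq_norm]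
  field_simp

lemma eventually_ne_and_inversion_ne_zero (hl : l ≠ 0) (c s : E) :
    {y | y ≠ c ∧ inversion c l y ∈ ({0}ᶜ : Set E)} ∈ 𝓝[≠] s := by
  have hne (a : E) : ∀ᶠ z in 𝓝[≠] s, z ≠ a := by
    obtain rfl | h := eq_or_ne s a
    exacts [eventually_mem_nhdsWithin, nhdsWithin_le_nhds (isOpen_ne.mem_nhds h)]
  filter_upwards [hne c, hne (inversion c l 0)] with z hzc hz0
  exact ne_and_inversion_ne_zero hl (by simp [hzc, hz0])

lemma kelvin_eq_kelvin_inversion_add (hc : c ≠ 0) (hl : 0 < l) (v : E → ℝ)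
    (hy : y ≠ c ∧ inversion c l y ∈ ({0}ᶜ : Set E)) :
    kelvin c l v y = kelvin 0 1 v (inversion 0 1 (inversion c l y)) +
      (2 * Real.log l - 2 * Real.log ‖c‖ - 2 * Real.log ‖y - inversion c l 0‖) := by
  have hyo : y ≠ inversion c l 0 := by
    rintro rfl
    exact hy.2 (inversion_inversion c hl.ne' 0)
  have hlog := congrArg Real.log (norm_inversion_mul_norm_sub hc hl.ne' hy.1)
  rw [Real.log_mul (norm_ne_zero_iff.2 hy.2) (norm_ne_zero_iff.2 (sub_ne_zero.2 hy.1)),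
    Real.log_mul (norm_ne_zero_iff.2 hc) (norm_ne_zero_iff.2 (sub_ne_zero.2 hyo))] at hlog
  rw [kelvin_inversion_zero_one, kelvin]
  linarith

lemma tendsto_inversion_inversion_center (hc : c ≠ 0) (hl : l ≠ 0) :
    Tendsto (fun y => inversion (0 : E) 1 (inversion c l y)) (𝓝[≠] c) (𝓝[≠] 0) := by
  refine tendsto_nhdsWithin_iff.2 ⟨tendsto_zero_iff_norm_tendsto_zero.2 ?_, ?_⟩
  · have hco : c - inversion c l 0 ≠ 0 :=
      sub_ne_zero.2 (Ne.symm ((inversion_eq_center hl).not.2 hc.symm))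
    have hlim : Tendsto (fun y => ‖y - c‖ / (‖c‖ * ‖y - inversion c l 0‖)) (𝓝[≠] c) (𝓝 0) := by
      refine Tendsto.mono_left ?_ nhdsWithin_le_nhds
      have hcont : ContinuousAt (fun y => ‖y - c‖ / (‖c‖ * ‖y - inversion c l 0‖)) c :=
        ContinuousAt.div₀ (by fun_prop) (by fun_prop) (by simp [hc, hco])
      simpa using hcont.tendsto
    refine hlim.congr' ?_
    filter_upwards [eventually_ne_and_inversion_ne_zero hl c c] with y ⟨hyc, _⟩
    have hyc' := norm_ne_zero_iff.2 (sub_ne_zero.2 hyc)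
    rw [norm_inversion_zero_one, ← norm_inversion_mul_norm_sub hc hl hyc]
    field_simp
  · filter_upwards [eventually_ne_and_inversion_ne_zero hl c c] with y hy
    exact (inversion_eq_center one_ne_zero).not.2 hy.2

lemma noConeAtSingularity_of_tendsto_atTop (hu : Tendsto u (𝓝[≠] s) atTop) :
    NoConeAtSingularity u s := fun m _ _ _ _ =>
  ⟨m + 1, lt_add_one m, hu.eventually_ge_atTop (m + 1)⟩

variable {G : Set (E → ℝ)} {δ : ℝ}

theorem LamStarOutside.eventually_ge_and_noConeAtSingularity_kelvin
    [FiniteDimensional ℝ E] (hstar : LamStarOutside G δ) (hG : IsEllipticCone G)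
    (hv : JetSupersol G {0}ᶜ v) (hcont : ContinuousOn v {0}ᶜ) (hl : 0 < l) (c s : E) :
    (∃ m, ∀ᶠ z in 𝓝[≠] s, m ≤ kelvin c l v z) ∧ NoConeAtSingularity (kelvin c l v) s := by
  have hsup := jetSupersol_kelvin hv hG c hl
  have hdom := eventually_ne_and_inversion_ne_zero hl.ne' c s
  exact ⟨hstar.exists_eventually_le hG hsup (continuousOn_kelvin hcont c l) hdom,
    hstar.noConeAtSingularity hG hsup (continuousOn_kelvin hcont c l) hdom⟩

variable [Nontrivial E]

-- A cone with vertex value `a` would touch the function `a - h s + h` at its smooth point `s`.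
lemma noConeAtSingularity_of_tendsto_nhds [CompleteSpace E] {a : ℝ} (hu : Tendsto u (𝓝[≠] s) (𝓝 a))
    (hh : DifferentiableAt ℝ h s) (hle : ∀ᶠ z in 𝓝[≠] s, u z ≤ a - h s + h z) :
    NoConeAtSingularity u s := by
  intro m p e he hcone
  have : NeBot (𝓝[≠] s) := Module.punctured_nhds_neBot ℝ E s
  have hvertex : Tendsto (fun z => m + ⟪p, z - s⟫_ℝ + e * ‖z - s‖) (𝓝[≠] s) (𝓝 m) :=
    (Continuous.tendsto' (by fun_prop) _ _ (by simp)).mono_left nhdsWithin_le_nhds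
  have hlt : m < a := by
    refine (le_of_tendsto_of_tendsto hvertex hu hcone).lt_of_ne fun hma => ?_
    have hjet := (hasGradientAt_iff_isLittleO.1 hh.hasGradientAt).bound (half_pos he)
    refine not_eventually_inner_add_mul_norm_nonpos (s := s) (p - gradient h s) (half_pos he) ?_
    filter_upwards [hcone, hle, nhdsWithin_le_nhds hjet] with z hz hz' hz''
    rw [inner_sub_left]
    linarith [(le_abs_self _).trans hz'']
  obtain ⟨m', hmm', hm'a⟩ := exists_between hlt
  exact ⟨m', hmm', hu.eventually_const_le hm'a⟩

theorem TendsToSupAtZero.eventually_ge_and_noConeAtSingularity [CompleteSpace E]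
    (hw : TendsToSupAtZero w) (hτ : Tendsto τ (𝓝[≠] s) (𝓝[≠] 0)) (hh : DifferentiableAt ℝ h s)
    (hu : ∀ᶠ z in 𝓝[≠] s, u z = w (τ z) + h z) :
    (∃ m, ∀ᶠ z in 𝓝[≠] s, m ≤ u z) ∧ NoConeAtSingularity u s := by
  have hh' : Tendsto h (𝓝[≠] s) (𝓝 (h s)) := hh.continuousAt.mono_left nhdsWithin_le_nhds
  have heq : (fun z => w (τ z) + h z) =ᶠ[𝓝[≠] s] u := hu.mono fun _ hz => hz.symm
  rcases hw with hw | ⟨M, hw, hle⟩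
  · have hlim : Tendsto u (𝓝[≠] s) atTop := ((hw.comp hτ).atTop_add hh').congr' heq
    exact ⟨⟨0, hlim.eventually_ge_atTop 0⟩, noConeAtSingularity_of_tendsto_atTop hlim⟩
  · have hlim : Tendsto u (𝓝[≠] s) (𝓝 (M + h s)) := ((hw.comp hτ).add hh').congr' heq
    refine ⟨⟨M + h s - 1, hlim.eventually_const_le (by linarith)⟩,
      noConeAtSingularity_of_tendsto_nhds hlim hh ?_⟩
    filter_upwards [hu, hτ.eventually eventually_mem_nhdsWithin] with z hz hτz
    linarith [hle _ hτz]

variable [FiniteDimensional ℝ E]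

theorem LamStarInside.eventually_ge_and_noConeAtSingularity_kelvin (hstar : LamStarInside G δ)
    (hG : IsEllipticCone G) (hdim : 1 < Module.finrank ℝ E) (hv : JetSubsol G {0}ᶜ v)
    (hcont : ContinuousOn v {0}ᶜ) (hl : 0 < l) (hc : c ≠ 0)
    (hs : s ∈ ({c, inversion c l 0} : Set E)) :
    (∃ m, ∀ᶠ z in 𝓝[≠] s, m ≤ kelvin c l v z) ∧ NoConeAtSingularity (kelvin c l v) s := by
  have hoc : inversion c l 0 ≠ c := (inversion_eq_center hl.ne').not.2 hc.symm
  have : CompleteSpace E := FiniteDimensional.complete ℝ E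
  obtain rfl | rfl := hs
  · refine (hstar.tendsToSupAtZero hG hdim (hv.kelvin_zero_one hG)
      (continuousOn_kelvin_zero_one hcont)).eventually_ge_and_noConeAtSingularity
      (tendsto_inversion_inversion_center hc hl.ne')
      (differentiableAt_const_sub_log_norm_sub hoc.symm (2 * Real.log l - 2 * Real.log ‖s‖)) ?_
    filter_upwards [eventually_ne_and_inversion_ne_zero hl.ne' s s] with z hz
    exact kelvin_eq_kelvin_inversion_add hc hl v hz
  · have hinv := tendsto_inversion_nhdsNE hl.ne' hoc
    rw [inversion_inversion c hl.ne'] at hinv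
    refine (hstar.tendsToSupAtZero hG hdim hv hcont).eventually_ge_and_noConeAtSingularity
      hinv (differentiableAt_const_sub_log_norm_sub hoc (2 * Real.log l)) (.of_forall fun z => ?_)
    rw [kelvin]
    ring

end Singularities

/-- **Radial symmetry of entire solutions away from a point** (Theorem 1.4):
if `Γ` satisfies condition (C) and `λ* ∉ ∂Γ`, then every continuous viscosity solution
of `λ(A[v]) ∈ ∂Γ` in `ℝⁿ ∖ {0}` is radially symmetric and non-increasing in the radial
direction: `v x ≥ v y` whenever `0 < |x| ≤ |y|`. -/
theorem radial_symmetry_punctured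
    {n : ℕ} (hn : 2 ≤ n) (Γ : Set (Fin n → ℝ)) (hΓ : CondC Γ)
    (hstar : lamStar n ∉ frontier Γ)
    (v : Euc n → ℝ) (hv : ContinuousOn v {(0 : Euc n)}ᶜ)
    (hsup : Supersol Γ {(0 : Euc n)}ᶜ v) (hsub : Subsol Γ {(0 : Euc n)}ᶜ v) :
    ∀ x y : Euc n, x ≠ 0 → y ≠ 0 → ‖x‖ ≤ ‖y‖ → v y ≤ v x := by
  have hdim : 1 < Module.finrank ℝ (Euc n) := by rwa [finrank_euclideanSpace_fin]
  have : Nontrivial (Euc n) := Module.nontrivial_of_finrank_pos (one_pos.trans hdim)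
  have hG := hΓ.isEllipticCone_formCone (EuclideanSpace.basisFun (Fin n) ℝ)
  have hsup' := hsup.jetSupersol hΓ
  have hsub' := hsub.jetSubsol hΓ
  refine fun x y => hsub'.le_of_norm_le hsup' hG hv fun c l hl hlc s hs => ?_
  rcases hΓ.lamStar_cases (by omega) hstar with ⟨δ, hδ⟩ | ⟨δ, hδ⟩
  · have hc : c ≠ 0 := norm_pos_iff.1 (hl.trans hlc)
    exact hδ.eventually_ge_and_noConeAtSingularity_kelvin hG hdim hsub' hv hl hc hs
  · exact hδ.eventually_ge_and_noConeAtSingularity_kelvin hG hsup' hv hl c s
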